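/- arXiv:2210.02066 — 4 statements merged into one kernel-verified Lean document; each statement's English description precedes it below -/
import Mathlib

section
/- Define functions f_{j,k} on (0,∞) for integers 1 ≤ j ≤ k by the recursion f_{1,1}(r) = sinh r and f_{j,k+1}(r) = f_{j,k}'(r) + sinh r · f_{j-1,k}(r), with the conventions f_{0,k} ≡ 0 and f_{j,k} ≡ 0 for j > k (so that g^{(k)} = Σ_{j=1}^k f_{j,k} 𝓡^j g for every smooth g on (0,∞)). Then for every k ≥ 1 there exist a constant c_k > 0 and non-negative constants d_ℓ ≥ 0 such that: (i) if k is odd, f_{(k+1)/2,k}(r) = c_k sinh r · cosh^{(k-1)/2} r + Σ_{1 ≤ 2ℓ+1 ≤ (k+1)/2} d_ℓ · sinh^{2ℓ+1} r · cosh^{(k+1)/2 - 2ℓ - 1} r; (ii) if k is even, f_{k/2,k}(r) = c_k cosh^{k/2} r + Σ_{0 ≤ 2ℓ ≤ k/2} d_ℓ · sinh^{2ℓ} r · cosh^{k/2 - 2ℓ} r. -/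
open Real MeasureTheory Filter Topology

noncomputable section

namespace DR

/-- The operator `𝓡 g (r) = (1 / sinh r) g'(r)`. -/
def Rop (g : ℝ → ℝ) : ℝ → ℝ := fun r => (1 / Real.sinh r) * deriv g r

/-- The operator `-(1 / sinh r) d/dr`. -/
def D1 (g : ℝ → ℝ) : ℝ → ℝ := fun r => -(1 / Real.sinh r) * deriv g r

/-- The operator `-(1 / sinh (r/2)) d/dr`. -/
def D2 (g : ℝ → ℝ) : ℝ → ℝ := fun r => -(1 / Real.sinh (r / 2)) * deriv g r

/-- The Gaussian `e^{-r²/(4t)}`. -/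
def gauss (t : ℝ) : ℝ → ℝ := fun r => Real.exp (-r ^ 2 / (4 * t))

/-- `Q = (μ + 2ν)/2`. -/
def Qc (μ ν : ℕ) : ℝ := ((μ : ℝ) + 2 * ν) / 2

/-- `c_k = 2^{-μ-ν/2-1-k} π^{-n/2}` with `n = μ+ν+1`. -/
def cc (μ ν k : ℕ) : ℝ :=
  (2 : ℝ) ^ (-(μ : ℝ) - (ν : ℝ) / 2 - 1 - (k : ℝ)) *
    Real.pi ^ (-(((μ : ℝ) + ν + 1)) / 2)

/-- The Damek–Ricci heat kernel `h_t`. -/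
def heat (μ ν : ℕ) (t : ℝ) : ℝ → ℝ := fun r =>
  if Even ν then
    cc μ ν 0 * t ^ (-(1 : ℝ) / 2) * Real.exp (-(Qc μ ν) ^ 2 * t / 4) *
      (D1^[ν / 2] (D2^[μ / 2] (gauss t))) r
  else
    cc μ ν 0 * Real.pi ^ (-(1 : ℝ) / 2) * t ^ (-(1 : ℝ) / 2) *
      Real.exp (-(Qc μ ν) ^ 2 * t / 4) *
      ∫ s in Set.Ioi r, (Real.sinh s / Real.sqrt (Real.cosh s - Real.cosh r)) *
        (D1^[(ν + 1) / 2] (D2^[μ / 2] (gauss t))) s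

/-- `Ψ_k(r,t)`. -/
def Psi (k : ℕ) (r t : ℝ) : ℝ :=
  if 1 < r ∨ Even k then (1 + 1 / Real.sqrt t + r / t) ^ k
  else r * (1 + 1 / Real.sqrt t + r / t) ^ (k - 1) * (1 + 1 / t)

/-- `Ψ̃_k(r,t)`. -/
def PsiT (k : ℕ) (r t : ℝ) : ℝ :=
  if 1 < r ∨ Even k then (1 + 1 / Real.sqrt t + r / t) ^ k
  else (1 + 1 / Real.sqrt t + r / t) ^ (k - 1) * (1 + r / t)

/-- `p_{a,b}(r) = sinh^a r cosh^b r`. -/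
def pab (a b : ℕ) (r : ℝ) : ℝ := Real.sinh r ^ a * Real.cosh r ^ b

/-- `Θ_{p,q}(r)` (with real exponents, via `rpow`). -/
def Theta (p q : ℝ) (r : ℝ) : ℝ :=
  ((r / (1 + r)) * (Real.exp (r / 2) / (2 * Real.sinh (r / 2)))) ^ p *
    ((r / (1 + 2 * r)) * (Real.exp r / Real.sinh r)) ^ q

/-- Points of `S = ℝ^μ × ℝ^ν × (0,∞)` (the last coordinate ranges over `ℝ`;
statements are always restricted to `0 < a`). -/
abbrev Pt (μ ν : ℕ) := (Fin μ → ℝ) × (Fin ν → ℝ) × ℝ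

/-- The quantity `((√a + 1/√a)/2 + |x|²/(8√a))² + |z|²/(4a)`, equal to `cosh²(r/2)`. -/
def coshExpr (μ ν : ℕ) (p : Pt μ ν) : ℝ :=
  ((Real.sqrt p.2.2 + (Real.sqrt p.2.2)⁻¹) / 2 +
      (Real.sqrt p.2.2)⁻¹ * (∑ i, p.1 i ^ 2) / 8) ^ 2 +
    (p.2.2)⁻¹ * (∑ i, p.2.1 i ^ 2) / 4

/-- The vector field `X_0 = a ∂_a`. -/
def X0op (μ ν : ℕ) (f : Pt μ ν → ℝ) : Pt μ ν → ℝ :=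
  fun p => p.2.2 * deriv (fun s => f (p.1, p.2.1, s)) p.2.2

/-- The vector fields `X_j`, `j ∈ {0, …, n-1}`, `n = μ+ν+1`:
`X_0 = a ∂_a`, `X_ℓ = √a (∂_{x_ℓ} + (1/2) Σ_k (J_k x, e_ℓ) ∂_{z_k})` for `ℓ = 1,…,μ`,
and `X_{μ+k} = a ∂_{z_k}` for `k = 1,…,ν`. -/
def Xf (μ ν : ℕ) (Jm : Fin ν → Matrix (Fin μ) (Fin μ) ℝ) (j : Fin (μ + ν + 1))
    (f : Pt μ ν → ℝ) : Pt μ ν → ℝ := fun p =>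
  if h0 : (j : ℕ) = 0 then p.2.2 * deriv (fun s => f (p.1, p.2.1, s)) p.2.2
  else if hm : (j : ℕ) ≤ μ then
    Real.sqrt p.2.2 *
      (deriv (fun s => f (Function.update p.1 ⟨(j : ℕ) - 1, by omega⟩ s, p.2.1, p.2.2))
          (p.1 ⟨(j : ℕ) - 1, by omega⟩) +
        (1 / 2) * ∑ k : Fin ν, (Jm k).mulVec p.1 ⟨(j : ℕ) - 1, by omega⟩ *
          deriv (fun s => f (p.1, Function.update p.2.1 k s, p.2.2)) (p.2.1 k))
  else
    p.2.2 *
      deriv (fun s =>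
          f (p.1, Function.update p.2.1 ⟨(j : ℕ) - μ - 1, by have := j.isLt; omega⟩ s, p.2.2))
        (p.2.1 ⟨(j : ℕ) - μ - 1, by have := j.isLt; omega⟩)

/-- `X_J = X_{J_1} X_{J_2} ⋯ X_{J_k}` for a multi-index `J`. -/
def XL (μ ν : ℕ) (Jm : Fin ν → Matrix (Fin μ) (Fin μ) ℝ) :
    List (Fin (μ + ν + 1)) → (Pt μ ν → ℝ) → Pt μ ν → ℝ
  | [], f => f
  | j :: L, f => Xf μ ν Jm j (XL μ ν Jm L f)

/-- The functions `f_{j,k}` defined by the recursion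
`f_{1,1} = sinh`, `f_{j,k+1} = f_{j,k}' + sinh · f_{j-1,k}`,
with `f_{0,k} = 0` and `f_{j,k} = 0` for `j > k`. -/
def fjk : ℕ → ℕ → ℝ → ℝ
  | _, 0 => fun _ => 0
  | j, 1 => if j = 1 then Real.sinh else fun _ => 0
  | j, k + 2 => fun r => deriv (fjk j (k + 1)) r + Real.sinh r * fjk (j - 1) (k + 1) r

/-!
Differentiation sends `sinh ^ a * cosh ^ b` to
`a * sinh ^ (a - 1) * cosh ^ (b + 1) + b * sinh ^ (a + 1) * cosh ^ (b - 1)`, so it preserves the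
total degree `a + b` and flips the parity of `a`; multiplication by `sinh` raises the degree by one
and also flips the parity of `a`. Hence `f_{j,k}` is a combination, with natural number
coefficients, of the monomials `sinh ^ a * cosh ^ (j - a)` with `a ≤ j` and `a ≡ k` mod `2`
(`fjk_eq_sum`, `coef_parity`). The coefficients `coef j k a` obey an explicit recursion.

It remains to see that in the middle position the monomial with the smallest admissible exponent
(`a = 1` for odd `k`, `a = 0` for even `k`) occurs with a positive coefficient. This propagates
along `f_{1,1}, f_{1,2}, f_{2,3}, f_{2,4}, …`: the derivative of `sinh * cosh ^ m` contains
`cosh ^ (m + 1)`, and `sinh * cosh ^ m` reappears on multiplying `cosh ^ m` by `sinh`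
(`coef_middle_pos`). This coefficient is the constant `c`, and the others are the `d ℓ`.
-/

/-- `coef j k a` is the coefficient of `sinh ^ a * cosh ^ (j - a)` in `f_{j,k+1}`; note the shift
in `k`. The truncated subtraction `j - a` only acts where the coefficient vanishes anyway. -/
def coef : ℕ → ℕ → ℕ → ℕ
  | j, 0, a => if j = 1 ∧ a = 1 then 1 else 0
  | j, k + 1, 0 => coef j k 1
  | j, k + 1, a + 1 => (a + 2) * coef j k (a + 2) + (j - a) * coef j k a + coef (j - 1) k a

lemma coef_zero_left (k a : ℕ) : coef 0 k a = 0 := by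
  induction k generalizing a with
  | zero => simp [coef]
  | succ k ih => cases a <;> simp [coef, ih]

lemma coef_eq_zero_of_lt (j k a : ℕ) (h : j < a) : coef j k a = 0 := by
  induction k generalizing j a with
  | zero => simp only [coef]; rw [if_neg]; omega
  | succ k ih =>
    obtain ⟨a, rfl⟩ : ∃ b, a = b + 1 := ⟨a - 1, by omega⟩
    rcases Nat.eq_zero_or_pos j with rfl | hj
    · exact coef_zero_left _ _
    · simp only [coef]
      rw [ih j (a + 2) (by omega), ih (j - 1) a (by omega), show j - a = 0 by omega]
      simp

lemma coef_parity (j k a : ℕ) (h : Even (k + a)) : coef j k a = 0 := by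
  induction k generalizing j a with
  | zero =>
    simp only [coef]; rw [if_neg]
    rintro ⟨-, rfl⟩
    exact absurd h (by decide)
  | succ k ih =>
    rw [Nat.even_iff] at h
    cases a with
    | zero => exact ih j 1 (by rw [Nat.even_iff]; omega)
    | succ a =>
      simp only [coef]
      rw [ih j (a + 2) (by rw [Nat.even_iff]; omega), ih j a (by rw [Nat.even_iff]; omega),
        ih (j - 1) a (by rw [Nat.even_iff]; omega)]
      simp

lemma coef_middle_pos (m : ℕ) :
    0 < coef (m + 1) (2 * m) 1 ∧ 0 < coef (m + 1) (2 * m + 1) 0 := by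
  induction m with
  | zero => simp [coef]
  | succ m ih =>
    have h : 0 < coef (m + 1 + 1) (2 * (m + 1)) 1 := by
      rw [show 2 * (m + 1) = (2 * m + 1) + 1 by ring]
      have := ih.2
      simp only [coef, Nat.add_sub_cancel] at this ⊢
      omega
    exact ⟨h, h⟩

lemma fjk_zero_left (k : ℕ) : fjk 0 (k + 1) = fun _ => 0 := by
  induction k with
  | zero => simp [fjk]
  | succ k ih => funext r; simp [fjk, ih]

/-- Differentiating a sum of monomials of degree `j`, already written in terms of monomials of the
same degree, with the lowest one split off. -/
lemma hasDerivAt_sum (j : ℕ) (e : ℕ → ℕ) (he : e (j + 1) = 0) (r : ℝ) :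
    HasDerivAt (fun r => ∑ a ∈ Finset.range (j + 1), (e a : ℝ) * (sinh r ^ a * cosh r ^ (j - a)))
      (∑ a ∈ Finset.range j, (((a + 2) * e (a + 2) + (j - a) * e a : ℕ) : ℝ) *
          (sinh r ^ (a + 1) * cosh r ^ (j - (a + 1))) + (e 1 : ℝ) * cosh r ^ j) r := by
  have h : HasDerivAt
      (fun r => ∑ a ∈ Finset.range (j + 1), (e a : ℝ) * (sinh r ^ a * cosh r ^ (j - a)))
      (∑ a ∈ Finset.range (j + 1), (e a : ℝ) *
        (((a : ℕ) * sinh r ^ (a - 1) * cosh r) * cosh r ^ (j - a) +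
          sinh r ^ a * (((j - a : ℕ) : ℝ) * cosh r ^ (j - a - 1) * sinh r))) r := by
    apply HasDerivAt.fun_sum
    intro a _
    exact (((hasDerivAt_sinh r).pow a).mul ((hasDerivAt_cosh r).pow (j - a))).const_mul _
  convert h using 1
  simp only [mul_add, Finset.sum_add_distrib]
  -- terms lowering the exponent of `sinh`
  have h1 : ∑ a ∈ Finset.range (j + 1), (e a : ℝ) *
        (((a : ℕ) * sinh r ^ (a - 1) * cosh r) * cosh r ^ (j - a)) =
      ∑ a ∈ Finset.range j, (((a + 2) * e (a + 2) : ℕ) : ℝ) *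
          (sinh r ^ (a + 1) * cosh r ^ (j - (a + 1))) + (e 1 : ℝ) * cosh r ^ j := by
    rw [Finset.sum_range_succ']
    have h2 : ∑ a ∈ Finset.range (j + 1), (((a + 1) * e (a + 1) : ℕ) : ℝ) *
          (sinh r ^ a * cosh r ^ (j - a)) =
        ∑ a ∈ Finset.range j, (((a + 2) * e (a + 2) : ℕ) : ℝ) *
          (sinh r ^ (a + 1) * cosh r ^ (j - (a + 1))) + (e 1 : ℝ) * cosh r ^ j := by
      rw [Finset.sum_range_succ']
      simp [add_assoc, one_add_one_eq_two]
    rw [← h2, Finset.sum_range_succ, he]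
    simp only [Nat.cast_zero, zero_mul, mul_zero, add_zero]
    refine Finset.sum_congr rfl fun a ha => ?_
    have ha' := Finset.mem_range.1 ha
    rw [show j - a = j - (a + 1) + 1 by omega]
    push_cast
    ring
  -- terms raising the exponent of `sinh`
  have h3 : ∑ a ∈ Finset.range (j + 1), (e a : ℝ) *
        (sinh r ^ a * (((j - a : ℕ) : ℝ) * cosh r ^ (j - a - 1) * sinh r)) =
      ∑ a ∈ Finset.range j, (((j - a) * e a : ℕ) : ℝ) *
          (sinh r ^ (a + 1) * cosh r ^ (j - (a + 1))) := by
    rw [Finset.sum_range_succ]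
    simp only [Nat.sub_self, Nat.cast_zero, zero_mul, mul_zero, add_zero]
    refine Finset.sum_congr rfl fun a _ => ?_
    rw [Nat.sub_sub]
    push_cast
    ring
  rw [h1, h3]
  simp only [Nat.cast_add, add_mul, Finset.sum_add_distrib]
  ring

lemma fjk_eq_sum (j k : ℕ) : fjk j (k + 1) = fun r =>
    ∑ a ∈ Finset.range (j + 1), (coef j k a : ℝ) * (sinh r ^ a * cosh r ^ (j - a)) := by
  induction k generalizing j with
  | zero =>
    funext r
    by_cases hj : j = 1
    · subst hj; simp [fjk, coef]
    · simp [fjk, coef, hj]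
  | succ k ih =>
    cases j with
    | zero => rw [fjk_zero_left]; simp [coef_zero_left]
    | succ j =>
      funext r
      have hd := hasDerivAt_sum (j + 1) (coef (j + 1) k)
        (coef_eq_zero_of_lt _ _ _ (by omega)) r
      change deriv (fjk (j + 1) (k + 1)) r + sinh r * fjk j (k + 1) r = _
      rw [ih (j + 1), ih j, hd.deriv, Finset.sum_range_succ' _ (j + 1), Finset.mul_sum]
      have h : ∑ a ∈ Finset.range (j + 1), (coef (j + 1) (k + 1) (a + 1) : ℝ) *
            (sinh r ^ (a + 1) * cosh r ^ (j + 1 - (a + 1))) =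
          ∑ a ∈ Finset.range (j + 1),
            (((a + 2) * coef (j + 1) k (a + 2) + (j + 1 - a) * coef (j + 1) k a : ℕ) : ℝ) *
              (sinh r ^ (a + 1) * cosh r ^ (j + 1 - (a + 1))) +
          ∑ a ∈ Finset.range (j + 1), sinh r * ((coef j k a : ℝ) *
            (sinh r ^ a * cosh r ^ (j - a))) := by
        rw [← Finset.sum_add_distrib]
        refine Finset.sum_congr rfl fun a _ => ?_
        simp only [coef, Nat.add_sub_cancel, Nat.add_sub_add_right, Nat.cast_add]
        ring
      rw [h]
      simp only [coef, pow_zero, one_mul, Nat.sub_zero]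
      ring

/-- Reindexing a sum over exponents congruent to `p` by `a = 2 * ℓ + p`, and isolating the term
`ℓ = 0`; the range bound `n` only has to be large enough. -/
lemma sum_split (j n p : ℕ) (hj : j < n) (hp : p ≤ j) (g : ℕ → ℝ)
    (hg : ∀ a, (∀ ℓ, a ≠ 2 * ℓ + p) → g a = 0) :
    ∑ a ∈ Finset.range (j + 1), g a = g p +
      ∑ ℓ ∈ (Finset.range n).filter (fun ℓ => 2 * ℓ + p ≤ j),
        if ℓ = 0 then 0 else g (2 * ℓ + p) := by
  have h : ∑ ℓ ∈ (Finset.range n).filter (fun ℓ => 2 * ℓ + p ≤ j), g (2 * ℓ + p) =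
      ∑ a ∈ Finset.range (j + 1), g a := by
    refine Finset.sum_of_injOn (fun ℓ => 2 * ℓ + p) ?_ ?_ ?_ fun _ _ => rfl
    · intro a _ b _ hab
      simp only at hab
      omega
    · intro a ha
      simp only [Finset.coe_filter, Finset.mem_range, Set.mem_ofPred_eq] at ha
      simp only [Finset.coe_range, Set.mem_Iio]
      omega
    · intro a ha hna
      refine hg a fun ℓ hℓ => hna ⟨ℓ, ?_, hℓ.symm⟩
      have := Finset.mem_range.1 ha
      simp only [Finset.coe_filter, Finset.mem_range, Set.mem_ofPred_eq]
      omega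
  have h0 : 0 ∈ (Finset.range n).filter (fun ℓ => 2 * ℓ + p ≤ j) := by
    simp only [Finset.mem_filter, Finset.mem_range]
    omega
  rw [← h, ← Finset.add_sum_erase _ _ h0, ← Finset.add_sum_erase _ (fun ℓ => ite _ _ _) h0]
  simp only [mul_zero, zero_add, if_true]
  congr 1
  refine Finset.sum_congr rfl fun ℓ hℓ => ?_
  rw [if_neg (Finset.ne_of_mem_erase hℓ)]

theorem middle_coefficient_structure (k : ℕ) (hk : 1 ≤ k) :
    ∃ c : ℝ, 0 < c ∧ ∃ d : ℕ → ℝ, (∀ ℓ, 0 ≤ d ℓ) ∧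
      (Odd k → ∀ r : ℝ, 0 < r →
        fjk ((k + 1) / 2) k r =
          c * Real.sinh r * Real.cosh r ^ ((k - 1) / 2) +
            ∑ ℓ ∈ (Finset.range (k + 2)).filter (fun ℓ => 2 * ℓ + 1 ≤ (k + 1) / 2),
              d ℓ * Real.sinh r ^ (2 * ℓ + 1) * Real.cosh r ^ ((k + 1) / 2 - 2 * ℓ - 1)) ∧
      (Even k → ∀ r : ℝ, 0 < r →
        fjk (k / 2) k r =
          c * Real.cosh r ^ (k / 2) +
            ∑ ℓ ∈ (Finset.range (k + 2)).filter (fun ℓ => 2 * ℓ ≤ k / 2),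
              d ℓ * Real.sinh r ^ (2 * ℓ) * Real.cosh r ^ (k / 2 - 2 * ℓ)) := by
  rcases Nat.even_or_odd k with hE | hO
  · obtain ⟨m, rfl⟩ : ∃ m, k = 2 * m + 1 + 1 := by
      obtain ⟨i, hi⟩ := hE
      exact ⟨i - 1, by omega⟩
    refine ⟨coef (m + 1) (2 * m + 1) 0, by exact_mod_cast (coef_middle_pos m).2,
      fun ℓ => if ℓ = 0 then 0 else coef (m + 1) (2 * m + 1) (2 * ℓ), ?_, ?_, ?_⟩
    · intro ℓ
      dsimp only
      split_ifs <;> positivity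
    · intro h
      exact absurd hE (Nat.not_even_iff_odd.2 h)
    · intro _ r _
      rw [show (2 * m + 1 + 1) / 2 = m + 1 by omega, fjk_eq_sum]
      dsimp only
      rw [sum_split (m + 1) (2 * m + 1 + 1 + 2) 0 (by omega) (by omega)]
      · congr 1
        · simp
        · refine Finset.sum_congr rfl fun ℓ _ => ?_
          split_ifs <;> simp [mul_assoc]
      · intro a ha
        rw [coef_parity, Nat.cast_zero, zero_mul]
        rw [Nat.even_iff]
        have := ha (a / 2)
        omega
  · obtain ⟨m, rfl⟩ := hO
    refine ⟨coef (m + 1) (2 * m) 1, by exact_mod_cast (coef_middle_pos m).1,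
      fun ℓ => if ℓ = 0 then 0 else coef (m + 1) (2 * m) (2 * ℓ + 1), ?_, ?_, ?_⟩
    · intro ℓ
      dsimp only
      split_ifs <;> positivity
    · intro _ r _
      rw [show (2 * m + 1 + 1) / 2 = m + 1 by omega, show (2 * m + 1 - 1) / 2 = m by omega,
        fjk_eq_sum]
      dsimp only
      rw [sum_split (m + 1) (2 * m + 1 + 2) 1 (by omega) (by omega)]
      · congr 1
        · simp [mul_assoc]
        · refine Finset.sum_congr rfl fun ℓ _ => ?_
          split_ifs
          · simp
          · rw [Nat.sub_sub, mul_assoc]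
      · intro a ha
        rw [coef_parity, Nat.cast_zero, zero_mul]
        rw [Nat.even_iff]
        have := ha (a / 2)
        omega
    · intro h
      exact absurd h (Nat.not_even_iff_odd.2 ⟨m, rfl⟩)
end DR
end
end

section
/- For every k ∈ ℕ and every α ∈ [1,2) there exist constants γ > 0 and c > 0 such that, whenever r, t > 0 satisfy (1+r)/t ≥ γ and either r > 1 or r^α (1 + (1+r)/t) < 1, one has |d^k/dr^k h_t(r)| ≥ c · Ψ_k(r,t) · h_t(r). -/
/-!
Write `D1 = -(1/sinh r) d/dr = -d/d(cosh r)` and `D2 = -(1/sinh (r/2)) d/dr = -½ d/dv` with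
`v = cosh (r/2)`. The heart of the matter is the comparison

  `D1^{j+1} h_t ≍ (r / (2t sinh r)) D1^j h_t`   when `(1+r)/t ≥ 64`,

with constants depending only on `μ`, `ν`, `j`; `exists_ladder` is this statement.

The Gaussian satisfies `-∂_v gauss = λ gauss` with `λ = r / (t sinh (r/2))`. By the identity
`ρ / sinh ρ = ∫₀^∞ dy / (y² + 2y cosh ρ + 1)`, the function `λ` is completely monotone in `v`, and
each `-∂_v` costs at most a factor `C/v` (`sym_lam`). Hence `D1^a D2^b gauss` is the Gaussian times
an amplitude `P`, a sum of nonnegative terms lying between `c λ^{a+b} v^{-a}` and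
`C (λ + 1/v)^{a+b} v^{-a}`. No cancellation occurs anywhere, and when `(1+r)/t ≥ 2` one has
`1/v ≤ λ`, so the two bounds have the same size; this settles even `ν` (`GG_facts`, `ladder_GG`).

For odd `ν` the kernel is a half-order Weyl integral of such functions. In the variable
`u = √(cosh s - cosh r)` this integral commutes with `D1` (`hasDerivAt_weyl`). The upper bound
passes through because `r / sinh r` decreases (`weyl_upper`); the lower bound passes through because
at least half of the mass of the integral lies in `u² ≤ 4 cosh r`, where `r / sinh r` has lost at
most a factor `5` (`weyl_lower`).

Finally, `(d/dr)^k h_t` is a fixed linear combination of `(-1)^{a+b} sinh^a cosh^b D1^{a+b} h_t`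
over pairs with `a + 2b ≤ k` and `a ≡ k mod 2` (`Ladder.iterate_deriv`, `expo_inv`), and the
comparison above gives the size of every term. If `r > 1`, the pair `(k, 0)` dominates
(`Ladder.far`). If `r ≤ 1`, the hypothesis on `r^α` makes `t` and `r²/t` small (`sq_div_small`), and
the pair with `a ∈ {0, 1}` and `b` maximal dominates (`Ladder.near`). In both cases the dominant
term is comparable to `Ψ_k h_t`.
-/

open Real MeasureTheory Filter Topology

noncomputable section

namespace DR

/-! ### The function `ρ / sinh ρ` as a Stieltjes-type integral -/

/-- The kernel `(2y)ⁿ / (y² + 2vy + 1)ⁿ⁺¹`. -/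
def ker (n : ℕ) (v y : ℝ) : ℝ := (2 * y) ^ n / (y ^ 2 + 2 * v * y + 1) ^ (n + 1)

/-- `psiI n v = ∫₀^∞ (2y)ⁿ / (y² + 2vy + 1)ⁿ⁺¹ dy`. -/
def psiI (n : ℕ) (v : ℝ) : ℝ := ∫ y in Set.Ioi (0 : ℝ), ker n v y

lemma ker_nonneg (n : ℕ) {v y : ℝ} (hv : 0 < v) (hy : 0 < y) : 0 ≤ ker n v y := by
  unfold ker; positivity

lemma ker_succ_le (n : ℕ) {v y : ℝ} (hv : 0 < v) (hy : 0 < y) :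
    ker (n + 1) v y ≤ ker n v y / v := by
  have hd : 0 < y ^ 2 + 2 * v * y + 1 := by positivity
  have h1 : ker (n + 1) v y = ker n v y * (2 * y / (y ^ 2 + 2 * v * y + 1)) := by
    unfold ker; rw [pow_succ (2 * y) n, pow_succ _ (n + 1), mul_div_mul_comm]
  rw [h1, div_eq_mul_one_div (ker n v y)]
  apply mul_le_mul_of_nonneg_left _ (ker_nonneg n hv hy)
  rw [div_le_div_iff₀ hd hv]
  nlinarith [sq_nonneg y]

lemma ker_le (n : ℕ) {v y : ℝ} (hv : 1 ≤ v) (hy : 0 < y) :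
    ker n v y ≤ (1 + y ^ 2)⁻¹ := by
  have hv0 : 0 < v := by linarith
  induction n with
  | zero =>
    unfold ker
    simp only [pow_zero, zero_add, pow_one, one_div]
    apply inv_anti₀ (by positivity)
    nlinarith [mul_pos hv0 hy]
  | succ n ih =>
    refine (ker_succ_le n hv0 hy).trans (le_trans ?_ ih)
    exact div_le_self (ker_nonneg n hv0 hy) hv

lemma measurable_ker (n : ℕ) (v : ℝ) : Measurable (ker n v) := by
  unfold ker; fun_prop

lemma integrableOn_ker (n : ℕ) {v : ℝ} (hv : 1 ≤ v) :
    IntegrableOn (ker n v) (Set.Ioi 0) := by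
  refine Integrable.mono' integrable_inv_one_add_sq.integrableOn
    (measurable_ker n v).aestronglyMeasurable ?_
  refine (ae_restrict_iff' measurableSet_Ioi).2 (ae_of_all _ fun y hy => ?_)
  rw [Real.norm_of_nonneg (ker_nonneg n (by linarith) hy)]
  exact ker_le n hv hy

lemma hasDerivAt_ker (n : ℕ) {v y : ℝ} (hv : 0 < v) (hy : 0 < y) :
    HasDerivAt (fun v => ker n v y) (-((n + 1) * ker (n + 1) v y)) v := by
  have hd : 0 < y ^ 2 + 2 * v * y + 1 := by positivity
  unfold ker
  have h1 : HasDerivAt (fun v : ℝ => y ^ 2 + 2 * v * y + 1) (2 * y) v := by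
    have := (((hasDerivAt_id v).const_mul 2).mul_const y).const_add (y ^ 2) |>.add_const 1
    simpa using this
  have h2 := (h1.pow (n + 1)).inv (pow_pos hd _).ne'
  have h3 := h2.const_mul ((2 * y) ^ n)
  simp only [div_eq_mul_inv]
  refine h3.congr_deriv ?_
  simp only [Pi.pow_apply]
  push_cast
  field_simp
  ring_nf

/-- Differentiation under the integral sign. -/
lemma hasDerivAt_psiI (n : ℕ) {v : ℝ} (hv : 1 < v) :
    HasDerivAt (psiI n) (-((n + 1) * psiI (n + 1) v)) v := by
  have h := (hasDerivAt_integral_of_dominated_loc_of_deriv_le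
    (μ := volume.restrict (Set.Ioi (0 : ℝ))) (F := fun v y => ker n v y)
    (F' := fun v y => -((n + 1) * ker (n + 1) v y)) (x₀ := v) (s := Set.Ioi 1)
    (bound := fun y => (n + 1) * (1 + y ^ 2)⁻¹) (Ioi_mem_nhds hv)
    (Eventually.of_forall fun v => (measurable_ker n v).aestronglyMeasurable)
    (integrableOn_ker n hv.le)
    ((measurable_ker (n + 1) v).const_mul _).neg.aestronglyMeasurable
    ?_ (integrable_inv_one_add_sq.integrableOn.const_mul _) ?_).2
  · have e : ∫ y in Set.Ioi (0 : ℝ), -(((n : ℝ) + 1) * ker (n + 1) v y)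
        = -((n + 1) * psiI (n + 1) v) := by
      rw [integral_neg, integral_const_mul]; rfl
    rw [e] at h
    exact h
  · refine (ae_restrict_iff' measurableSet_Ioi).2 (ae_of_all _ fun y hy x hx => ?_)
    have hx' : (1 : ℝ) < x := hx
    rw [norm_neg, Real.norm_of_nonneg
      (mul_nonneg (by positivity) (ker_nonneg (n + 1) (by linarith) hy))]
    exact mul_le_mul_of_nonneg_left (ker_le _ hx'.le hy) (by positivity)
  · refine (ae_restrict_iff' measurableSet_Ioi).2 (ae_of_all _ fun y hy x hx => ?_)
    have hx' : (1 : ℝ) < x := hx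
    exact hasDerivAt_ker n (by linarith) hy

lemma psiI_nonneg (n : ℕ) {v : ℝ} (hv : 1 ≤ v) : 0 ≤ psiI n v :=
  setIntegral_nonneg measurableSet_Ioi fun _ hy => ker_nonneg n (by linarith) hy

lemma psiI_succ_le (n : ℕ) {v : ℝ} (hv : 1 ≤ v) : psiI (n + 1) v ≤ psiI n v / v := by
  unfold psiI
  rw [← integral_div]
  exact setIntegral_mono_on (integrableOn_ker _ hv) ((integrableOn_ker _ hv).div_const _)
    measurableSet_Ioi fun y hy => ker_succ_le n (by linarith) hy

lemma psiI_antitone {v v' : ℝ} (hv : 1 ≤ v) (h : v ≤ v') : psiI 0 v' ≤ psiI 0 v := by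
  refine setIntegral_mono_on (integrableOn_ker _ (hv.trans h)) (integrableOn_ker _ hv)
    measurableSet_Ioi fun y hy => ?_
  have hy' : 0 < y := hy
  have : 0 < v := by linarith
  unfold ker
  gcongr

/-- The function `psiI 0` loses at most a factor `5` when its argument grows by a factor `5`. -/
lemma psiI_five {v v' : ℝ} (hv : 1 ≤ v) (h : v ≤ v') (h5 : v' ≤ 5 * v) :
    psiI 0 v / 5 ≤ psiI 0 v' := by
  unfold psiI
  rw [← integral_div]
  refine setIntegral_mono_on ((integrableOn_ker _ hv).div_const _)
    (integrableOn_ker _ (hv.trans h)) measurableSet_Ioi fun y hy => ?_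
  have hy' : 0 < y := hy
  have : 0 < v := by linarith
  have : 0 < v' := by linarith
  unfold ker
  simp only [pow_zero, zero_add, pow_one]
  rw [div_div]
  apply one_div_le_one_div_of_le (by positivity)
  nlinarith [sq_nonneg y, mul_le_mul_of_nonneg_right h5 hy'.le]

/-- `∫₀^∞ dy / (y² + 2y cosh ρ + 1) = ρ / sinh ρ`, by the partial fraction decomposition along
the roots `-e^{±ρ}`. -/
lemma psiI_zero_cosh {ρ : ℝ} (hρ : 0 < ρ) : psiI 0 (Real.cosh ρ) = ρ / Real.sinh ρ := by
  have hs : 0 < Real.sinh ρ := Real.sinh_pos_iff.2 hρ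
  have hp : 0 < Real.exp ρ := Real.exp_pos _
  have hm : 0 < Real.exp (-ρ) := Real.exp_pos _
  have hpm : Real.exp ρ * Real.exp (-ρ) = 1 := by rw [← Real.exp_add]; simp
  have key := integral_Ioi_of_hasDerivAt_of_tendsto' (a := (0 : ℝ)) (m := 0)
    (f := fun y => (Real.log (y + Real.exp (-ρ)) - Real.log (y + Real.exp ρ)) / (2 * Real.sinh ρ))
    (f' := ker 0 (Real.cosh ρ)) ?_ (integrableOn_ker 0 (Real.one_le_cosh ρ)) ?_
  · unfold psiI
    rw [key]
    simp only [zero_add, Real.log_exp]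
    field_simp
    ring
  · intro y hy
    have hy' : 0 ≤ y := hy
    have h1 := ((hasDerivAt_id y).add_const (Real.exp (-ρ))).log (by simp only [id]; positivity)
    have h2 := ((hasDerivAt_id y).add_const (Real.exp ρ)).log (by simp only [id]; positivity)
    refine ((h1.sub h2).div_const (2 * Real.sinh ρ)).congr_deriv ?_
    simp only [id, ker, pow_zero, zero_add, pow_one]
    have e : y ^ 2 + 2 * Real.cosh ρ * y + 1 = (y + Real.exp (-ρ)) * (y + Real.exp ρ) := by
      rw [Real.cosh_eq]; linear_combination (-1 : ℝ) * hpm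
    have e2 : 2 * Real.sinh ρ = Real.exp ρ - Real.exp (-ρ) := by rw [Real.sinh_eq]; ring
    have e3 : Real.exp ρ - Real.exp (-ρ) ≠ 0 := by rw [← e2]; positivity
    rw [e, e2]
    have h3 : 0 < y + Real.exp (-ρ) := by positivity
    have h4 : 0 < y + Real.exp ρ := by positivity
    field_simp
    ring
  · have h1 : Tendsto (fun y : ℝ => (y + Real.exp (-ρ)) / (y + Real.exp ρ)) atTop (𝓝 1) := by
      have : Tendsto (fun y : ℝ => 1 - (Real.exp ρ - Real.exp (-ρ)) / (y + Real.exp ρ)) atTop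
          (𝓝 (1 - 0)) :=
        tendsto_const_nhds.sub
          (tendsto_const_nhds.div_atTop (tendsto_atTop_add_const_right _ _ tendsto_id))
      rw [sub_zero] at this
      refine this.congr' ?_
      filter_upwards [eventually_gt_atTop 0] with y hy
      have h4 : 0 < y + Real.exp ρ := by positivity
      field_simp
      ring
    have h2 := (h1.log one_ne_zero).div_const (2 * Real.sinh ρ)
    rw [Real.log_one, zero_div] at h2
    refine h2.congr' ?_
    filter_upwards [eventually_gt_atTop 0] with y hy
    rw [Real.log_div (by positivity) (by positivity)]

/-! ### Symbols in the variable `cosh (r/2)` -/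

/-- Symbols of weight `ω` and order `N`, on the domain `t > 0`, `v > 1`: the first `N` alternating
derivatives `(-∂_v)^i P` are nonnegative and bounded by a multiple of `ω v^{-i}`, uniformly in
`t`. -/
def Sym : ℕ → (ℝ → ℝ → ℝ) → (ℝ → ℝ → ℝ) → Prop
  | 0, ω, P => ∃ C, 0 ≤ C ∧ ∀ t v, 0 < t → 1 < v → 0 ≤ P t v ∧ P t v ≤ C * ω t v
  | N + 1, ω, P => (∃ C, 0 ≤ C ∧ ∀ t v, 0 < t → 1 < v → 0 ≤ P t v ∧ P t v ≤ C * ω t v) ∧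
      ∃ P' : ℝ → ℝ → ℝ, (∀ t v, 0 < t → 1 < v → HasDerivAt (P t) (-(P' t v)) v) ∧
        Sym N (fun t v => ω t v / v) P'

lemma Sym.bound {N : ℕ} {ω P : ℝ → ℝ → ℝ} (h : Sym N ω P) :
    ∃ C, 0 ≤ C ∧ ∀ t v, 0 < t → 1 < v → 0 ≤ P t v ∧ P t v ≤ C * ω t v := by
  cases N with
  | zero => exact h
  | succ N => exact h.1

lemma Sym.pred {N : ℕ} {ω P : ℝ → ℝ → ℝ} (h : Sym (N + 1) ω P) : Sym N ω P := by
  induction N generalizing ω P with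
  | zero => exact h.1
  | succ N ih =>
    obtain ⟨h1, P', h2, h3⟩ := h
    exact ⟨h1, P', h2, ih h3⟩

lemma Sym.mono {N : ℕ} {ω ω' P : ℝ → ℝ → ℝ} (h : Sym N ω P)
    (hω : ∀ t v, 0 < t → 1 < v → ω t v ≤ ω' t v) : Sym N ω' P := by
  have bd : ∀ {ω ω' P : ℝ → ℝ → ℝ}, (∀ t v, 0 < t → 1 < v → ω t v ≤ ω' t v) →
      (∃ C, 0 ≤ C ∧ ∀ t v, 0 < t → 1 < v → 0 ≤ P t v ∧ P t v ≤ C * ω t v) →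
      ∃ C, 0 ≤ C ∧ ∀ t v, 0 < t → 1 < v → 0 ≤ P t v ∧ P t v ≤ C * ω' t v := by
    rintro ω ω' P hω ⟨C, hC, h⟩
    exact ⟨C, hC, fun t v ht hv => ⟨(h t v ht hv).1,
      (h t v ht hv).2.trans (mul_le_mul_of_nonneg_left (hω t v ht hv) hC)⟩⟩
  induction N generalizing ω ω' P with
  | zero => exact bd hω h
  | succ N ih =>
    obtain ⟨h1, P', h2, h3⟩ := h
    refine ⟨bd hω h1, P', h2, ih h3 fun t v ht hv => ?_⟩
    exact div_le_div_of_nonneg_right (hω t v ht hv) (by linarith)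

lemma Sym.congr {N : ℕ} {ω P Q : ℝ → ℝ → ℝ} (h : Sym N ω P)
    (hPQ : ∀ t v, 0 < t → 1 < v → P t v = Q t v) : Sym N ω Q := by
  cases N with
  | zero =>
    obtain ⟨C, hC, h⟩ := h
    exact ⟨C, hC, fun t v ht hv => by rw [← hPQ t v ht hv]; exact h t v ht hv⟩
  | succ N =>
    obtain ⟨⟨C, hC, h⟩, P', h2, h3⟩ := h
    refine ⟨⟨C, hC, fun t v ht hv => by rw [← hPQ t v ht hv]; exact h t v ht hv⟩, P', ?_, h3⟩
    intro t v ht hv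
    refine (h2 t v ht hv).congr_of_eventuallyEq ?_
    filter_upwards [Ioi_mem_nhds hv] with x hx
    exact (hPQ t x ht hx).symm

lemma Sym.add {N : ℕ} {ω P Q : ℝ → ℝ → ℝ} (hP : Sym N ω P) (hQ : Sym N ω Q) :
    Sym N ω (fun t v => P t v + Q t v) := by
  have bd : ∀ {ω P Q : ℝ → ℝ → ℝ},
      (∃ C, 0 ≤ C ∧ ∀ t v, 0 < t → 1 < v → 0 ≤ P t v ∧ P t v ≤ C * ω t v) →
      (∃ C, 0 ≤ C ∧ ∀ t v, 0 < t → 1 < v → 0 ≤ Q t v ∧ Q t v ≤ C * ω t v) →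
      ∃ C, 0 ≤ C ∧ ∀ t v, 0 < t → 1 < v → 0 ≤ P t v + Q t v ∧ P t v + Q t v ≤ C * ω t v := by
    rintro ω P Q ⟨C, hC, h⟩ ⟨C', hC', h'⟩
    refine ⟨C + C', by positivity, fun t v ht hv => ?_⟩
    obtain ⟨a, b⟩ := h t v ht hv
    obtain ⟨a', b'⟩ := h' t v ht hv
    exact ⟨by positivity, by linarith⟩
  induction N generalizing ω P Q with
  | zero => exact bd hP hQ
  | succ N ih =>
    obtain ⟨h1, P', h2, h3⟩ := hP
    obtain ⟨k1, Q', k2, k3⟩ := hQ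
    refine ⟨bd h1 k1, _, fun t v ht hv => ?_, ih h3 k3⟩
    exact ((h2 t v ht hv).add (k2 t v ht hv)).congr_deriv (by ring)

/-- Leibniz rule: nonnegative symbols multiply, and so do their weights. -/
lemma Sym.mul {N : ℕ} {ω ω' P Q : ℝ → ℝ → ℝ} (hP : Sym N ω P) (hQ : Sym N ω' Q) :
    Sym N (fun t v => ω t v * ω' t v) (fun t v => P t v * Q t v) := by
  have bd : ∀ {ω ω' P Q : ℝ → ℝ → ℝ},
      (∃ C, 0 ≤ C ∧ ∀ t v, 0 < t → 1 < v → 0 ≤ P t v ∧ P t v ≤ C * ω t v) →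
      (∃ C, 0 ≤ C ∧ ∀ t v, 0 < t → 1 < v → 0 ≤ Q t v ∧ Q t v ≤ C * ω' t v) →
      ∃ C, 0 ≤ C ∧ ∀ t v, 0 < t → 1 < v →
        0 ≤ P t v * Q t v ∧ P t v * Q t v ≤ C * (ω t v * ω' t v) := by
    rintro ω ω' P Q ⟨C, hC, h⟩ ⟨C', hC', h'⟩
    refine ⟨C * C', by positivity, fun t v ht hv => ?_⟩
    obtain ⟨a, b⟩ := h t v ht hv
    obtain ⟨a', b'⟩ := h' t v ht hv
    refine ⟨by positivity, (mul_le_mul b b' a' (a.trans b)).trans_eq (by ring)⟩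
  induction N generalizing ω ω' P Q with
  | zero => exact bd hP hQ
  | succ N ih =>
    have hP' := hP.pred
    have hQ' := hQ.pred
    obtain ⟨h1, P', h2, h3⟩ := hP
    obtain ⟨k1, Q', k2, k3⟩ := hQ
    refine ⟨bd h1 k1, fun t v => P' t v * Q t v + P t v * Q' t v, fun t v ht hv => ?_, ?_⟩
    · exact ((h2 t v ht hv).mul (k2 t v ht hv)).congr_deriv (by ring)
    · exact ((ih h3 hQ').mono fun t v _ _ => (by ring_nf; exact le_rfl)).add
        ((ih hP' k3).mono fun t v _ _ => (by ring_nf; exact le_rfl))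

/-- A nonnegative function of `t` alone is a symbol whose weight is itself. -/
lemma Sym.of_time (N : ℕ) {c : ℝ → ℝ} (hc : ∀ t, 0 < t → 0 ≤ c t) :
    Sym N (fun t _ => c t) (fun t _ => c t) := by
  have zero : ∀ N, ∀ ω : ℝ → ℝ → ℝ, (∀ t v, 0 < t → 1 < v → 0 ≤ ω t v) →
      Sym N ω (fun _ _ => 0) := by
    intro N
    induction N with
    | zero =>
      exact fun ω hω => ⟨1, zero_le_one, fun t v ht hv => ⟨le_rfl, by simpa using hω t v ht hv⟩⟩
    | succ N ih =>
      exact fun ω hω => ⟨⟨1, zero_le_one, fun t v ht hv => ⟨le_rfl, by simpa using hω t v ht hv⟩⟩,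
        fun _ _ => 0, fun t v _ _ => by simpa using hasDerivAt_const v (0 : ℝ),
        ih _ fun t v ht hv => div_nonneg (hω t v ht hv) (by linarith)⟩
  cases N with
  | zero => exact ⟨1, zero_le_one, fun t v ht _ => ⟨hc t ht, by simp⟩⟩
  | succ N =>
    refine ⟨⟨1, zero_le_one, fun t v ht _ => ⟨hc t ht, by simp⟩⟩, fun _ _ => 0,
      fun t v _ _ => by simpa using hasDerivAt_const v (c t), zero N _ fun t v ht hv => ?_⟩
    exact div_nonneg (hc t ht) (by linarith)

lemma Sym.inv (N : ℕ) : Sym N (fun _ v => 1 / v) (fun _ v => 1 / v) := by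
  have bd : ∃ C : ℝ, 0 ≤ C ∧ ∀ t v : ℝ, 0 < t → 1 < v → 0 ≤ 1 / v ∧ 1 / v ≤ C * (1 / v) :=
    ⟨1, zero_le_one, fun t v _ hv => ⟨by positivity, by simp⟩⟩
  induction N with
  | zero => exact bd
  | succ N ih =>
    refine ⟨bd, fun _ v => 1 / v * (1 / v), fun t v _ hv => ?_,
      (ih.mul ih).mono fun t v _ _ => (by ring_nf; exact le_rfl)⟩
    have h := hasDerivAt_inv (show v ≠ 0 by positivity)
    simp only [one_div]
    exact h.congr_deriv (by field_simp)

/-- Each `-∂_v` of `psiI n` costs a factor `O(1/v)`, by `psiI_succ_le`. -/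
lemma sym_psiI (N n : ℕ) : Sym N (fun _ v => psiI n v) (fun _ v => psiI n v) := by
  have bd : ∀ n, ∃ C : ℝ, 0 ≤ C ∧ ∀ t v : ℝ, 0 < t → 1 < v →
      0 ≤ psiI n v ∧ psiI n v ≤ C * psiI n v :=
    fun n => ⟨1, zero_le_one, fun t v _ hv => ⟨psiI_nonneg n hv.le, by simp⟩⟩
  induction N generalizing n with
  | zero => exact bd n
  | succ N ih =>
    refine ⟨bd n, fun _ v => (n + 1) * psiI (n + 1) v, fun t v _ hv => hasDerivAt_psiI n hv, ?_⟩
    have h1 := (Sym.of_time N (c := fun _ => (n : ℝ) + 1) (fun _ _ => by positivity)).mul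
      (ih (n + 1))
    have h2 : Sym N (fun t v => (n + 1 : ℝ) * (psiI n v / v))
        (fun _ v => ((n : ℝ) + 1) * psiI (n + 1) v) :=
      h1.mono fun t v _ hv => mul_le_mul_of_nonneg_left (psiI_succ_le n hv.le) (by positivity)
    -- the constant factor `n + 1` is moved from the weight into the bound
    have sc : ∀ N, ∀ ω P : ℝ → ℝ → ℝ, ∀ c : ℝ, 0 ≤ c → Sym N (fun t v => c * ω t v) P →
        Sym N ω P := by
      intro N
      induction N with
      | zero =>
        rintro ω P c hc ⟨C, hC, h⟩
        exact ⟨C * c, by positivity, fun t v ht hv =>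
          ⟨(h t v ht hv).1, (h t v ht hv).2.trans_eq (by ring)⟩⟩
      | succ N ih =>
        rintro ω P c hc ⟨⟨C, hC, h⟩, P', h2, h3⟩
        refine ⟨⟨C * c, by positivity, fun t v ht hv =>
          ⟨(h t v ht hv).1, (h t v ht hv).2.trans_eq (by ring)⟩⟩, P', h2, ih _ _ c hc ?_⟩
        exact h3.mono fun t v _ _ => (by ring_nf; exact le_rfl)
    exact sc N _ _ _ (by positivity) h2

/-- The logarithmic derivative `-∂_v log` of the Gaussian in the variable `v = cosh (r/2)`. -/
def lam (t v : ℝ) : ℝ := 2 / t * psiI 0 v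

lemma sym_lam (N : ℕ) : Sym N lam lam :=
  (Sym.of_time N (c := fun t => 2 / t) (fun _ ht => by positivity)).mul (sym_psiI N 0)

lemma psiI_zero_le_one {v : ℝ} (hv : 1 < v) : psiI 0 v ≤ 1 := by
  have h : v = Real.cosh (Real.arcosh v) := (Real.cosh_arcosh hv.le).symm
  have h0 := Real.arcosh_pos hv
  rw [h, psiI_zero_cosh h0, div_le_one (Real.sinh_pos_iff.2 h0)]
  exact Real.self_le_sinh_iff.2 h0.le

lemma lam_nonneg {t v : ℝ} (ht : 0 < t) (hv : 1 < v) : 0 ≤ lam t v :=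
  mul_nonneg (by positivity) (psiI_nonneg 0 hv.le)

lemma lam_le {t v : ℝ} (ht : 0 < t) (hv : 1 < v) : lam t v ≤ 2 / t :=
  mul_le_of_le_one_right (by positivity) (psiI_zero_le_one hv)

lemma lam_cosh {t r : ℝ} (hr : 0 < r) :
    lam t (Real.cosh (r / 2)) = r / (t * Real.sinh (r / 2)) := by
  unfold lam
  rw [psiI_zero_cosh (half_pos hr)]
  have : 0 < Real.sinh (r / 2) := Real.sinh_pos_iff.2 (half_pos hr)
  ring_nf

lemma sinh_le_mul_cosh {x : ℝ} (hx : 0 < x) : Real.sinh x ≤ x * Real.cosh x := by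
  obtain ⟨ξ, hξ, h⟩ := exists_hasDerivAt_eq_slope Real.sinh Real.cosh hx
    Real.continuous_sinh.continuousOn fun y _ => Real.hasDerivAt_sinh y
  rw [Real.sinh_zero, sub_zero, sub_zero, eq_div_iff hx.ne'] at h
  have h1 : Real.cosh ξ ≤ Real.cosh x :=
    Real.cosh_le_cosh.2 (by rw [abs_of_pos hξ.1, abs_of_pos hx]; exact hξ.2.le)
  nlinarith

/-- If `(1 + r)/t ≥ 2` then `λ ≥ 1/v` at `v = cosh (r/2)`. -/
lemma one_div_le_lam {t r : ℝ} (hr : 0 < r) (ht : 0 < t) (h : 2 ≤ (1 + r) / t) :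
    1 / Real.cosh (r / 2) ≤ lam t (Real.cosh (r / 2)) := by
  rw [lam_cosh hr]
  have hρ := half_pos hr
  have hs : 0 < Real.sinh (r / 2) := Real.sinh_pos_iff.2 hρ
  have hc : 0 < Real.cosh (r / 2) := Real.cosh_pos _
  have h1 : Real.sinh (r / 2) ≤ Real.cosh (r / 2) := (Real.sinh_lt_cosh _).le
  have h2 : Real.sinh (r / 2) ≤ r / 2 * Real.cosh (r / 2) := sinh_le_mul_cosh hρ
  rw [le_div_iff₀ ht] at h
  rw [div_le_div_iff₀ hc (by positivity)]
  nlinarith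

/-! ### Amplitudes of the derivatives of the Gaussian -/

lemma hasDerivAt_gauss (t r : ℝ) : HasDerivAt (gauss t) (-(r / (2 * t)) * gauss t r) r := by
  unfold gauss
  have h := (((hasDerivAt_pow 2 r).neg).div_const (4 * t)).exp
  refine h.congr_deriv ?_
  simp only [Pi.neg_apply]
  push_cast
  ring

lemma gauss_pos (t r : ℝ) : 0 < gauss t r := Real.exp_pos _

/-- Conjugating `-∂_v` by the Gaussian maps a symbol `P` to the symbol `-∂_v P + λ P`. -/
lemma sym_step {ω P : ℝ → ℝ → ℝ} (hω : ∀ t v, 0 < t → 1 < v → 0 ≤ ω t v)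
    (hP : ∀ N, Sym N ω P) :
    ∃ R : ℝ → ℝ → ℝ, (∀ N, Sym N (fun t v => ω t v * (lam t v + 1 / v)) R) ∧
      (∀ t v, 0 < t → 1 < v → lam t v * P t v ≤ R t v) ∧
      ∀ (t r : ℝ) (Q : ℝ → ℝ), 0 < t → 0 < r →
        (∀ s, 0 < s → Q s = P t (Real.cosh (s / 2)) * gauss t s) →
        HasDerivAt Q (-(Real.sinh (r / 2) / 2 * (R t (Real.cosh (r / 2)) * gauss t r))) r := by
  obtain ⟨P', hd, -⟩ := (hP 1).2
  have hP' : ∀ N, Sym N (fun t v => ω t v / v) P' := by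
    intro N
    obtain ⟨P₂, hd₂, h₂⟩ := (hP (N + 1)).2
    refine h₂.congr fun t v ht hv => ?_
    have := (hd₂ t v ht hv).unique (hd t v ht hv)
    linarith
  refine ⟨fun t v => P' t v + lam t v * P t v, fun N => ?_, fun t v ht hv => ?_, ?_⟩
  · have h1 : Sym N (fun t v => ω t v * (lam t v + 1 / v)) P' := by
      refine (hP' N).mono fun t v ht hv => ?_
      rw [div_eq_mul_one_div]
      exact mul_le_mul_of_nonneg_left (by linarith [lam_nonneg ht hv]) (hω t v ht hv)
    have h2 : Sym N (fun t v => ω t v * (lam t v + 1 / v)) (fun t v => lam t v * P t v) := by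
      refine ((sym_lam N).mul (hP N)).mono fun t v ht hv => ?_
      rw [mul_comm]
      have : 0 < 1 / v := by positivity
      exact mul_le_mul_of_nonneg_left (by linarith) (hω t v ht hv)
    exact h1.add h2
  · have := (hP' 0).bound
    obtain ⟨C, hC, hb⟩ := this
    linarith [(hb t v ht hv).1]
  · intro t r Q ht hr hQ
    have hv : 1 < Real.cosh (r / 2) := Real.one_lt_cosh.2 (half_pos hr).ne'
    have h1 : HasDerivAt (fun s : ℝ => Real.cosh (s / 2)) (Real.sinh (r / 2) * (1 / 2)) r :=
      ((hasDerivAt_id r).div_const 2).cosh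
    have h2 := ((hd t _ ht hv).comp r h1).mul (hasDerivAt_gauss t r)
    have h3 : Q =ᶠ[𝓝 r] fun s => P t (Real.cosh (s / 2)) * gauss t s := by
      filter_upwards [Ioi_mem_nhds hr] with s hs
      exact hQ s hs
    refine (h2.congr_of_eventuallyEq h3).congr_deriv ?_
    simp only [Function.comp_apply]
    rw [lam_cosh hr]
    have : 0 < Real.sinh (r / 2) := Real.sinh_pos_iff.2 (half_pos hr)
    field_simp
    ring

/-- The weight of the amplitude of `D1^a D2^b` applied to the Gaussian, `m = a + b`. -/
def omg (m a : ℕ) (t v : ℝ) : ℝ := (lam t v + 1 / v) ^ m * (1 / v) ^ a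

lemma omg_nonneg (m a : ℕ) {t v : ℝ} (ht : 0 < t) (hv : 1 < v) : 0 ≤ omg m a t v := by
  have := lam_nonneg ht hv
  unfold omg
  positivity

/-- `D1^a D2^b` of the Gaussian is the Gaussian times a symbol in `v = cosh (r/2)`, whose leading
part `λ^{a+b} v^{-a}` is a lower bound. -/
lemma exists_amplitude (a b : ℕ) :
    ∃ P : ℝ → ℝ → ℝ, (∀ N, Sym N (omg (a + b) a) P) ∧
      (∃ c, 0 < c ∧ ∀ t v, 0 < t → 1 < v → c * (lam t v ^ (a + b) * (1 / v) ^ a) ≤ P t v) ∧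
      ∀ t r, 0 < t → 0 < r →
        (D1^[a] (D2^[b] (gauss t))) r = P t (Real.cosh (r / 2)) * gauss t r := by
  have one_lt : ∀ {r : ℝ}, 0 < r → 1 < Real.cosh (r / 2) := fun hr =>
    Real.one_lt_cosh.2 (half_pos hr).ne'
  induction a with
  | zero =>
    induction b with
    | zero =>
      refine ⟨fun _ _ => 1, fun N => ?_, ⟨1, one_pos, fun t v _ _ => by simp⟩, fun t r _ _ => ?_⟩
      · exact (Sym.of_time N (c := fun _ => 1) fun _ _ => zero_le_one).mono
          fun t v _ _ => by simp [omg]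
      · simp
    | succ b ih =>
      obtain ⟨P, hP, ⟨c, hc, hl⟩, hrep⟩ := ih
      obtain ⟨R, hR, hRl, hd⟩ := sym_step (fun t v => omg_nonneg _ _) hP
      refine ⟨fun t v => 1 / 2 * R t v, fun N => ?_, ⟨c / 2, half_pos hc, fun t v ht hv => ?_⟩,
        fun t r ht hr => ?_⟩
      · refine ((Sym.of_time N (c := fun _ => 1 / 2) fun _ _ => by norm_num).mul (hR N)).mono
          fun t v ht hv => ?_
        have h0 := omg_nonneg (0 + (b + 1)) 0 ht hv
        have h1 : omg (0 + (b + 1)) 0 t v = omg (0 + b) 0 t v * (lam t v + 1 / v) := by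
          unfold omg; ring
        rw [← h1]
        linarith
      · have h1 := mul_le_mul_of_nonneg_left (hl t v ht hv) (lam_nonneg ht hv)
        have h2 := hRl t v ht hv
        have h3 : c / 2 * (lam t v ^ (0 + (b + 1)) * (1 / v) ^ 0)
          = 1 / 2 * (lam t v * (c * (lam t v ^ (0 + b) * (1 / v) ^ 0))) := by ring
        rw [h3]
        linarith
      · have h1 := hd t r _ ht hr (fun s hs => hrep t s ht hs)
        rw [Function.iterate_zero, id] at h1
        rw [Function.iterate_zero, id, Function.iterate_succ_apply']
        unfold D2 at h1 ⊢
        rw [h1.deriv]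
        have : 0 < Real.sinh (r / 2) := Real.sinh_pos_iff.2 (half_pos hr)
        field_simp
  | succ a ih =>
    obtain ⟨P, hP, ⟨c, hc, hl⟩, hrep⟩ := ih
    obtain ⟨R, hR, hRl, hd⟩ := sym_step (fun t v => omg_nonneg _ _) hP
    refine ⟨fun t v => 1 / 4 * (1 / v * R t v), fun N => ?_,
      ⟨c / 4, by positivity, fun t v ht hv => ?_⟩, fun t r ht hr => ?_⟩
    · refine ((Sym.of_time N (c := fun _ => 1 / 4) fun _ _ => by norm_num).mul
        ((Sym.inv N).mul (hR N))).mono fun t v ht hv => ?_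
      have h0 := omg_nonneg (a + 1 + b) (a + 1) ht hv
      have h1 : omg (a + 1 + b) (a + 1) t v
          = 1 / v * (omg (a + b) a t v * (lam t v + 1 / v)) := by
        unfold omg; ring
      rw [← h1]
      linarith
    · have h1 := mul_le_mul_of_nonneg_left (hl t v ht hv) (lam_nonneg ht hv)
      have h2 := mul_le_mul_of_nonneg_left (h1.trans (hRl t v ht hv))
        (show 0 ≤ 1 / v by positivity)
      have h3 : c / 4 * (lam t v ^ (a + 1 + b) * (1 / v) ^ (a + 1))
        = 1 / 4 * (1 / v * (lam t v * (c * (lam t v ^ (a + b) * (1 / v) ^ a)))) := by ring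
      rw [h3]
      linarith
    · have h1 := hd t r _ ht hr (fun s hs => hrep t s ht hs)
      rw [Function.iterate_succ_apply']
      unfold D1 at h1 ⊢
      rw [h1.deriv]
      have : 0 < Real.sinh (r / 2) := Real.sinh_pos_iff.2 (half_pos hr)
      have : 0 < Real.cosh (r / 2) := Real.cosh_pos _
      have e : Real.sinh r = 2 * Real.sinh (r / 2) * Real.cosh (r / 2) := by
        rw [← Real.sinh_two_mul]; ring_nf
      rw [e]
      field_simp
      ring

/-- The weight `r / (2 t sinh r)`, equal to `D1 (gauss t) / gauss t`. -/
def wt (t r : ℝ) : ℝ := r / (2 * t * Real.sinh r)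

lemma wt_pos {t r : ℝ} (ht : 0 < t) (hr : 0 < r) : 0 < wt t r := by
  have : 0 < Real.sinh r := Real.sinh_pos_iff.2 hr
  unfold wt
  positivity

/-- The functions `D1^j` of a fixed `D1^a D2^b (gauss t)`. -/
def GG (a b : ℕ) (j : ℕ) (t : ℝ) : ℝ → ℝ := D1^[a + j] (D2^[b] (gauss t))

lemma wt_eq {t r : ℝ} (hr : 0 < r) (ht : 0 < t) :
    wt t r = 1 / (4 * Real.cosh (r / 2)) * lam t (Real.cosh (r / 2)) := by
  rw [lam_cosh hr]
  have : 0 < Real.sinh (r / 2) := Real.sinh_pos_iff.2 (half_pos hr)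
  have : 0 < Real.cosh (r / 2) := Real.cosh_pos _
  have e : Real.sinh r = 2 * Real.sinh (r / 2) * Real.cosh (r / 2) := by
    rw [← Real.sinh_two_mul]; ring_nf
  unfold wt
  rw [e]
  field_simp
  ring

/-- The facts about `GG a b j = D1^{a+j} D2^b gauss` used below: `GG a b (j + 1)` is its `D1`
derivative, it is nonnegative, passing from `j` to `j + 1` gains at least `wt t` everywhere and at
most `C wt t` where `(1 + r)/t ≥ 2`, and for fixed `t` it has Gaussian decay. -/
lemma GG_facts (a b j : ℕ) :
    (∀ t r, 0 < t → 0 < r →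
      HasDerivAt (GG a b j t) (-(Real.sinh r * GG a b (j + 1) t r)) r) ∧
    (∀ t r, 0 < t → 0 < r → 0 ≤ GG a b j t r) ∧
    (∀ t r, 0 < t → 0 < r → wt t r * GG a b j t r ≤ GG a b (j + 1) t r) ∧
    (∃ C, 0 < C ∧ ∀ t r, 0 < t → 0 < r → 2 ≤ (1 + r) / t →
      GG a b (j + 1) t r ≤ C * (wt t r * GG a b j t r)) ∧
    (∀ t, 0 < t → ∃ C, ∀ r, 0 < r → GG a b j t r ≤ C * gauss t r) := by
  obtain ⟨P, hP, ⟨c, hc, hl⟩, hrep⟩ := exists_amplitude (a + j) b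
  obtain ⟨R, hR, hRl, hd⟩ := sym_step (fun t v => omg_nonneg _ _) hP
  have one_lt : ∀ {r : ℝ}, 0 < r → 1 < Real.cosh (r / 2) := fun hr =>
    Real.one_lt_cosh.2 (half_pos hr).ne'
  have hG : ∀ t r, 0 < t → 0 < r → GG a b j t r = P t (Real.cosh (r / 2)) * gauss t r := hrep
  have hder : ∀ t r, 0 < t → 0 < r → HasDerivAt (GG a b j t)
      (-(Real.sinh (r / 2) / 2 * (R t (Real.cosh (r / 2)) * gauss t r))) r :=
    fun t r ht hr => hd t r _ ht hr (fun s hs => hG t s ht hs)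
  have hG1 : ∀ t r, 0 < t → 0 < r → GG a b (j + 1) t r
      = 1 / (4 * Real.cosh (r / 2)) * (R t (Real.cosh (r / 2)) * gauss t r) := by
    intro t r ht hr
    have h1 : GG a b (j + 1) t r = D1 (GG a b j t) r := by
      unfold GG
      rw [← add_assoc, Function.iterate_succ_apply']
    rw [h1]
    unfold D1
    rw [(hder t r ht hr).deriv]
    have : 0 < Real.sinh (r / 2) := Real.sinh_pos_iff.2 (half_pos hr)
    have : 0 < Real.cosh (r / 2) := Real.cosh_pos _
    have e : Real.sinh r = 2 * Real.sinh (r / 2) * Real.cosh (r / 2) := by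
      rw [← Real.sinh_two_mul]; ring_nf
    rw [e]
    field_simp
    ring
  obtain ⟨CP, hCP, hPb⟩ := (hP 0).bound
  obtain ⟨CR, hCR, hRb⟩ := (hR 0).bound
  refine ⟨fun t r ht hr => ?_, fun t r ht hr => ?_, fun t r ht hr => ?_, ?_, ?_⟩
  · refine (hder t r ht hr).congr_deriv ?_
    rw [hG1 t r ht hr]
    have : 0 < Real.cosh (r / 2) := Real.cosh_pos _
    have e : Real.sinh r = 2 * Real.sinh (r / 2) * Real.cosh (r / 2) := by
      rw [← Real.sinh_two_mul]; ring_nf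
    rw [e]
    field_simp
    ring
  · rw [hG t r ht hr]
    exact mul_nonneg (hPb t _ ht (one_lt hr)).1 (gauss_pos t r).le
  · rw [hG t r ht hr, hG1 t r ht hr, wt_eq hr ht, mul_assoc, ← mul_assoc (lam _ _)]
    have := gauss_pos t r
    have : 0 < Real.cosh (r / 2) := Real.cosh_pos _
    gcongr
    exact hRl t _ ht (one_lt hr)
  · refine ⟨(CR + 1) * 2 ^ (a + j + b + 1) / c, by positivity, fun t r ht hr h2 => ?_⟩
    rw [hG t r ht hr, hG1 t r ht hr, wt_eq hr ht]
    have hv := one_lt hr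
    have hlam := one_div_le_lam hr ht h2
    set v := Real.cosh (r / 2) with hv_def
    have hv0 : 0 < v := by linarith
    have hl0 := lam_nonneg ht hv
    have hg := gauss_pos t r
    have k1 : R t v ≤ (CR + 1) * 2 ^ (a + j + b + 1) / c * (lam t v * P t v) := by
      calc R t v ≤ CR * (omg (a + j + b) (a + j) t v * (lam t v + 1 / v)) := (hRb t v ht hv).2
        _ ≤ (CR + 1) * (omg (a + j + b) (a + j) t v * (lam t v + 1 / v)) := by
            have := omg_nonneg (a + j + b) (a + j) ht hv
            gcongr
            linarith
        _ = (CR + 1) * ((lam t v + 1 / v) ^ (a + j + b + 1) * (1 / v) ^ (a + j)) := by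
            unfold omg; ring
        _ ≤ (CR + 1) * ((2 * lam t v) ^ (a + j + b + 1) * (1 / v) ^ (a + j)) := by
            gcongr
            linarith
        _ = (CR + 1) * 2 ^ (a + j + b + 1) / c *
              (lam t v * (c * (lam t v ^ (a + j + b) * (1 / v) ^ (a + j)))) := by
            rw [mul_pow]; field_simp; ring
        _ ≤ _ := by
            have := hl t v ht hv
            gcongr
    calc 1 / (4 * v) * (R t v * gauss t r)
        ≤ 1 / (4 * v) * ((CR + 1) * 2 ^ (a + j + b + 1) / c * (lam t v * P t v) * gauss t r) := by
          gcongr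
      _ = _ := by ring
  · intro t ht
    refine ⟨CP * (2 / t + 1) ^ (a + j + b), fun r hr => ?_⟩
    rw [hG t r ht hr]
    have hv := one_lt hr
    have hg := gauss_pos t r
    have hl0 := lam_nonneg ht hv
    gcongr
    refine (hPb t _ ht hv).2.trans ?_
    gcongr
    have h1 : 1 / Real.cosh (r / 2) ≤ 1 := by
      rw [div_le_one (by linarith)]; exact hv.le
    have h0 : 0 ≤ 1 / Real.cosh (r / 2) := by positivity
    unfold omg
    calc _ ≤ (2 / t + 1) ^ (a + j + b) * 1 := by
          gcongr
          · exact lam_le ht hv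
          · exact pow_le_one₀ h0 h1
      _ = _ := mul_one _

/-! ### The half-order Weyl integral -/

lemma wt_eq_psiI {t r : ℝ} (hr : 0 < r) : wt t r = psiI 0 (Real.cosh r) / (2 * t) := by
  rw [psiI_zero_cosh hr, wt, div_div]
  ring_nf

/-- A function `G` whose logarithmic derivative is at most that of the Gaussian decays at least
as fast as the Gaussian. -/
lemma gauss_decay {t : ℝ} (ht : 0 < t) {G G' : ℝ → ℝ}
    (hd : ∀ r, 0 < r → HasDerivAt G (-(Real.sinh r * G' r)) r)
    (hl : ∀ r, 0 < r → wt t r * G r ≤ G' r) {s s' : ℝ} (hs : 0 < s) (hss : s ≤ s') :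
    G s' ≤ Real.exp (-(s' ^ 2 - s ^ 2) / (4 * t)) * G s := by
  have hder : ∀ r, 0 < r → HasDerivAt (fun r => G r * Real.exp (r ^ 2 / (4 * t)))
      (-(Real.sinh r * G' r) * Real.exp (r ^ 2 / (4 * t)) +
        G r * (Real.exp (r ^ 2 / (4 * t)) * (2 * r / (4 * t)))) r := by
    intro r hr
    have h2 := ((hasDerivAt_pow 2 r).div_const (4 * t)).exp
    refine ((hd r hr).mul h2).congr_deriv ?_
    norm_num
  have hanti : AntitoneOn (fun r => G r * Real.exp (r ^ 2 / (4 * t))) (Set.Ioi 0) := by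
    refine antitoneOn_of_deriv_nonpos (convex_Ioi 0)
      (fun r hr => (hder r hr).continuousAt.continuousWithinAt)
      (fun r hr => ?_) (fun r hr => ?_)
    · rw [interior_Ioi] at hr
      exact (hder r hr).differentiableAt.differentiableWithinAt
    · rw [interior_Ioi] at hr
      have hr' : 0 < r := hr
      rw [(hder r hr).deriv]
      have hsinh : 0 < Real.sinh r := Real.sinh_pos_iff.2 hr'
      have h1 : 2 * r / (4 * t) * G r ≤ Real.sinh r * G' r := by
        have := mul_le_mul_of_nonneg_left (hl r hr') hsinh.le
        refine le_trans (le_of_eq ?_) this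
        unfold wt
        field_simp
        ring
      have h2 := Real.exp_pos (r ^ 2 / (4 * t))
      nlinarith
  have h := hanti (Set.mem_Ioi.2 hs) (Set.mem_Ioi.2 (hs.trans_le hss)) hss
  simp only at h
  have e : Real.exp (-(s' ^ 2 - s ^ 2) / (4 * t)) * G s
      = G s * Real.exp (s ^ 2 / (4 * t)) * Real.exp (-(s' ^ 2 / (4 * t))) := by
    rw [mul_assoc (G s), ← Real.exp_add, mul_comm]
    congr 2
    ring
  have e2 : G s' = G s' * Real.exp (s' ^ 2 / (4 * t)) * Real.exp (-(s' ^ 2 / (4 * t))) := by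
    rw [mul_assoc, ← Real.exp_add]; simp
  rw [e, e2]
  exact mul_le_mul_of_nonneg_right h (Real.exp_pos _).le

/-- The half-order Weyl integral `∫_r^∞ sinh s (cosh s - cosh r)^{-1/2} G(s) ds`, in the variable
`u = √(cosh s - cosh r)`. -/
def weyl (G : ℝ → ℝ) (r : ℝ) : ℝ :=
  2 * ∫ u in Set.Ioi (0 : ℝ), G (Real.arcosh (Real.cosh r + u ^ 2))

lemma weyl_eq (G : ℝ → ℝ) {r : ℝ} (hr : 0 < r) :
    ∫ s in Set.Ioi r, (Real.sinh s / Real.sqrt (Real.cosh s - Real.cosh r)) * G s = weyl G r := by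
  have hpos : ∀ s ∈ Set.Ioi r, 0 < Real.cosh s - Real.cosh r := by
    intro s hs
    have hs' : r < s := hs
    have : Real.cosh r < Real.cosh s := by
      rw [Real.cosh_lt_cosh, abs_of_pos hr, abs_of_pos (hr.trans hs')]; exact hs'
    linarith
  have himg : (fun s => Real.sqrt (Real.cosh s - Real.cosh r)) '' Set.Ioi r = Set.Ioi 0 := by
    ext u
    constructor
    · rintro ⟨s, hs, rfl⟩
      exact Real.sqrt_pos.2 (hpos s hs)
    · intro hu
      have hu' : 0 < u := hu
      have h1 : 1 ≤ Real.cosh r := Real.one_le_cosh r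
      refine ⟨Real.arcosh (Real.cosh r + u ^ 2), ?_, ?_⟩
      · have : Real.arcosh (Real.cosh r) < Real.arcosh (Real.cosh r + u ^ 2) := by
          rw [Real.arcosh_lt_arcosh (by positivity) (by positivity)]
          nlinarith
        rwa [Real.arcosh_cosh hr.le] at this
      · simp only
        rw [Real.cosh_arcosh (by nlinarith), add_sub_cancel_left, Real.sqrt_sq hu'.le]
  have hder : ∀ s ∈ Set.Ioi r, HasDerivWithinAt (fun s => Real.sqrt (Real.cosh s - Real.cosh r))
      (Real.sinh s / (2 * Real.sqrt (Real.cosh s - Real.cosh r))) (Set.Ioi r) s := by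
    intro s hs
    exact (((Real.hasDerivAt_cosh s).sub_const _).sqrt (hpos s hs).ne').hasDerivWithinAt
  have hinj : Set.InjOn (fun s => Real.sqrt (Real.cosh s - Real.cosh r)) (Set.Ioi r) := by
    intro s hs s' hs' h
    have h1 := (Real.sqrt_inj (hpos s hs).le (hpos s' hs').le).1 h
    have h2 : Real.cosh s = Real.cosh s' := by linarith
    have a : 0 < s := hr.trans hs
    have b : 0 < s' := hr.trans hs'
    rw [← Real.arcosh_cosh a.le, h2, Real.arcosh_cosh b.le]
  unfold weyl
  rw [← himg, integral_image_eq_integral_abs_deriv_smul measurableSet_Ioi hder hinj,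
    ← integral_const_mul]
  refine setIntegral_congr_fun measurableSet_Ioi fun s hs => ?_
  have h0 := hpos s hs
  have hs0 : 0 < s := hr.trans hs
  have h1 : 0 < Real.sinh s := Real.sinh_pos_iff.2 hs0
  have h2 := Real.sqrt_pos.2 h0
  simp only [smul_eq_mul]
  rw [abs_of_pos (by positivity), Real.sq_sqrt h0.le, add_sub_cancel, Real.arcosh_cosh hs0.le]
  field_simp

/-- The Gaussian in the variable `x = cosh s` is `O(1/x)`, which makes the Weyl integral converge;
the constant `e^t` is the maximum of `e^s e^{-s²/(4t)}`. -/
lemma gauss_arcosh_le {t x : ℝ} (ht : 0 < t) (hx : 1 ≤ x) :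
    gauss t (Real.arcosh x) ≤ Real.exp t * x⁻¹ := by
  have h0 := Real.arcosh_nonneg hx
  have hc := Real.cosh_arcosh hx
  set s := Real.arcosh x
  rw [← hc, ← div_eq_mul_inv, le_div_iff₀ (Real.cosh_pos s)]
  have h1 : Real.cosh s ≤ Real.exp s := by
    rw [Real.cosh_eq]
    have : Real.exp (-s) ≤ Real.exp s := Real.exp_le_exp.2 (by linarith)
    linarith
  have h2 : gauss t s * Real.exp s ≤ Real.exp t := by
    unfold gauss
    rw [← Real.exp_add, Real.exp_le_exp]
    have : t - (-s ^ 2 / (4 * t) + s) = (s - 2 * t) ^ 2 / (4 * t) := by field_simp; ring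
    have h3 : 0 ≤ (s - 2 * t) ^ 2 / (4 * t) := by positivity
    linarith
  exact (mul_le_mul_of_nonneg_left h1 (gauss_pos t s).le).trans h2

lemma hasDerivAt_comp_arcosh {G G' : ℝ → ℝ}
    (hd : ∀ r, 0 < r → HasDerivAt G (-(Real.sinh r * G' r)) r) {x : ℝ} (hx : 1 < x) :
    HasDerivAt (fun x => G (Real.arcosh x)) (-G' (Real.arcosh x)) x := by
  have h := (hd _ (Real.arcosh_pos hx)).comp x (Real.hasDerivAt_arcosh hx)
  refine h.congr_deriv ?_
  rw [Real.sinh_arcosh hx.le]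
  have : 0 < √(x ^ 2 - 1) := Real.sqrt_pos.2 (by nlinarith)
  field_simp

/-- Measurability, an integrable majorant independent of `x > 1`, and integrability of the integrand
of the Weyl integral at `cosh r = x`. -/
lemma integrableOn_weyl {t C : ℝ} (ht : 0 < t) {G G' : ℝ → ℝ}
    (hd : ∀ r, 0 < r → HasDerivAt G (-(Real.sinh r * G' r)) r) (h0 : ∀ r, 0 < r → 0 ≤ G r)
    (hb : ∀ r, 0 < r → G r ≤ C * gauss t r) {x : ℝ} (hx : 1 < x) :
    AEStronglyMeasurable (fun u => G (Real.arcosh (x + u ^ 2))) (volume.restrict (Set.Ioi 0)) ∧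
    (∀ u, ‖G (Real.arcosh (x + u ^ 2))‖ ≤ |C| * Real.exp t * (1 + u ^ 2)⁻¹) ∧
    IntegrableOn (fun u => G (Real.arcosh (x + u ^ 2))) (Set.Ioi 0) := by
  have hm : AEStronglyMeasurable (fun u => G (Real.arcosh (x + u ^ 2)))
      (volume.restrict (Set.Ioi 0)) := by
    have : Continuous (fun u => G (Real.arcosh (x + u ^ 2))) := by
      rw [continuous_iff_continuousAt]
      intro u
      have h1 := (hasDerivAt_comp_arcosh hd (x := x + u ^ 2) (by nlinarith)).continuousAt
      exact h1.comp (f := fun u : ℝ => x + u ^ 2) (by fun_prop)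
    exact this.aestronglyMeasurable
  have hbd : ∀ u, ‖G (Real.arcosh (x + u ^ 2))‖ ≤ |C| * Real.exp t * (1 + u ^ 2)⁻¹ := by
    intro u
    have hy : 1 < x + u ^ 2 := by nlinarith
    have hs := Real.arcosh_pos hy
    rw [Real.norm_of_nonneg (h0 _ hs)]
    have h1 := gauss_arcosh_le ht hy.le
    have h2 : (x + u ^ 2)⁻¹ ≤ (1 + u ^ 2)⁻¹ := inv_anti₀ (by positivity) (by linarith)
    calc _ ≤ C * gauss t (Real.arcosh (x + u ^ 2)) := hb _ hs
      _ ≤ |C| * gauss t (Real.arcosh (x + u ^ 2)) :=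
          mul_le_mul_of_nonneg_right (le_abs_self C) (gauss_pos _ _).le
      _ ≤ |C| * (Real.exp t * (1 + u ^ 2)⁻¹) := by
          gcongr
          exact h1.trans (mul_le_mul_of_nonneg_left h2 (Real.exp_pos t).le)
      _ = _ := by ring
  exact ⟨hm, hbd, Integrable.mono' (integrable_inv_one_add_sq.integrableOn.const_mul _) hm
    (ae_of_all _ hbd)⟩

/-- The Weyl integral commutes with `D1`. -/
lemma hasDerivAt_weyl {t C C' : ℝ} (ht : 0 < t) {G G' G'' : ℝ → ℝ}
    (hd : ∀ r, 0 < r → HasDerivAt G (-(Real.sinh r * G' r)) r)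
    (hd' : ∀ r, 0 < r → HasDerivAt G' (-(Real.sinh r * G'' r)) r)
    (h0 : ∀ r, 0 < r → 0 ≤ G r) (h0' : ∀ r, 0 < r → 0 ≤ G' r)
    (hb : ∀ r, 0 < r → G r ≤ C * gauss t r) (hb' : ∀ r, 0 < r → G' r ≤ C' * gauss t r)
    {r : ℝ} (hr : 0 < r) :
    HasDerivAt (weyl G) (-(Real.sinh r * weyl G' r)) r := by
  have hx : 1 < Real.cosh r := Real.one_lt_cosh.2 hr.ne'
  have h := (hasDerivAt_integral_of_dominated_loc_of_deriv_le
    (μ := volume.restrict (Set.Ioi (0 : ℝ))) (F := fun x u => G (Real.arcosh (x + u ^ 2)))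
    (F' := fun x u => -G' (Real.arcosh (x + u ^ 2))) (x₀ := Real.cosh r) (s := Set.Ioi 1)
    (bound := fun u => |C'| * Real.exp t * (1 + u ^ 2)⁻¹) (Ioi_mem_nhds hx)
    ?_ (integrableOn_weyl ht hd h0 hb hx).2.2
    (integrableOn_weyl ht hd' h0' hb' hx).1.neg
    ?_ (integrable_inv_one_add_sq.integrableOn.const_mul _) ?_).2
  · have h2 := (h.comp r (Real.hasDerivAt_cosh r)).const_mul 2
    refine h2.congr_deriv ?_
    unfold weyl
    rw [integral_neg]
    ring
  · filter_upwards [Ioi_mem_nhds hx] with x hx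
    exact (integrableOn_weyl ht hd h0 hb hx).1
  · refine ae_of_all _ fun u x hx => ?_
    rw [norm_neg]
    exact (integrableOn_weyl ht hd' h0' hb' hx).2.1 u
  · refine ae_of_all _ fun u x hx => ?_
    have hx' : (1 : ℝ) < x := hx
    have h1 := hasDerivAt_comp_arcosh hd (x := x + u ^ 2) (by nlinarith)
    exact h1.comp_add_const x (u ^ 2)

/-! ### Comparison of successive `D1`-derivatives of the heat kernel -/

lemma arcosh_ge {r u : ℝ} (hr : 0 < r) : r ≤ Real.arcosh (Real.cosh r + u ^ 2) := by
  have h1 := Real.one_le_cosh r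
  conv_lhs => rw [← Real.arcosh_cosh hr.le]
  rw [Real.arcosh_le_arcosh (by positivity) (by positivity)]
  nlinarith [sq_nonneg u]

lemma weyl_nonneg {G : ℝ → ℝ} (h0 : ∀ r, 0 < r → 0 ≤ G r) {r : ℝ} (hr : 0 < r) :
    0 ≤ weyl G r :=
  mul_nonneg zero_le_two (setIntegral_nonneg measurableSet_Ioi fun _ _ =>
    h0 _ (hr.trans_le (arcosh_ge hr)))

/-- The upper bound survives the Weyl integral because the weight `wt t` is decreasing. -/
lemma weyl_upper {t C C₁ C₂ : ℝ} (ht : 0 < t) (hC : 0 ≤ C) {G G' G'' : ℝ → ℝ}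
    (hd : ∀ r, 0 < r → HasDerivAt G (-(Real.sinh r * G' r)) r)
    (hd' : ∀ r, 0 < r → HasDerivAt G' (-(Real.sinh r * G'' r)) r)
    (h0 : ∀ r, 0 < r → 0 ≤ G r) (h0' : ∀ r, 0 < r → 0 ≤ G' r)
    (hb : ∀ r, 0 < r → G r ≤ C₁ * gauss t r) (hb' : ∀ r, 0 < r → G' r ≤ C₂ * gauss t r)
    {r : ℝ} (hr : 0 < r) (hu : ∀ s, r ≤ s → G' s ≤ C * (wt t s * G s)) :
    weyl G' r ≤ C * (wt t r * weyl G r) := by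
  have hx : 1 < Real.cosh r := Real.one_lt_cosh.2 hr.ne'
  have e : C * (wt t r * weyl G r) = 2 * ∫ u in Set.Ioi (0 : ℝ),
      C * wt t r * G (Real.arcosh (Real.cosh r + u ^ 2)) := by
    rw [integral_const_mul]; unfold weyl; ring
  rw [e]
  unfold weyl
  refine mul_le_mul_of_nonneg_left ?_ zero_le_two
  refine setIntegral_mono_on (integrableOn_weyl ht hd' h0' hb' hx).2.2
    ((integrableOn_weyl ht hd h0 hb hx).2.2.const_mul _) measurableSet_Ioi fun u _ => ?_
  have hs := arcosh_ge (u := u) hr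
  refine (hu _ hs).trans ?_
  have hs0 := hr.trans_le hs
  rw [mul_assoc]
  refine mul_le_mul_of_nonneg_left (mul_le_mul_of_nonneg_right ?_ (h0 _ hs0)) hC
  rw [wt_eq_psiI hs0, wt_eq_psiI hr]
  refine div_le_div_of_nonneg_right (psiI_antitone hx.le ?_) (by positivity)
  rw [Real.cosh_le_cosh, abs_of_pos hr, abs_of_pos hs0]
  exact hs

/-- Doubling `u` costs a factor `1/4` in the tail `u² ≥ cosh r`, once `(1 + r)/t ≥ 64`: there
`arcosh` grows by at least `log 2`. -/
lemma tail_decay {t : ℝ} (ht : 0 < t) {G G' : ℝ → ℝ}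
    (hd : ∀ r, 0 < r → HasDerivAt G (-(Real.sinh r * G' r)) r)
    (h0 : ∀ r, 0 < r → 0 ≤ G r)
    (hl : ∀ r, 0 < r → wt t r * G r ≤ G' r) {r : ℝ} (hr : 0 < r) (hγ : 64 ≤ (1 + r) / t)
    {u : ℝ} (hu : Real.cosh r ≤ u ^ 2) :
    G (Real.arcosh (Real.cosh r + (2 * u) ^ 2)) ≤
      1 / 4 * G (Real.arcosh (Real.cosh r + u ^ 2)) := by
  have hx : 1 < Real.cosh r := Real.one_lt_cosh.2 hr.ne'
  have hrs := arcosh_ge (u := u) hr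
  have hc := Real.cosh_arcosh (x := Real.cosh r + u ^ 2) (by nlinarith)
  set s := Real.arcosh (Real.cosh r + u ^ 2)
  have hs0 : 0 < s := hr.trans_le hrs
  have hlog : 0.69 < Real.log 2 := by have := Real.log_two_gt_d9; linarith
  have hs' : s + Real.log 2 ≤ Real.arcosh (Real.cosh r + (2 * u) ^ 2) := by
    rw [← Real.arcosh_cosh (x := s + Real.log 2) (by linarith),
      Real.arcosh_le_arcosh (Real.cosh_pos _) (by positivity)]
    have h1 : Real.cosh (s + Real.log 2) ≤ 2 * Real.cosh s := by
      rw [Real.cosh_eq, Real.cosh_eq, neg_add, Real.exp_add, Real.exp_add,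
        Real.exp_neg (Real.log 2), Real.exp_log two_pos]
      have := Real.exp_pos (-s)
      linarith
    rw [hc] at h1
    nlinarith
  set s' := Real.arcosh (Real.cosh r + (2 * u) ^ 2)
  have h1 := gauss_decay ht hd hl hs0 (show s ≤ s' by linarith)
  refine h1.trans (mul_le_mul_of_nonneg_right ?_ (h0 s hs0))
  have h2 : (1 + r) / 4 ≤ s' ^ 2 - s ^ 2 := by nlinarith
  have h3 : -(s' ^ 2 - s ^ 2) / (4 * t) ≤ -4 := by
    rw [div_le_iff₀ (by positivity)]
    rw [le_div_iff₀ ht] at hγ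
    nlinarith
  refine (Real.exp_le_exp.2 h3).trans ?_
  rw [Real.exp_neg, one_div]
  apply inv_anti₀ (by norm_num)
  linarith [Real.add_one_le_exp (4 : ℝ)]

/-- The lower bound survives the Weyl integral: by `tail_decay` half of the mass of the integral
sits in the region `u² ≤ 4 cosh r`, where the weight is comparable to its value at `r`. -/
lemma weyl_lower {t C₁ C₂ : ℝ} (ht : 0 < t) {G G' G'' : ℝ → ℝ}
    (hd : ∀ r, 0 < r → HasDerivAt G (-(Real.sinh r * G' r)) r)
    (hd' : ∀ r, 0 < r → HasDerivAt G' (-(Real.sinh r * G'' r)) r)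
    (h0 : ∀ r, 0 < r → 0 ≤ G r) (h0' : ∀ r, 0 < r → 0 ≤ G' r)
    (hl : ∀ r, 0 < r → wt t r * G r ≤ G' r)
    (hb : ∀ r, 0 < r → G r ≤ C₁ * gauss t r) (hb' : ∀ r, 0 < r → G' r ≤ C₂ * gauss t r)
    {r : ℝ} (hr : 0 < r) (hγ : 64 ≤ (1 + r) / t) :
    1 / 10 * (wt t r * weyl G r) ≤ weyl G' r := by
  have hx : 1 < Real.cosh r := Real.one_lt_cosh.2 hr.ne'
  have hi := (integrableOn_weyl ht hd h0 hb hx).2.2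
  have hi' := (integrableOn_weyl ht hd' h0' hb' hx).2.2
  have hw := wt_pos ht hr
  set φ : ℝ → ℝ := fun u => G (Real.arcosh (Real.cosh r + u ^ 2)) with hφ
  set φ' : ℝ → ℝ := fun u => G' (Real.arcosh (Real.cosh r + u ^ 2)) with hφ'
  have hφ0 : ∀ u, 0 ≤ φ u := fun u => h0 _ (hr.trans_le (arcosh_ge hr))
  have hφ0' : ∀ u, 0 ≤ φ' u := fun u => h0' _ (hr.trans_le (arcosh_ge hr))
  have hA : 0 < √(Real.cosh r) := Real.sqrt_pos.2 (by linarith)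
  have hA2 : √(Real.cosh r) ^ 2 = Real.cosh r := Real.sq_sqrt (by linarith)
  set A := √(Real.cosh r)
  have tail : ∫ u in Set.Ioi (2 * A), φ u ≤ 1 / 2 * ∫ u in Set.Ioi 0, φ u := by
    rw [← integral_comp_mul_left_Ioi' φ A two_pos, smul_eq_mul]
    have hsub : Set.Ioi A ⊆ Set.Ioi 0 := Set.Ioi_subset_Ioi hA.le
    have h1 : ∫ u in Set.Ioi A, φ (2 * u) ≤ ∫ u in Set.Ioi A, 1 / 4 * φ u := by
      refine setIntegral_mono_on ?_ ((hi.mono_set hsub).const_mul _) measurableSet_Ioi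
        fun u hu => ?_
      · rw [integrableOn_Ioi_comp_mul_left_iff φ A two_pos]
        exact hi.mono_set (Set.Ioi_subset_Ioi (by positivity))
      · have hu' : A < u := hu
        exact tail_decay ht hd h0 hl hr hγ (by nlinarith)
    rw [integral_const_mul] at h1
    have h2 : ∫ u in Set.Ioi A, φ u ≤ ∫ u in Set.Ioi 0, φ u :=
      setIntegral_mono_set hi (ae_of_all _ hφ0) (LE.le.eventuallyLE hsub)
    linarith
  have split : ∫ u in Set.Ioi 0, φ u
      = (∫ u in Set.Ioc 0 (2 * A), φ u) + ∫ u in Set.Ioi (2 * A), φ u := by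
    rw [← setIntegral_union (Set.Ioc_disjoint_Ioi le_rfl) measurableSet_Ioi
      (hi.mono_set Set.Ioc_subset_Ioi_self) (hi.mono_set (Set.Ioi_subset_Ioi (by positivity))),
      Set.Ioc_union_Ioi_eq_Ioi (by positivity)]
  have main : ∫ u in Set.Ioc 0 (2 * A), wt t r / 5 * φ u ≤ ∫ u in Set.Ioc 0 (2 * A), φ' u := by
    refine setIntegral_mono_on ((hi.mono_set Set.Ioc_subset_Ioi_self).const_mul _)
      (hi'.mono_set Set.Ioc_subset_Ioi_self) measurableSet_Ioc fun u hu => ?_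
    have hs0 := hr.trans_le (arcosh_ge (u := u) hr)
    refine le_trans ?_ (hl _ hs0)
    refine mul_le_mul_of_nonneg_right ?_ (hφ0 u)
    rw [wt_eq_psiI hs0, wt_eq_psiI hr, Real.cosh_arcosh (by nlinarith), div_right_comm]
    refine div_le_div_of_nonneg_right (psiI_five hx.le (by nlinarith) ?_) (by positivity)
    nlinarith [hu.1, hu.2]
  rw [integral_const_mul] at main
  have fin : ∫ u in Set.Ioc 0 (2 * A), φ' u ≤ ∫ u in Set.Ioi 0, φ' u :=
    setIntegral_mono_set hi' (ae_of_all _ hφ0')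
      (LE.le.eventuallyLE Set.Ioc_subset_Ioi_self)
  have e : weyl G r = 2 * ∫ u in Set.Ioi 0, φ u := rfl
  have e' : weyl G' r = 2 * ∫ u in Set.Ioi 0, φ' u := rfl
  rw [e, e']
  nlinarith

/-- A family `H j t` of nonnegative functions on `(0,∞)`, formally the iterates `D1^j (H 0 t)`,
along which each application of `D1` multiplies by a quantity comparable to `wt t r`, uniformly in
the region `(1 + r)/t ≥ 64`. -/
def Ladder (H : ℕ → ℝ → ℝ → ℝ) : Prop :=
  (∀ j t r, 0 < t → 0 < r → HasDerivAt (H j t) (-(Real.sinh r * H (j + 1) t r)) r) ∧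
  (∀ j t r, 0 < t → 0 < r → 0 ≤ H j t r) ∧
  ∀ j, ∃ c C, 0 < c ∧ 0 < C ∧ ∀ t r, 0 < t → 0 < r → 64 ≤ (1 + r) / t →
    c * (wt t r * H j t r) ≤ H (j + 1) t r ∧ H (j + 1) t r ≤ C * (wt t r * H j t r)

lemma Ladder.const_mul {H : ℕ → ℝ → ℝ → ℝ} (hH : Ladder H) {A : ℝ → ℝ}
    (hA : ∀ t, 0 < t → 0 ≤ A t) : Ladder (fun j t r => A t * H j t r) := by
  obtain ⟨h1, h2, h3⟩ := hH
  refine ⟨fun j t r ht hr => ?_, fun j t r ht hr => mul_nonneg (hA t ht) (h2 j t r ht hr),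
    fun j => ?_⟩
  · exact ((h1 j t r ht hr).const_mul (A t)).congr_deriv (by ring)
  · obtain ⟨c, C, hc, hC, h⟩ := h3 j
    refine ⟨c, C, hc, hC, fun t r ht hr hγ => ?_⟩
    obtain ⟨a, b⟩ := h t r ht hr hγ
    have a' := mul_le_mul_of_nonneg_left a (hA t ht)
    have b' := mul_le_mul_of_nonneg_left b (hA t ht)
    constructor <;> linarith

lemma ladder_GG (a b : ℕ) : Ladder (GG a b) := by
  refine ⟨fun j => (GG_facts a b j).1, fun j => (GG_facts a b j).2.1, fun j => ?_⟩
  obtain ⟨-, -, hl, ⟨C, hC, hu⟩, -⟩ := GG_facts a b j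
  refine ⟨1, C, one_pos, hC, fun t r ht hr hγ => ⟨?_, hu t r ht hr (by linarith)⟩⟩
  rw [one_mul]
  exact hl t r ht hr

lemma ladder_weyl (a b : ℕ) : Ladder (fun j t => weyl (GG a b j t)) := by
  have hd := fun j => (GG_facts a b j).1
  have h0 := fun j => (GG_facts a b j).2.1
  have hl := fun j => (GG_facts a b j).2.2.1
  have hb := fun j => (GG_facts a b j).2.2.2.2
  refine ⟨fun j t r ht hr => ?_, fun j t r ht hr => weyl_nonneg (fun s => h0 j t s ht) hr,
    fun j => ?_⟩
  · obtain ⟨C, hC⟩ := hb j t ht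
    obtain ⟨C', hC'⟩ := hb (j + 1) t ht
    exact hasDerivAt_weyl ht (fun s => hd j t s ht) (fun s => hd (j + 1) t s ht)
      (fun s => h0 j t s ht) (fun s => h0 (j + 1) t s ht) hC hC' hr
  · obtain ⟨C, hC, hu⟩ := (GG_facts a b j).2.2.2.1
    refine ⟨1 / 10, C, by norm_num, hC, fun t r ht hr hγ => ?_⟩
    obtain ⟨C₁, h₁⟩ := hb j t ht
    obtain ⟨C₂, h₂⟩ := hb (j + 1) t ht
    refine ⟨weyl_lower ht (fun s => hd j t s ht) (fun s => hd (j + 1) t s ht)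
      (fun s => h0 j t s ht) (fun s => h0 (j + 1) t s ht) (fun s => hl j t s ht) h₁ h₂ hr hγ,
      weyl_upper ht hC.le (fun s => hd j t s ht) (fun s => hd (j + 1) t s ht)
      (fun s => h0 j t s ht) (fun s => h0 (j + 1) t s ht) h₁ h₂ hr fun s hs => ?_⟩
    refine hu t s ht (hr.trans_le hs) ?_
    have : (1 + r) / t ≤ (1 + s) / t := by gcongr
    linarith

/-- On `(0,∞)` the heat kernel is the bottom of a ladder. -/
lemma exists_ladder (μ ν : ℕ) :
    ∃ H, Ladder H ∧ ∀ t r, 0 < t → 0 < r → heat μ ν t r = H 0 t r := by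
  have hcc : 0 ≤ cc μ ν 0 := by unfold cc; positivity
  by_cases h : Even ν
  · refine ⟨_, (ladder_GG (ν / 2) (μ / 2)).const_mul
      (A := fun t => cc μ ν 0 * t ^ (-(1 : ℝ) / 2) * Real.exp (-(Qc μ ν) ^ 2 * t / 4))
      (fun t ht => by positivity), fun t r _ _ => ?_⟩
    simp only [heat, if_pos h, GG, add_zero]
  · refine ⟨_, (ladder_weyl ((ν + 1) / 2) (μ / 2)).const_mul
      (A := fun t => cc μ ν 0 * Real.pi ^ (-(1 : ℝ) / 2) * t ^ (-(1 : ℝ) / 2) *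
        Real.exp (-(Qc μ ν) ^ 2 * t / 4))
      (fun t ht => by positivity), fun t r _ hr => ?_⟩
    simp only [heat, if_neg h]
    rw [weyl_eq _ hr]
    rfl

/-! ### Expansion of the radial derivatives and the dominant term -/

/-- The function `(-1)^{a+b} sinh^a r cosh^b r H_{a+b}(t, r)` attached to the pair `(a, b)`. -/
def term (H : ℕ → ℝ → ℝ → ℝ) (t r : ℝ) (p : ℕ × ℕ) : ℝ :=
  (-1) ^ (p.1 + p.2) * pab p.1 p.2 r * H (p.1 + p.2) t r

/-- The pairs, repeated according to multiplicity, produced by differentiating `term _ _ _ p`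
with the product rule. -/
def stepL (p : ℕ × ℕ) : List (ℕ × ℕ) :=
  List.replicate p.1 (p.1 - 1, p.2 + 1) ++ (List.replicate p.2 (p.1 + 1, p.2 - 1) ++
    [(p.1 + 1, p.2)])

/-- The pairs, with multiplicity, occurring in the expansion of the `k`-th derivative. -/
def expo : ℕ → List (ℕ × ℕ)
  | 0 => [(0, 0)]
  | k + 1 => (expo k).flatMap stepL

lemma Ladder.abs_term {H : ℕ → ℝ → ℝ → ℝ} (hH : Ladder H) {t r : ℝ} (ht : 0 < t) (hr : 0 < r)
    (p : ℕ × ℕ) : |term H t r p| = pab p.1 p.2 r * H (p.1 + p.2) t r := by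
  have h := Real.sinh_pos_iff.2 hr
  have h' := Real.cosh_pos r
  have h0 := hH.2.1 (p.1 + p.2) t r ht hr
  unfold term pab
  rw [abs_mul, abs_mul, abs_pow, abs_neg, abs_one, one_pow, one_mul, abs_of_nonneg h0,
    abs_of_pos (by positivity)]

lemma Ladder.hasDerivAt_term {H : ℕ → ℝ → ℝ → ℝ} (hH : Ladder H) {t r : ℝ} (ht : 0 < t)
    (hr : 0 < r) (p : ℕ × ℕ) :
    HasDerivAt (fun r => term H t r p) ((stepL p).map (term H t r)).sum r := by
  obtain ⟨a, b⟩ := p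
  have h := ((((Real.hasDerivAt_sinh r).pow a).mul ((Real.hasDerivAt_cosh r).pow b)).const_mul
    ((-1 : ℝ) ^ (a + b))).mul (hH.1 (a + b) t r ht hr)
  refine HasDerivAt.congr_deriv (f := fun r => term H t r (a, b)) h ?_
  have e1 : (a : ℝ) * term H t r (a - 1, b + 1) =
      (a : ℝ) * ((-1) ^ (a + b) * (Real.sinh r ^ (a - 1) * Real.cosh r ^ (b + 1)) *
        H (a + b) t r) := by
    rcases a with _ | a
    · simp
    · have : a + (b + 1) = a + 1 + b := by ring
      simp only [term, pab, Nat.add_sub_cancel, this]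
  have e2 : (b : ℝ) * term H t r (a + 1, b - 1) =
      (b : ℝ) * ((-1) ^ (a + b) * (Real.sinh r ^ (a + 1) * Real.cosh r ^ (b - 1)) *
        H (a + b) t r) := by
    rcases b with _ | b
    · simp
    · have : a + 1 + b = a + (b + 1) := by ring
      simp only [term, pab, Nat.add_sub_cancel, this]
  have e3 : term H t r (a + 1, b) = -((-1) ^ (a + b) * (Real.sinh r ^ (a + 1) * Real.cosh r ^ b) *
      H (a + b + 1) t r) := by
    have : a + 1 + b = a + b + 1 := by ring
    simp only [term, pab, this]
    ring
  simp only [stepL, List.map_append, List.sum_append, List.map_replicate, List.sum_replicate,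
    nsmul_eq_mul, List.map_cons, List.map_nil, List.sum_cons, List.sum_nil, add_zero, e1, e2, e3]
  simp only [Pi.mul_apply, Pi.pow_apply]
  ring

lemma Ladder.hasDerivAt_sum {H : ℕ → ℝ → ℝ → ℝ} (hH : Ladder H) {t r : ℝ} (ht : 0 < t)
    (hr : 0 < r) (l : List (ℕ × ℕ)) :
    HasDerivAt (fun r => (l.map (term H t r)).sum) ((l.flatMap stepL).map (term H t r)).sum r := by
  induction l with
  | nil => simpa using hasDerivAt_const r (0 : ℝ)
  | cons p l ih =>
    simp only [List.map_cons, List.sum_cons, List.flatMap_cons, List.map_append, List.sum_append]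
    exact (hH.hasDerivAt_term ht hr p).add ih

/-- The `k`-th radial derivative of the bottom of a ladder, expanded over the list `expo k`. -/
lemma Ladder.iterate_deriv {H : ℕ → ℝ → ℝ → ℝ} (hH : Ladder H) {t : ℝ} (ht : 0 < t) {f : ℝ → ℝ}
    (hf : ∀ r, 0 < r → f r = H 0 t r) (k : ℕ) :
    ∀ r, 0 < r → deriv^[k] f r = ((expo k).map (term H t r)).sum := by
  induction k with
  | zero => intro r hr; simp [expo, term, pab, hf r hr]
  | succ k ih =>
    intro r hr
    rw [Function.iterate_succ_apply']
    have : deriv^[k] f =ᶠ[𝓝 r] fun r => ((expo k).map (term H t r)).sum := by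
      filter_upwards [lt_mem_nhds hr] with s hs using ih s hs
    rw [this.deriv_eq, (hH.hasDerivAt_sum ht hr _).deriv]
    rfl

lemma mem_stepL {p q : ℕ × ℕ} : q ∈ stepL p ↔ (p.1 ≠ 0 ∧ q = (p.1 - 1, p.2 + 1)) ∨
    (p.2 ≠ 0 ∧ q = (p.1 + 1, p.2 - 1)) ∨ q = (p.1 + 1, p.2) := by
  simp [stepL, List.mem_replicate]

/-- Every pair `(a, b)` in the `k`-th expansion satisfies `a + 2b ≤ k` and `a ≡ k mod 2`. -/
lemma expo_inv (k : ℕ) : ∀ p ∈ expo k, ∃ e, k = p.1 + 2 * p.2 + 2 * e := by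
  induction k with
  | zero => intro p hp; simp only [expo, List.mem_singleton] at hp; exact ⟨0, by simp [hp]⟩
  | succ k ih =>
    intro p hp
    simp only [expo, List.mem_flatMap] at hp
    obtain ⟨q, hq, hp⟩ := hp
    obtain ⟨e, he⟩ := ih q hq
    rcases mem_stepL.1 hp with ⟨h, rfl⟩ | ⟨h, rfl⟩ | rfl
    · exact ⟨e, by simp only; omega⟩
    · exact ⟨e + 1, by simp only; omega⟩
    · exact ⟨e, by simp only; omega⟩

lemma expo_top (k : ℕ) : (k, 0) ∈ expo k := by
  induction k with
  | zero => simp [expo]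
  | succ k ih =>
    simp only [expo, List.mem_flatMap]
    exact ⟨_, ih, mem_stepL.2 (by simp)⟩

/-- The pairs with smallest first entry and largest second entry occur in the expansion; both
parities are needed together in the induction, since `(0, l + 1)` arises from `(1, l)`. -/
lemma expo_bot (l : ℕ) : (0, l) ∈ expo (2 * l) ∧ (1, l) ∈ expo (2 * l + 1) := by
  have key : ∀ l, (0, l) ∈ expo (2 * l) → (1, l) ∈ expo (2 * l + 1) := fun l h => by
    simp only [expo, List.mem_flatMap]
    exact ⟨_, h, mem_stepL.2 (by simp)⟩
  induction l with
  | zero => exact ⟨by simp [expo], key 0 (by simp [expo])⟩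
  | succ l ih =>
    have : (0, l + 1) ∈ expo (2 * (l + 1)) := by
      rw [show 2 * (l + 1) = 2 * l + 1 + 1 by ring, expo, List.mem_flatMap]
      exact ⟨_, ih.2, mem_stepL.2 (by simp)⟩
    exact ⟨this, key _ this⟩

lemma expo_lead (k : ℕ) : (k % 2, k / 2) ∈ expo k := by
  rcases Nat.mod_two_eq_zero_or_one k with h | h
  · have := (expo_bot (k / 2)).1
    rwa [h, ← show 2 * (k / 2) = k by omega, show 2 * (k / 2) / 2 = k / 2 by omega]
  · have := (expo_bot (k / 2)).2
    rw [show 2 * (k / 2) + 1 = k by omega] at this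
    rwa [h]

lemma sum_ge_aux {β : Type*} (f : β → ℝ) {e : ℝ} (S : List β)
    (h : ∀ p ∈ S, -e ≤ f p) : -(S.length * e) ≤ (S.map f).sum := by
  induction S with
  | nil => simp
  | cons p S ih =>
    simp only [List.map_cons, List.sum_cons, List.length_cons]
    push_cast
    have := ih fun q hq => h q (List.mem_cons_of_mem _ hq)
    have := h p List.mem_cons_self
    linarith

lemma sum_ge {β : Type*} (f : β → ℝ) {e : ℝ} (he : 0 ≤ e) (S : List β) {q : β} (hq : q ∈ S)
    (h : ∀ p ∈ S, -e ≤ f p) : f q - S.length * e ≤ (S.map f).sum := by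
  induction S with
  | nil => simp at hq
  | cons p S ih =>
    simp only [List.map_cons, List.sum_cons, List.length_cons]
    push_cast
    have h' : ∀ q ∈ S, -e ≤ f q := fun q hq => h q (List.mem_cons_of_mem _ hq)
    have hp := h p List.mem_cons_self
    rcases List.mem_cons.1 hq with rfl | hq
    · have := sum_ge_aux f S h'
      linarith
    · have := ih hq h'
      linarith

/-- A sum in which one summand dominates all the different ones is at least half of it; repeated
copies of the dominant summand carry the same sign and cannot cancel. -/
lemma abs_sum_ge {β : Type*} (f : β → ℝ) (S : List β) {q : β} (hq : q ∈ S)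
    (h : ∀ p ∈ S, p = q ∨ 2 * S.length * |f p| ≤ |f q|) : |f q| / 2 ≤ |(S.map f).sum| := by
  have hS : (0 : ℝ) < S.length := by exact_mod_cast List.length_pos_of_mem hq
  set e := |f q| / (2 * S.length) with he
  have he0 : 0 ≤ e := by positivity
  have hle : S.length * e = |f q| / 2 := by rw [he]; field_simp
  have hp : ∀ p ∈ S, p = q ∨ |f p| ≤ e := fun p hp => (h p hp).imp_right fun h => by
    rw [he, le_div_iff₀ (by positivity)]; linarith
  rcases le_total 0 (f q) with h0 | h0
  · have := sum_ge f he0 S hq fun p hpS => by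
      rcases hp p hpS with rfl | h
      · linarith
      · linarith [neg_abs_le (f p)]
    rw [hle] at this
    have h1 := le_abs_self (S.map f).sum
    rw [abs_of_nonneg h0] at this ⊢
    linarith
  · have := sum_ge (fun p => -f p) he0 S hq fun p hpS => by
      rcases hp p hpS with rfl | h
      · linarith
      · linarith [le_abs_self (f p)]
    rw [hle] at this
    have e2 : (S.map fun p => -f p).sum = -(S.map f).sum := by
      clear * -
      induction S with
      | nil => simp
      | cons p S ih => simp only [List.map_cons, List.sum_cons, ih]; ring
    have h1 := neg_abs_le (S.map f).sum
    rw [e2] at this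
    rw [abs_of_nonpos h0] at this ⊢
    linarith

/-- Iterated comparison along a ladder: `H_j ≍ (wt t r)^j H_0`, with the same constants for all
`j ≤ k`. -/
lemma Ladder.iterate_bounds {H : ℕ → ℝ → ℝ → ℝ} (hH : Ladder H) (k : ℕ) :
    ∃ c C, 0 < c ∧ 0 < C ∧ ∀ j ≤ k, ∀ t r, 0 < t → 0 < r → 64 ≤ (1 + r) / t →
      c * (wt t r ^ j * H 0 t r) ≤ H j t r ∧ H j t r ≤ C * (wt t r ^ j * H 0 t r) := by
  induction k with
  | zero =>
    refine ⟨1, 1, one_pos, one_pos, fun j hj t r _ _ _ => ?_⟩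
    obtain rfl : j = 0 := by omega
    simp
  | succ k ih =>
    obtain ⟨c, C, hc, hC, h⟩ := ih
    obtain ⟨c', C', hc', hC', h'⟩ := hH.2.2 k
    refine ⟨min c (c' * c), max C (C' * C), by positivity, by positivity,
      fun j hj t r ht hr hγ => ?_⟩
    have hw := wt_pos ht hr
    have h0 := hH.2.1 0 t r ht hr
    have hX : 0 ≤ wt t r ^ j * H 0 t r := by positivity
    rcases Nat.lt_or_ge k j with hlt | hle
    · obtain rfl : j = k + 1 := by omega
      obtain ⟨h1, h2⟩ := h k le_rfl t r ht hr hγ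
      obtain ⟨h3, h4⟩ := h' t r ht hr hγ
      constructor
      · calc _ ≤ (c' * c) * (wt t r ^ (k + 1) * H 0 t r) := by gcongr; exact min_le_right _ _
          _ = c' * (wt t r * (c * (wt t r ^ k * H 0 t r))) := by ring
          _ ≤ c' * (wt t r * H k t r) := by gcongr
          _ ≤ _ := h3
      · calc _ ≤ C' * (wt t r * H k t r) := h4
          _ ≤ C' * (wt t r * (C * (wt t r ^ k * H 0 t r))) := by gcongr
          _ = (C' * C) * (wt t r ^ (k + 1) * H 0 t r) := by ring
          _ ≤ _ := by gcongr; exact le_max_right _ _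
    · obtain ⟨h1, h2⟩ := h j hle t r ht hr hγ
      constructor
      · refine le_trans ?_ h1; gcongr; exact min_le_left _ _
      · refine h2.trans ?_; gcongr; exact le_max_left _ _

/-- For `r > 1` the pair `(k, 0)` dominates: its term has size `(r/2t)^k H_0`, and every other
pair has `a + b < k`. -/
lemma Ladder.far {H : ℕ → ℝ → ℝ → ℝ} (hH : Ladder H) (k : ℕ) :
    ∃ γ c : ℝ, 64 ≤ γ ∧ 0 < c ∧ ∀ r t, 0 < t → 1 < r → γ ≤ (1 + r) / t →
      c * Psi k r t * H 0 t r ≤ |((expo k).map (term H t r)).sum| := by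
  obtain ⟨c, C, hc, hC, hb⟩ := hH.iterate_bounds k
  set N := ((expo k).length : ℝ)
  set K : ℝ := 2 * N * (C * 2 ^ k) / c with hK
  have hN : 0 ≤ N := Nat.cast_nonneg _
  have hK0 : 0 ≤ K := by positivity
  refine ⟨64 + 4 * K, c / 2 / 6 ^ k, by linarith, by positivity, fun r t ht hr hγ => ?_⟩
  have hr0 : 0 < r := by linarith
  have hγ' : 64 ≤ (1 + r) / t := by linarith
  have hs := Real.sinh_pos_iff.2 hr0
  have hch := Real.cosh_pos r
  have h0 := hH.2.1 0 t r ht hr0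
  have hw := wt_pos ht hr0
  set X := r / (2 * t) with hX
  have hXw : Real.sinh r * wt t r = X := by rw [hX, wt]; field_simp
  have hXK : 16 + K ≤ X := by
    have : (1 + r) / t ≤ 4 * X := by
      rw [hX, div_le_iff₀ ht]; field_simp; linarith
    linarith
  have hX1 : 1 ≤ X := by linarith
  have hcs : Real.cosh r ≤ 2 * Real.sinh r := by
    have h1 := Real.cosh_sub_sinh r
    have h2 : Real.exp (-r) ≤ 1 := Real.exp_le_one_iff.2 (by linarith)
    have h3 := Real.self_le_sinh_iff.2 hr0.le
    linarith
  have hlead : c * (X ^ k * H 0 t r) ≤ |term H t r (k, 0)| := by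
    rw [hH.abs_term ht hr0]
    simp only [add_zero, pab, pow_zero, mul_one]
    calc _ = Real.sinh r ^ k * (c * (wt t r ^ k * H 0 t r)) := by rw [← hXw]; ring
      _ ≤ _ := by gcongr; exact (hb k le_rfl t r ht hr0 hγ').1
  have hsum := abs_sum_ge (term H t r) (expo k) (expo_top k) fun p hp => by
    obtain ⟨e, he⟩ := expo_inv k p hp
    by_cases hpk : p = (k, 0)
    · exact Or.inl hpk
    right
    have hlt : p.1 + p.2 + 1 ≤ k := by
      by_contra hcon
      exact hpk (Prod.ext (by simp only; omega) (by simp only; omega))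
    refine le_trans ?_ hlead
    rw [hH.abs_term ht hr0]
    have hu := (hb (p.1 + p.2) (by omega) t r ht hr0 hγ').2
    have hj := hH.2.1 (p.1 + p.2) t r ht hr0
    have hup : pab p.1 p.2 r * H (p.1 + p.2) t r ≤ C * 2 ^ k * (X ^ (p.1 + p.2) * H 0 t r) := by
      unfold pab
      calc _ ≤ (Real.sinh r ^ p.1 * (2 * Real.sinh r) ^ p.2) *
            (C * (wt t r ^ (p.1 + p.2) * H 0 t r)) := by gcongr
        _ = C * 2 ^ p.2 * (X ^ (p.1 + p.2) * H 0 t r) := by rw [← hXw]; ring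
        _ ≤ _ := by gcongr <;> first | omega | norm_num
    calc 2 * N * (pab p.1 p.2 r * H (p.1 + p.2) t r)
        ≤ 2 * N * (C * 2 ^ k * (X ^ (p.1 + p.2) * H 0 t r)) := by gcongr
      _ = c * (K * X ^ (p.1 + p.2) * H 0 t r) := by rw [hK]; field_simp
      _ ≤ c * (X * X ^ (p.1 + p.2) * H 0 t r) := by gcongr; linarith
      _ = c * (X ^ (p.1 + p.2 + 1) * H 0 t r) := by ring
      _ ≤ _ := by gcongr
  have hPsi : Psi k r t ≤ (6 * X) ^ k := by
    rw [Psi, if_pos (Or.inl hr)]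
    have h2X : r / t = 2 * X := by rw [hX]; field_simp
    have h1 : 1 / Real.sqrt t ≤ 2 * X := by
      rw [← Real.sqrt_one, ← Real.sqrt_div zero_le_one]
      refine Real.sqrt_le_iff.2 ⟨by linarith, ?_⟩
      have : 1 / t ≤ 2 * X := by rw [← h2X]; gcongr
      nlinarith
    gcongr
    rw [h2X]; linarith
  calc c / 2 / 6 ^ k * Psi k r t * H 0 t r ≤ c / 2 / 6 ^ k * (6 * X) ^ k * H 0 t r := by gcongr
    _ = c * (X ^ k * H 0 t r) / 2 := by rw [mul_pow]; field_simp
    _ ≤ |term H t r (k, 0)| / 2 := by gcongr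
    _ ≤ _ := hsum

/-- For `r ≤ 1` with `t` and `r²/t` small, the pair `(k mod 2, ⌊k/2⌋)` dominates: passing to
another pair of the expansion costs a factor `(r²/t)^i t^e` with `i + e ≥ 1`. -/
lemma Ladder.near {H : ℕ → ℝ → ℝ → ℝ} (hH : Ladder H) (k : ℕ) :
    ∃ δ c : ℝ, 0 < δ ∧ δ ≤ 1 ∧ 0 < c ∧ ∀ r t, 0 < t → 0 < r → r ≤ 1 → 64 ≤ (1 + r) / t → t ≤ δ →
      r ^ 2 / t ≤ δ → c * Psi k r t * H 0 t r ≤ |((expo k).map (term H t r)).sum| := by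
  obtain ⟨c, C, hc, hC, hb⟩ := hH.iterate_bounds k
  have hN : (0 : ℝ) < (expo k).length := by
    exact_mod_cast List.length_pos_of_mem (expo_top k)
  set N := ((expo k).length : ℝ)
  set l := k / 2 with hl
  set ε := k % 2 with hε
  have hkl : k = 2 * l + ε := by omega
  refine ⟨min 1 (c / 4 ^ k / (2 * N * (C * 2 ^ k))), c / 4 ^ k / 2 / (2 * 9 ^ l), by positivity,
    min_le_left _ _, by positivity, fun r t ht hr hr1 hγ htδ hyδ => ?_⟩
  set δ := min 1 (c / 4 ^ k / (2 * N * (C * 2 ^ k)))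
  have hδ1 : δ ≤ 1 := min_le_left _ _
  have hδ : 2 * N * (C * 2 ^ k) * δ ≤ c / 4 ^ k := by
    rw [← le_div_iff₀' (by positivity)]; exact min_le_right _ _
  have hs := Real.sinh_pos_iff.2 hr
  have h0 := hH.2.1 0 t r ht hr
  have hw := wt_pos ht hr
  have hc1 := Real.one_le_cosh r
  have hc2 : Real.cosh r ≤ 2 := by
    have h1 := Real.exp_one_lt_d9
    have h2 : Real.exp r ≤ Real.exp 1 := Real.exp_le_exp.2 hr1
    have h3 : Real.exp (-r) ≤ 1 := Real.exp_le_one_iff.2 (by linarith)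
    rw [Real.cosh_eq]; linarith
  have hs1 := Real.self_le_sinh_iff.2 hr.le
  have hs2 : Real.sinh r ≤ 2 * r := (sinh_le_mul_cosh hr).trans (by nlinarith)
  have hw1 : 1 / (4 * t) ≤ wt t r := by
    rw [wt, div_le_div_iff₀ (by positivity) (by positivity)]; nlinarith
  have hw2 : wt t r ≤ 1 / t := by
    rw [wt, div_le_div_iff₀ (by positivity) ht]; nlinarith
  set M := r ^ ε / t ^ (ε + l) with hM
  have hlead : c / 4 ^ k * (M * H 0 t r) ≤ |term H t r (ε, l)| := by
    rw [hH.abs_term ht hr]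
    simp only [pab]
    have h4 : c / 4 ^ k ≤ c / 4 ^ (ε + l) := by
      gcongr
      · norm_num
      · omega
    calc c / 4 ^ k * (M * H 0 t r) ≤ c / 4 ^ (ε + l) * (M * H 0 t r) := by gcongr
      _ = (r ^ ε * 1 ^ l) * (c * ((1 / (4 * t)) ^ (ε + l) * H 0 t r)) := by
        simp only [hM, div_pow, mul_pow, one_pow]; field_simp
      _ ≤ (Real.sinh r ^ ε * Real.cosh r ^ l) * (c * (wt t r ^ (ε + l) * H 0 t r)) := by gcongr
      _ ≤ _ := by gcongr; exact (hb _ (by omega) t r ht hr hγ).1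
  have hsum := abs_sum_ge (term H t r) (expo k) (expo_lead k) fun p hp => by
    obtain ⟨e, he⟩ := expo_inv k p hp
    by_cases hpk : p = (k % 2, k / 2)
    · exact Or.inl hpk
    right
    refine le_trans ?_ hlead
    rw [hH.abs_term ht hr]
    obtain ⟨a, b⟩ := p
    obtain ⟨i, rfl⟩ : ∃ i, a = ε + 2 * i := ⟨a / 2, by simp only at he; omega⟩
    simp only at he hpk ⊢
    have hli : l = i + b + e := by omega
    have hie : i + e ≠ 0 := fun h => hpk (Prod.ext (by simp only; omega) (by simp only; omega))
    have hu := (hb (ε + 2 * i + b) (by omega) t r ht hr hγ).2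
    have hj := hH.2.1 (ε + 2 * i + b) t r ht hr
    have hup : pab (ε + 2 * i) b r * H (ε + 2 * i + b) t r ≤ C * 2 ^ k * (δ * M * H 0 t r) := by
      unfold pab
      have hsmall : (r ^ 2 / t) ^ i * t ^ e ≤ δ := by
        calc (r ^ 2 / t) ^ i * t ^ e ≤ δ ^ i * δ ^ e := by gcongr
          _ = δ ^ (i + e) := by ring
          _ ≤ δ := pow_le_of_le_one (by positivity) hδ1 hie
      calc _ ≤ ((2 * r) ^ (ε + 2 * i) * 2 ^ b) *
            (C * ((1 / t) ^ (ε + 2 * i + b) * H 0 t r)) := by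
              refine mul_le_mul (by gcongr) (hu.trans (by gcongr)) hj (by positivity)
        _ = C * 2 ^ (ε + 2 * i + b) * (((r ^ 2 / t) ^ i * t ^ e) * M * H 0 t r) := by
          simp only [hM, hli, div_pow, one_pow, mul_pow]; field_simp; ring
        _ ≤ _ := by gcongr <;> first | omega | norm_num
    calc 2 * N * (pab (ε + 2 * i) b r * H (ε + 2 * i + b) t r)
        ≤ 2 * N * (C * 2 ^ k * (δ * M * H 0 t r)) := by gcongr
      _ = (2 * N * (C * 2 ^ k) * δ) * (M * H 0 t r) := by ring
      _ ≤ _ := by gcongr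
  have hPsi : Psi k r t ≤ 2 * 9 ^ l * M := by
    have ht1 : t ≤ 1 := htδ.trans hδ1
    have hq := Real.sqrt_pos.2 ht
    have hqq := Real.sq_sqrt ht.le
    have hq1 : Real.sqrt t ≤ 1 := Real.sqrt_le_one.2 ht1
    have hrq : r ≤ Real.sqrt t := by
      refine Real.le_sqrt_of_sq_le ?_
      have := (div_le_one ht).1 (hyδ.trans hδ1)
      exact this
    have hB : 1 + 1 / Real.sqrt t + r / t ≤ 3 / Real.sqrt t := by
      have h1 : 1 ≤ 1 / Real.sqrt t := (one_le_div hq).2 hq1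
      have h2 : r / t ≤ 1 / Real.sqrt t := by
        rw [div_le_div_iff₀ ht hq]; nlinarith
      have : 3 / Real.sqrt t = 3 * (1 / Real.sqrt t) := by ring
      linarith
    have hB2 : (1 + 1 / Real.sqrt t + r / t) ^ (2 * l) ≤ 9 ^ l / t ^ l := by
      calc _ ≤ (3 / Real.sqrt t) ^ (2 * l) := by gcongr
        _ = _ := by rw [pow_mul, div_pow, hqq, div_pow]; norm_num
    have hr1' : ¬ 1 < r := not_lt.2 hr1
    rcases Nat.mod_two_eq_zero_or_one k with h | h
    · have hε0 : ε = 0 := h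
      rw [Psi, if_pos (Or.inr (Nat.even_iff.2 h)), hM, hε0, show k = 2 * l by omega]
      refine hB2.trans ?_
      have : 0 < (9 : ℝ) ^ l / t ^ l := by positivity
      have e : 2 * 9 ^ l * (r ^ 0 / t ^ (0 + l)) = 2 * ((9 : ℝ) ^ l / t ^ l) := by
        rw [zero_add]; ring
      linarith
    · have hε1 : ε = 1 := h
      rw [Psi, if_neg (not_or.2 ⟨hr1', by rw [Nat.even_iff]; omega⟩), hM, hε1,
        show k - 1 = 2 * l by omega]
      have h1 : 1 + 1 / t ≤ 2 / t := by
        have : 1 ≤ 1 / t := (one_le_div ht).2 ht1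
        have e : 2 / t = 2 * (1 / t) := by ring
        linarith
      calc _ ≤ r * (9 ^ l / t ^ l) * (2 / t) := by gcongr
        _ = _ := by field_simp; ring
  calc c / 4 ^ k / 2 / (2 * 9 ^ l) * Psi k r t * H 0 t r
      ≤ c / 4 ^ k / 2 / (2 * 9 ^ l) * (2 * 9 ^ l * M) * H 0 t r := by gcongr
    _ = c / 4 ^ k * (M * H 0 t r) / 2 := by field_simp
    _ ≤ |term H t r (ε, l)| / 2 := by gcongr
    _ ≤ _ := hsum

/-- If `r^α (1 + (1+r)/t) < 1` with `α < 2`, then `r² / t ≤ t^{2/α-1}`, so `r²/t` is small as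
soon as `t` is. -/
lemma sq_div_small {α δ : ℝ} (hα1 : 1 ≤ α) (hα2 : α < 2) (hδ : 0 < δ) :
    ∃ τ, 0 < τ ∧ τ ≤ δ ∧ ∀ r t, 0 < r → 0 < t → t ≤ τ → r ^ α * (1 + (1 + r) / t) < 1 →
      r ^ 2 / t ≤ δ := by
  have hα0 : 0 < α := by linarith
  have hβ : 0 < 2 / α - 1 := by
    have : 1 < 2 / α := (one_lt_div hα0).2 hα2
    linarith
  refine ⟨min δ (δ ^ (2 / α - 1)⁻¹), by positivity, min_le_left _ _,
    fun r t hr ht htτ h => ?_⟩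
  have hra : r ^ α ≤ t := by
    have hp : 0 < r ^ α := by positivity
    have h1 : r ^ α * (1 / t) ≤ r ^ α * (1 + (1 + r) / t) := by
      gcongr
      have : 0 < r / t := by positivity
      rw [add_div]; linarith
    have : r ^ α / t < 1 := by rw [div_eq_mul_one_div]; linarith
    exact ((div_lt_one ht).1 this).le
  have hr2 : r ^ 2 ≤ t ^ (2 / α) := by
    calc r ^ 2 = (r ^ α) ^ (2 / α) := by
          rw [← Real.rpow_mul hr.le, mul_div_cancel₀ _ hα0.ne', Real.rpow_two]
      _ ≤ _ := Real.rpow_le_rpow (by positivity) hra (by positivity)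
  calc r ^ 2 / t ≤ t ^ (2 / α) / t := by gcongr
    _ = t ^ (2 / α - 1) := by rw [Real.rpow_sub ht, Real.rpow_one]
    _ ≤ (δ ^ (2 / α - 1)⁻¹) ^ (2 / α - 1) :=
      Real.rpow_le_rpow ht.le (htτ.trans (min_le_right _ _)) hβ.le
    _ = δ := Real.rpow_inv_rpow hδ.le hβ.ne'

theorem radial_derivative_lower_bound (μ ν : ℕ) (hμ : Even μ) (hν : 1 ≤ ν)
    (k : ℕ) (α : ℝ) (hα1 : 1 ≤ α) (hα2 : α < 2) :
    ∃ γ : ℝ, 0 < γ ∧ ∃ c : ℝ, 0 < c ∧ ∀ r t : ℝ, 0 < r → 0 < t → γ ≤ (1 + r) / t →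
      (1 < r ∨ r ^ α * (1 + (1 + r) / t) < 1) →
      c * Psi k r t * heat μ ν t r ≤ |deriv^[k] (heat μ ν t) r| := by
  obtain ⟨H, hH, hheat⟩ := exists_ladder μ ν
  obtain ⟨γ, c, hγ, hc, hfar⟩ := hH.far k
  obtain ⟨δ, c', hδ, hδ1, hc', hnear⟩ := hH.near k
  obtain ⟨τ, hτ, hτδ, hsmall⟩ := sq_div_small hα1 hα2 hδ
  refine ⟨max γ (2 / τ), by positivity, min c c', by positivity, fun r t hr ht hγt h => ?_⟩
  rw [hH.iterate_deriv ht (fun s => hheat t s ht) k r hr, hheat t r ht hr]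
  have hγ' : γ ≤ (1 + r) / t := (le_max_left _ _).trans hγt
  have h0 := hH.2.1 0 t r ht hr
  have hPsi : 0 ≤ Psi k r t := by unfold Psi; split_ifs <;> positivity
  rcases lt_or_ge 1 r with h1 | h1
  · refine le_trans ?_ (hfar r t ht h1 hγ')
    gcongr
    exact min_le_left _ _
  · have htτ : t ≤ τ := by
      have h2 : 2 / τ ≤ 2 / t :=
        (le_max_right _ _).trans (hγt.trans (by gcongr; linarith))
      rw [div_le_div_iff₀ hτ ht] at h2
      linarith
    have h' := h.resolve_left (not_lt.2 h1)
    refine le_trans ?_ (hnear r t ht hr h1 (hγ.trans hγ') (htτ.trans hτδ)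
      (hsmall r t hr ht htτ h'))
    gcongr
    exact min_le_right _ _

end DR
end
end

section
/- There exists a constant C ≥ 1 such that for every (x,z,a) ∈ ℝ^μ × ℝ^ν × (0,∞) with r(x,z,a) ≤ 1 one has C^{-1} (|a−1| + |x| + |z|) ≤ r(x,z,a) ≤ C (|a−1| + |x| + |z|). -/
/-!
Since `cosh² = 1 + sinh²`, clearing the denominator `4a` in the defining relation of `r` gives

  `4 a sinh²(r/2) = (1 - a)² + (1 + a)|x|²/2 + |x|⁴/16 + |z|²`   (`four_mul_sinh_sq`).

For `0 ≤ r ≤ 1` one has `r/2 ≤ sinh (r/2) ≤ r`. The relation then gives `(1 - a)² ≤ 4a`, which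
confines `a` to `[1/6, 6]`, and `(1 + a)|x|²/2 ≤ 4a`, which gives `|x|² ≤ 8`, so that the quartic
term is dominated by `|x|²`. Hence `r²` is comparable to `(1 - a)² + |x|² + |z|²`, with explicit
constants (`local_bounds`).
-/

open Real MeasureTheory Filter Topology

noncomputable section

namespace DR

theorem sinh_le_two_mul {y : ℝ} (h0 : 0 ≤ y) (h1 : y ≤ 1) : Real.sinh y ≤ 2 * y := by
  have e1 := Real.abs_exp_sub_one_le (x := y) (by rw [abs_of_nonneg h0]; exact h1)
  have e2 := Real.abs_exp_sub_one_le (x := -y) (by rw [abs_neg, abs_of_nonneg h0]; exact h1)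
  rw [abs_neg] at e2
  rw [abs_of_nonneg h0] at e1 e2
  rw [Real.sinh_eq]
  linarith [(abs_le.mp e1).2, (abs_le.mp e2).1]

/-- The defining relation of the distance with denominators cleared, where `S = |x|²`
and `T = |z|²`. -/
theorem four_mul_sinh_sq {a S T ρ : ℝ} (ha : 0 < a)
    (h : Real.cosh (ρ / 2) ^ 2 =
      ((Real.sqrt a + (Real.sqrt a)⁻¹) / 2 + (Real.sqrt a)⁻¹ * S / 8) ^ 2 + a⁻¹ * T / 4) :
    4 * a * Real.sinh (ρ / 2) ^ 2 = (1 - a) ^ 2 + (1 + a) * S / 2 + S ^ 2 / 16 + T := by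
  obtain ⟨q, hq, rfl⟩ : ∃ q : ℝ, 0 < q ∧ a = q ^ 2 :=
    ⟨Real.sqrt a, Real.sqrt_pos.mpr ha, (Real.sq_sqrt ha.le).symm⟩
  rw [Real.cosh_sq, Real.sqrt_sq hq.le] at h
  rw [eq_sub_of_add_eq h]
  field_simp
  ring

/-- The two-sided comparison in terms of scalars: `X = |x|`, `Z = |z|`, `h = sinh (ρ / 2)`. -/
theorem local_bounds {a X Z ρ h : ℝ} (ha : 0 < a) (hX : 0 ≤ X) (hZ : 0 ≤ Z)
    (hρ0 : 0 ≤ ρ) (hρ1 : ρ ≤ 1) (hl : ρ / 2 ≤ h) (hu : h ≤ ρ)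
    (E : 4 * a * h ^ 2 = (1 - a) ^ 2 + (1 + a) * X ^ 2 / 2 + (X ^ 2) ^ 2 / 16 + Z ^ 2) :
    |a - 1| + X + Z ≤ 17 * ρ ∧ ρ ≤ 5 * (|a - 1| + X + Z) := by
  have hA : 0 ≤ |a - 1| := abs_nonneg _
  have hAsq : |a - 1| ^ 2 = (1 - a) ^ 2 := by rw [sq_abs]; ring
  have hh0 : 0 ≤ h := by linarith
  have hsq : h ^ 2 ≤ ρ ^ 2 := by gcongr
  have hρsq : ρ ^ 2 ≤ 1 := by nlinarith
  have hsq' : ρ ^ 2 ≤ 4 * h ^ 2 := by nlinarith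
  have hX2 := sq_nonneg X
  have hZ2 := sq_nonneg Z
  have hX4 := sq_nonneg (X ^ 2)
  have haX : 0 ≤ a * X ^ 2 := by positivity
  have hE4 : 4 * a * h ^ 2 ≤ 4 * a := by nlinarith
  have ha6 : a ≤ 6 := by nlinarith
  have ha6' : 1 / 6 ≤ a := by nlinarith
  have hX8 : X ^ 2 ≤ 8 := by
    have h1 : (1 + a) * X ^ 2 ≤ (1 + a) * 8 := by nlinarith [sq_nonneg (1 - a)]
    exact le_of_mul_le_mul_left h1 (by linarith)
  have hE24 : 4 * a * h ^ 2 ≤ 24 * ρ ^ 2 := by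
    have : a * h ^ 2 ≤ 6 * ρ ^ 2 := by gcongr
    linarith
  constructor
  · have b1 : |a - 1| ≤ 5 * ρ := abs_le_of_sq_le_sq' (by nlinarith) (by linarith) |>.2
    have b2 : X ≤ 7 * ρ := abs_le_of_sq_le_sq' (by nlinarith) (by linarith) |>.2
    have b3 : Z ≤ 5 * ρ := abs_le_of_sq_le_sq' (by nlinarith) (by linarith) |>.2
    linarith
  · have c1 : ρ ^ 2 / 6 ≤ 4 * a * h ^ 2 := by nlinarith [sq_nonneg h]
    have c2 : (X ^ 2) ^ 2 ≤ 8 * X ^ 2 := by nlinarith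
    have c3 : a * X ^ 2 ≤ 6 * X ^ 2 := by gcongr
    have c4 : ρ ^ 2 ≤ 24 * (|a - 1| ^ 2 + X ^ 2 + Z ^ 2) := by rw [hAsq]; linarith [sq_nonneg (1 - a)]
    refine (abs_le_of_sq_le_sq' ?_ (by positivity)).2
    nlinarith [mul_nonneg hA hX, mul_nonneg hA hZ, mul_nonneg hX hZ, sq_nonneg (|a - 1|)]

theorem distance_local_euclidean (μ ν : ℕ) (hμ : Even μ) (hν : 1 ≤ ν)
    (r : Pt μ ν → ℝ)
    (hr0 : ∀ p : Pt μ ν, 0 < p.2.2 → 0 ≤ r p)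
    (hreq : ∀ p : Pt μ ν, 0 < p.2.2 → Real.cosh (r p / 2) ^ 2 = coshExpr μ ν p) :
    ∃ C : ℝ, 1 ≤ C ∧ ∀ p : Pt μ ν, 0 < p.2.2 → r p ≤ 1 →
      C⁻¹ * (|p.2.2 - 1| + Real.sqrt (∑ i, p.1 i ^ 2) + Real.sqrt (∑ i, p.2.1 i ^ 2)) ≤ r p ∧
      r p ≤ C * (|p.2.2 - 1| + Real.sqrt (∑ i, p.1 i ^ 2) + Real.sqrt (∑ i, p.2.1 i ^ 2)) := by
  refine ⟨17, by norm_num, fun p ha h1 => ?_⟩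
  have h0 := hr0 p ha
  have hS : 0 ≤ ∑ i, p.1 i ^ 2 := Finset.sum_nonneg fun i _ => sq_nonneg _
  have hT : 0 ≤ ∑ i, p.2.1 i ^ 2 := Finset.sum_nonneg fun i _ => sq_nonneg _
  have E := four_mul_sinh_sq ha (hreq p ha)
  rw [← Real.sq_sqrt hS, ← Real.sq_sqrt hT] at E
  have hl : r p / 2 ≤ Real.sinh (r p / 2) := Real.self_le_sinh_iff.mpr (by linarith)
  have hu : Real.sinh (r p / 2) ≤ r p := by
    linarith [sinh_le_two_mul (y := r p / 2) (by linarith) (by linarith)]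
  obtain ⟨hlow, hupp⟩ :=
    local_bounds ha (Real.sqrt_nonneg _) (Real.sqrt_nonneg _) h0 h1 hl hu E
  exact ⟨by linarith, by linarith⟩

end DR
end
end

section
/- For every k ≥ 1 there exists a constant C_k > 0 such that for every multi-index J ∈ {0,…,n−1}^k and every point (x,z,a) ∈ S with r = r(x,z,a) > 0, one has |(X_J r)(x,z,a)| ≤ C_k ((1+r)/r)^{k−1}. -/
/-!
Write `c = cosh r` and `w = (1 + r) / r ≥ 1`. The proof rests on the identity
`X_j r = coth r · G_j` with `G_j = (X_j c) / c`, on the set where `r > 0`.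

The function `T = 2 a c` is a polynomial in `√a, x, z` of weighted degree four (weights `1, 1, 2`) and
dominates every such polynomial (`WP.bound_T`). The vector fields preserve weighted degree
(`WP.Xf`), so quotients `P / T` with `P` of weighted degree four have all `X_J`-derivatives
bounded (`WP.ratio_Bd`); in particular `G_j = (X_j T) / T - δ_{j0}` does. A direct computation gives
`|X_j c| ≤ C sinh r` (`first_order`), hence `|G_j| ≤ C tanh r ≤ C' / w`.

Say that `f` has weight `d` if `|X_J f| ≤ C_J w^(d + |J|)` for all `J`; weights add under products.
Then `G_j` has weight `-1` (`G_Bd`). Since `X_j coth r = (coth r - coth³ r) G_j` and `coth r ≤ w`,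
induction on the order of differentiation shows that `coth r` has weight `1` (`coth_Bd`). Therefore
`X_j r` has weight `0`, and a multi-index of length `k` leaves `k - 1` further derivatives.
-/

open Real MeasureTheory Filter Topology

noncomputable section

namespace DR

/-! ### The vector fields as directional derivatives -/

/-- The vector `X_j(p)`, so that `X_j f (p)` is the derivative of `f` in direction `vf j p`. -/
def vf (μ ν : ℕ) (Jm : Fin ν → Matrix (Fin μ) (Fin μ) ℝ) (j : Fin (μ + ν + 1))
    (p : Pt μ ν) : Pt μ ν :=
  if h0 : (j : ℕ) = 0 then (0, 0, p.2.2)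
  else if hm : (j : ℕ) ≤ μ then
    (Real.sqrt p.2.2 • Pi.single ⟨(j : ℕ) - 1, by omega⟩ 1,
      fun k => Real.sqrt p.2.2 * ((1 / 2) * (Jm k).mulVec p.1 ⟨(j : ℕ) - 1, by omega⟩), 0)
  else (0, p.2.2 • Pi.single ⟨(j : ℕ) - μ - 1, by have := j.isLt; omega⟩ 1, 0)

section Fields

variable {μ ν : ℕ} (Jm : Fin ν → Matrix (Fin μ) (Fin μ) ℝ)

lemma deriv_slice_x {f : Pt μ ν → ℝ} {p : Pt μ ν} (hf : DifferentiableAt ℝ f p) (i : Fin μ) :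
    deriv (fun s => f (Function.update p.1 i s, p.2.1, p.2.2)) (p.1 i) =
      fderiv ℝ f p (Pi.single i 1, 0, 0) := by
  have h1 : HasDerivAt (fun s => ((Function.update p.1 i s, p.2.1, p.2.2) : Pt μ ν))
      (Pi.single i 1, 0, 0) (p.1 i) :=
    (hasDerivAt_update p.1 i (p.1 i)).prodMk
      ((hasDerivAt_const _ _).prodMk (hasDerivAt_const _ _))
  have h2 : HasFDerivAt f (fderiv ℝ f p) (Function.update p.1 i (p.1 i), p.2.1, p.2.2) := by
    rw [Function.update_eq_self]; exact hf.hasFDerivAt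
  exact (h2.comp_hasDerivAt (p.1 i) h1).deriv

lemma deriv_slice_z {f : Pt μ ν → ℝ} {p : Pt μ ν} (hf : DifferentiableAt ℝ f p) (k : Fin ν) :
    deriv (fun s => f (p.1, Function.update p.2.1 k s, p.2.2)) (p.2.1 k) =
      fderiv ℝ f p (0, Pi.single k 1, 0) := by
  have h1 : HasDerivAt (fun s => ((p.1, Function.update p.2.1 k s, p.2.2) : Pt μ ν))
      (0, Pi.single k 1, 0) (p.2.1 k) :=
    (hasDerivAt_const _ _).prodMk
      ((hasDerivAt_update p.2.1 k (p.2.1 k)).prodMk (hasDerivAt_const _ _))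
  have h2 : HasFDerivAt f (fderiv ℝ f p) (p.1, Function.update p.2.1 k (p.2.1 k), p.2.2) := by
    rw [Function.update_eq_self]; exact hf.hasFDerivAt
  exact (h2.comp_hasDerivAt (p.2.1 k) h1).deriv

lemma deriv_slice_a {f : Pt μ ν → ℝ} {p : Pt μ ν} (hf : DifferentiableAt ℝ f p) :
    deriv (fun s => f (p.1, p.2.1, s)) p.2.2 = fderiv ℝ f p (0, 0, 1) := by
  have h1 : HasDerivAt (fun s => ((p.1, p.2.1, s) : Pt μ ν)) (0, 0, 1) p.2.2 :=
    (hasDerivAt_const _ _).prodMk ((hasDerivAt_const _ _).prodMk (hasDerivAt_id _))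
  have h2 : HasFDerivAt f (fderiv ℝ f p) (p.1, p.2.1, p.2.2) := hf.hasFDerivAt
  exact (h2.comp_hasDerivAt p.2.2 h1).deriv

lemma Xf_eq {f : Pt μ ν → ℝ} {p : Pt μ ν} (hf : DifferentiableAt ℝ f p)
    (j : Fin (μ + ν + 1)) : Xf μ ν Jm j f p = fderiv ℝ f p (vf μ ν Jm j p) := by
  unfold Xf vf
  split_ifs with h0 hm
  · rw [deriv_slice_a hf, ← smul_eq_mul, ← map_smul]
    simp
  · rw [deriv_slice_x hf]
    simp only [deriv_slice_z hf]
    have hz : ∀ z : Fin ν → ℝ, fderiv ℝ f p (0, z, 0) =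
        ∑ k, z k * fderiv ℝ f p (0, Pi.single k 1, 0) := by
      intro z
      have : ((0, z, 0) : Pt μ ν) = ∑ k, z k • ((0, Pi.single k 1, 0) : Pt μ ν) := by
        refine Prod.ext ?_ (Prod.ext ?_ ?_)
        · simp [Prod.fst_sum]
        · simp only [Prod.snd_sum, Prod.fst_sum, Prod.smul_mk]
          ext i
          simp [Finset.sum_apply, Pi.single_apply]
        · simp [Prod.snd_sum]
      rw [this, map_sum]
      simp only [map_smul, smul_eq_mul]
    have hs : ∀ (x : Fin μ → ℝ) (z : Fin ν → ℝ), ((x, z, 0) : Pt μ ν) = (x, 0, 0) + (0, z, 0) := by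
      intro x z; simp
    rw [hs (_ • _) _, map_add, hz (fun _ => _)]
    have hx : ∀ (c : ℝ) (x : Fin μ → ℝ), ((c • x, 0, 0) : Pt μ ν) = c • (x, 0, 0) := by
      intro c x; simp
    rw [hx, map_smul, smul_eq_mul, mul_add, Finset.mul_sum, Finset.mul_sum]
    congr 1
    refine Finset.sum_congr rfl fun k _ => ?_
    ring
  · rw [deriv_slice_z hf, ← smul_eq_mul, ← map_smul]
    simp

lemma Xf_congr {f g : Pt μ ν → ℝ} {U : Set (Pt μ ν)} (hU : IsOpen U) {p : Pt μ ν} (hp : p ∈ U)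
    (h : ∀ q ∈ U, f q = g q) (hf : DifferentiableAt ℝ f p) (j : Fin (μ + ν + 1)) :
    Xf μ ν Jm j f p = Xf μ ν Jm j g p := by
  have he : f =ᶠ[𝓝 p] g := Filter.eventuallyEq_of_mem (hU.mem_nhds hp) h
  rw [Xf_eq Jm hf, Xf_eq Jm (he.differentiableAt_iff.1 hf), he.fderiv_eq]

lemma Xf_const (c : ℝ) (p : Pt μ ν) (j : Fin (μ + ν + 1)) :
    Xf μ ν Jm j (fun _ => c) p = 0 := by
  rw [Xf_eq Jm (differentiableAt_const c)]; simp

lemma Xf_add {f g : Pt μ ν → ℝ} {p : Pt μ ν} (hf : DifferentiableAt ℝ f p)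
    (hg : DifferentiableAt ℝ g p) (j : Fin (μ + ν + 1)) :
    Xf μ ν Jm j (fun q => f q + g q) p = Xf μ ν Jm j f p + Xf μ ν Jm j g p := by
  rw [Xf_eq Jm hf, Xf_eq Jm hg, Xf_eq Jm (hf.fun_add hg), fderiv_fun_add hf hg]
  rfl

lemma Xf_mul {f g : Pt μ ν → ℝ} {p : Pt μ ν} (hf : DifferentiableAt ℝ f p)
    (hg : DifferentiableAt ℝ g p) (j : Fin (μ + ν + 1)) :
    Xf μ ν Jm j (fun q => f q * g q) p =
      Xf μ ν Jm j f p * g p + f p * Xf μ ν Jm j g p := by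
  rw [Xf_eq Jm hf, Xf_eq Jm hg, Xf_eq Jm (hf.fun_mul hg), fderiv_fun_mul hf hg]
  simp; ring

lemma Xf_comp {f : Pt μ ν → ℝ} {φ : ℝ → ℝ} {φ' : ℝ} {p : Pt μ ν} (hf : DifferentiableAt ℝ f p)
    (hφ : HasDerivAt φ φ' (f p)) (j : Fin (μ + ν + 1)) :
    Xf μ ν Jm j (fun q => φ (f q)) p = φ' * Xf μ ν Jm j f p := by
  have h : HasFDerivAt (fun q => φ (f q)) (φ' • fderiv ℝ f p) p :=
    hφ.comp_hasFDerivAt p hf.hasFDerivAt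
  rw [Xf_eq Jm hf, Xf_eq Jm h.differentiableAt, h.fderiv]
  simp

lemma XL_append (L M : List (Fin (μ + ν + 1))) (f : Pt μ ν → ℝ) :
    XL μ ν Jm (L ++ M) f = XL μ ν Jm L (XL μ ν Jm M f) := by
  induction L with
  | nil => rfl
  | cons j L ih => simp only [List.cons_append, XL, ih]

end Fields

/-! ### Symbol-type estimates to finite order -/

/-- `Bd Jm U w σ d N f`: on `U`, `f` satisfies `|X_J f| ≤ C w^(d + σ|J|)` for all multi-indices with
`|J| ≤ N`, and all `X_J f` with `|J| < N` are differentiable there. The recursion differentiates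
`f` first, that is, it peels off the last letter of `J`. -/
def Bd {μ ν : ℕ} (Jm : Fin ν → Matrix (Fin μ) (Fin μ) ℝ) (U : Set (Pt μ ν)) (w : Pt μ ν → ℝ)
    (σ : ℤ) : ℤ → ℕ → (Pt μ ν → ℝ) → Prop
  | d, 0, f => ∃ C : ℝ, ∀ p ∈ U, |f p| ≤ C * w p ^ d
  | d, N + 1, f => (∃ C : ℝ, ∀ p ∈ U, |f p| ≤ C * w p ^ d) ∧
      (∀ p ∈ U, DifferentiableAt ℝ f p) ∧ ∀ j, Bd Jm U w σ (d + σ) N (Xf μ ν Jm j f)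

section Bounds

variable {μ ν : ℕ} {Jm : Fin ν → Matrix (Fin μ) (Fin μ) ℝ} {U : Set (Pt μ ν)} {w : Pt μ ν → ℝ}
  {σ : ℤ}

lemma Bd.bound {d : ℤ} {N : ℕ} {f : Pt μ ν → ℝ} (h : Bd Jm U w σ d N f) :
    ∃ C : ℝ, ∀ p ∈ U, |f p| ≤ C * w p ^ d := by
  cases N with
  | zero => exact h
  | succ N => exact h.1

lemma Bd.congr (hU : IsOpen U) {N : ℕ} : ∀ {d : ℤ} {f g : Pt μ ν → ℝ}, Bd Jm U w σ d N f →
    (∀ p ∈ U, f p = g p) → Bd Jm U w σ d N g := by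
  induction N with
  | zero =>
    rintro d f g ⟨C, hC⟩ h
    exact ⟨C, fun p hp => h p hp ▸ hC p hp⟩
  | succ N ih =>
    rintro d f g ⟨⟨C, hC⟩, hd, hX⟩ h
    refine ⟨⟨C, fun p hp => h p hp ▸ hC p hp⟩, fun p hp => ?_, fun j => ?_⟩
    · exact (Filter.eventuallyEq_of_mem (hU.mem_nhds hp) h).differentiableAt_iff.1 (hd p hp)
    · exact ih (hX j) fun p hp => Xf_congr Jm hU hp h (hd p hp) j

lemma Bd.pred {N : ℕ} : ∀ {d : ℤ} {f : Pt μ ν → ℝ}, Bd Jm U w σ d (N + 1) f →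
    Bd Jm U w σ d N f := by
  induction N with
  | zero => exact fun h => h.1
  | succ N ih => exact fun h => ⟨h.1, h.2.1, fun j => ih (h.2.2 j)⟩

lemma bound_mono (hw : ∀ p ∈ U, 1 ≤ w p) {d e : ℤ} (hde : d ≤ e) {f : Pt μ ν → ℝ}
    (h : ∃ C : ℝ, ∀ p ∈ U, |f p| ≤ C * w p ^ d) : ∃ C : ℝ, ∀ p ∈ U, |f p| ≤ C * w p ^ e := by
  obtain ⟨C, hC⟩ := h
  refine ⟨|C|, fun p hp => (hC p hp).trans ?_⟩
  have := hw p hp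
  exact mul_le_mul (le_abs_self C) (zpow_le_zpow_right₀ this hde) (by positivity) (abs_nonneg C)

lemma Bd.mono (hw : ∀ p ∈ U, 1 ≤ w p) {τ : ℤ} (hστ : σ ≤ τ) {N : ℕ} :
    ∀ {d e : ℤ} {f : Pt μ ν → ℝ}, d ≤ e → Bd Jm U w σ d N f → Bd Jm U w τ e N f := by
  induction N with
  | zero => exact fun hde h => bound_mono hw hde h
  | succ N ih =>
    exact fun hde h => ⟨bound_mono hw hde h.1, h.2.1, fun j => ih (by omega) (h.2.2 j)⟩

lemma Bd.const (hU : IsOpen U) (c : ℝ) {N : ℕ} (hw : ∀ p ∈ U, 1 ≤ w p) (hσ : 0 ≤ σ) :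
    Bd Jm U w σ 0 N (fun _ => c) := by
  induction N generalizing c with
  | zero => exact ⟨|c|, fun p _ => by simp⟩
  | succ N ih =>
    refine ⟨⟨|c|, fun p _ => by simp⟩, fun p _ => differentiableAt_const c, fun j => ?_⟩
    exact ((ih 0).mono hw le_rfl (by omega)).congr hU fun p _ => (Xf_const Jm c p j).symm

lemma Bd.add (hU : IsOpen U) {N : ℕ} : ∀ {d : ℤ} {f g : Pt μ ν → ℝ}, Bd Jm U w σ d N f →
    Bd Jm U w σ d N g → Bd Jm U w σ d N (fun p => f p + g p) := by
  have key : ∀ {d : ℤ} {f g : Pt μ ν → ℝ}, (∃ C : ℝ, ∀ p ∈ U, |f p| ≤ C * w p ^ d) →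
      (∃ C : ℝ, ∀ p ∈ U, |g p| ≤ C * w p ^ d) →
      ∃ C : ℝ, ∀ p ∈ U, |f p + g p| ≤ C * w p ^ d := by
    rintro d f g ⟨C, hC⟩ ⟨D, hD⟩
    exact ⟨C + D, fun p hp => (abs_add_le _ _).trans (by linarith [hC p hp, hD p hp])⟩
  induction N with
  | zero => exact key
  | succ N ih =>
    exact fun hf hg => ⟨key hf.1 hg.1, fun p hp => (hf.2.1 p hp).add (hg.2.1 p hp), fun j =>
      (ih (hf.2.2 j) (hg.2.2 j)).congr hU fun p hp =>
        (Xf_add Jm (hf.2.1 p hp) (hg.2.1 p hp) j).symm⟩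

lemma Bd.mul (hU : IsOpen U) (hw : ∀ p ∈ U, 1 ≤ w p) {N : ℕ} :
    ∀ {d e : ℤ} {f g : Pt μ ν → ℝ}, Bd Jm U w σ d N f →
    Bd Jm U w σ e N g → Bd Jm U w σ (d + e) N (fun p => f p * g p) := by
  have key : ∀ {d e : ℤ} {f g : Pt μ ν → ℝ}, (∃ C : ℝ, ∀ p ∈ U, |f p| ≤ C * w p ^ d) →
      (∃ C : ℝ, ∀ p ∈ U, |g p| ≤ C * w p ^ e) →
      ∃ C : ℝ, ∀ p ∈ U, |f p * g p| ≤ C * w p ^ (d + e) := by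
    rintro d e f g ⟨C, hC⟩ ⟨D, hD⟩
    refine ⟨C * D, fun p hp => ?_⟩
    have h1 := hw p hp
    rw [abs_mul, zpow_add₀ (by linarith)]
    calc |f p| * |g p| ≤ (C * w p ^ d) * (D * w p ^ e) :=
          mul_le_mul (hC p hp) (hD p hp) (abs_nonneg _) ((abs_nonneg _).trans (hC p hp))
      _ = _ := by ring
  induction N with
  | zero => exact key
  | succ N ih =>
    intro d e f g hf hg
    refine ⟨key hf.1 hg.1, fun p hp => (hf.2.1 p hp).mul (hg.2.1 p hp), fun j => ?_⟩
    have h1 := ih (hf.2.2 j) hg.pred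
    have h2 := ih hf.pred (hg.2.2 j)
    rw [show d + σ + e = d + e + σ by ring] at h1
    rw [show d + (e + σ) = d + e + σ by ring] at h2
    exact (h1.add hU h2).congr hU fun p hp =>
        (Xf_mul Jm (hf.2.1 p hp) (hg.2.1 p hp) j).symm

/-- There are finitely many multi-indices of a given length, so the constants can be taken
uniform. -/
lemma Bd.uniform {N : ℕ} : ∀ {d : ℤ} {f : Pt μ ν → ℝ}, Bd Jm U w σ d N f →
    (∀ p ∈ U, 1 ≤ w p) → ∃ C : ℝ, 0 < C ∧ ∀ J : List (Fin (μ + ν + 1)), J.length = N →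
      ∀ p ∈ U, |XL μ ν Jm J f p| ≤ C * w p ^ (d + σ * N) := by
  induction N with
  | zero =>
    rintro d f ⟨C, hC⟩ hw
    refine ⟨|C| + 1, by positivity, fun J hJ p hp => ?_⟩
    obtain rfl := List.length_eq_zero_iff.1 hJ
    have := hw p hp
    refine (hC p hp).trans ?_
    simp only [Nat.cast_zero, mul_zero, add_zero]
    have h2 : (0 : ℝ) < w p ^ d := by positivity
    nlinarith [le_abs_self C]
  | succ N ih =>
    intro d f h hw
    choose C hC0 hC using fun j => ih (h.2.2 j) hw
    refine ⟨∑ j, C j, Finset.sum_pos (fun j _ => hC0 j) Finset.univ_nonempty, ?_⟩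
    intro J hJ p hp
    obtain ⟨J', j, rfl⟩ : ∃ J' j, J = J' ++ [j] :=
      ⟨J.dropLast, J.getLast (by rintro rfl; simp at hJ), (List.dropLast_append_getLast _).symm⟩
    rw [XL_append]
    have hl : J'.length = N := by simpa using hJ
    have h1 := hC j J' hl p hp
    rw [show d + σ + σ * N = d + σ * ((N + 1 : ℕ) : ℤ) by push_cast; ring] at h1
    refine h1.trans ?_
    have := hw p hp
    exact mul_le_mul_of_nonneg_right
      (Finset.single_le_sum (fun i _ => (hC0 i).le) (Finset.mem_univ j)) (by positivity)

end Bounds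

/-! ### Weighted polynomials -/

/-- Polynomials of weighted degree at most `d` in `√a`, `x`, `z`, where `√a` and the `x_i` have
weight one while `a` and the `z_k` have weight two. -/
inductive WP {μ ν : ℕ} : ℕ → (Pt μ ν → ℝ) → Prop
  | const (d : ℕ) (c : ℝ) : WP d (fun _ => c)
  | s : WP 1 (fun p => Real.sqrt p.2.2)
  | a : WP 2 (fun p => p.2.2)
  | x (i : Fin μ) : WP 1 (fun p => p.1 i)
  | z (k : Fin ν) : WP 2 (fun p => p.2.1 k)
  | add {d : ℕ} {f g : Pt μ ν → ℝ} : WP d f → WP d g → WP d (fun p => f p + g p)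
  | mul {d e : ℕ} {f g : Pt μ ν → ℝ} : WP d f → WP e g → WP (d + e) (fun p => f p * g p)

section Weighted

variable {μ ν : ℕ} (Jm : Fin ν → Matrix (Fin μ) (Fin μ) ℝ)

lemma WP.const_mul {d : ℕ} {f : Pt μ ν → ℝ} (c : ℝ) (h : WP d f) : WP d (fun p => c * f p) := by
  simpa using (WP.const 0 c).mul h

lemma WP.sum {ι : Type*} {d : ℕ} (t : Finset ι) {f : ι → Pt μ ν → ℝ} (h : ∀ i, WP d (f i)) :
    WP d (fun p => ∑ i ∈ t, f i p) := by
  classical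
  induction t using Finset.induction_on with
  | empty => simpa using WP.const d 0
  | insert i t hi ih => simpa [Finset.sum_insert hi] using (h i).add ih

lemma differentiable_coord_x (i : Fin μ) : Differentiable ℝ (fun p : Pt μ ν => p.1 i) := by
  fun_prop

lemma differentiable_coord_z (k : Fin ν) : Differentiable ℝ (fun p : Pt μ ν => p.2.1 k) := by
  fun_prop

lemma differentiable_coord_a : Differentiable ℝ (fun p : Pt μ ν => p.2.2) := by
  fun_prop

lemma WP.differentiableAt {d : ℕ} {f : Pt μ ν → ℝ} (h : WP d f) {p : Pt μ ν} (hp : 0 < p.2.2) :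
    DifferentiableAt ℝ f p := by
  induction h with
  | const => exact differentiableAt_const _
  | s => exact (differentiable_coord_a p).sqrt hp.ne'
  | a => exact differentiable_coord_a p
  | x i => exact differentiable_coord_x i p
  | z k => exact differentiable_coord_z k p
  | add _ _ h1 h2 => exact h1.fun_add h2
  | mul _ _ h1 h2 => exact h1.fun_mul h2

/-- The number `δ_{j0}`. -/
def dl {μ ν : ℕ} (j : Fin (μ + ν + 1)) : ℝ := if (j : ℕ) = 0 then 1 else 0

lemma vf_a (j : Fin (μ + ν + 1)) (p : Pt μ ν) : (vf μ ν Jm j p).2.2 = dl j * p.2.2 := by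
  unfold vf dl
  split_ifs <;> simp

lemma vf_x (j : Fin (μ + ν + 1)) (i : Fin μ) :
    ∃ c : ℝ, ∀ p : Pt μ ν, (vf μ ν Jm j p).1 i = c * Real.sqrt p.2.2 := by
  unfold vf
  split_ifs with h0 hm
  · exact ⟨0, by simp⟩
  · exact ⟨(Pi.single ⟨(j : ℕ) - 1, by omega⟩ 1 : Fin μ → ℝ) i, fun p => by simp [mul_comm]⟩
  · exact ⟨0, by simp⟩

lemma vf_z (j : Fin (μ + ν + 1)) (k : Fin ν) :
    ∃ g : Pt μ ν → ℝ, WP 2 g ∧ ∀ p : Pt μ ν, (vf μ ν Jm j p).2.1 k = g p := by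
  unfold vf
  split_ifs with h0 hm
  · exact ⟨_, WP.const 2 0, by simp⟩
  · exact ⟨_, WP.s.mul ((WP.sum Finset.univ fun i =>
      (WP.x i).const_mul (Jm k ⟨(j : ℕ) - 1, by omega⟩ i)).const_mul (1 / 2)), fun p => rfl⟩
  · exact ⟨_, WP.a.const_mul
      ((Pi.single ⟨(j : ℕ) - μ - 1, by have := j.isLt; omega⟩ 1 : Fin ν → ℝ) k),
      fun p => by simp [mul_comm]⟩

lemma Xf_coord_a (j : Fin (μ + ν + 1)) (p : Pt μ ν) :
    Xf μ ν Jm j (fun q => q.2.2) p = dl j * p.2.2 := by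
  rw [Xf_eq Jm (differentiable_coord_a p), ← vf_a Jm]
  have : HasFDerivAt (fun q : Pt μ ν => q.2.2)
      ((ContinuousLinearMap.snd ℝ (Fin ν → ℝ) ℝ).comp
        (ContinuousLinearMap.snd ℝ (Fin μ → ℝ) ((Fin ν → ℝ) × ℝ))) p :=
    ContinuousLinearMap.hasFDerivAt
      ((ContinuousLinearMap.snd ℝ (Fin ν → ℝ) ℝ).comp
        (ContinuousLinearMap.snd ℝ (Fin μ → ℝ) ((Fin ν → ℝ) × ℝ)))
  rw [this.fderiv]; rfl

lemma Xf_coord_x (j : Fin (μ + ν + 1)) (p : Pt μ ν) (i : Fin μ) :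
    Xf μ ν Jm j (fun q => q.1 i) p = (vf μ ν Jm j p).1 i := by
  rw [Xf_eq Jm (differentiable_coord_x i p)]
  have : HasFDerivAt (fun q : Pt μ ν => q.1 i)
      ((ContinuousLinearMap.proj (R := ℝ) (φ := fun _ : Fin μ => ℝ) i).comp
        (ContinuousLinearMap.fst ℝ (Fin μ → ℝ) ((Fin ν → ℝ) × ℝ))) p :=
    ContinuousLinearMap.hasFDerivAt
      ((ContinuousLinearMap.proj (R := ℝ) (φ := fun _ : Fin μ => ℝ) i).comp
        (ContinuousLinearMap.fst ℝ (Fin μ → ℝ) ((Fin ν → ℝ) × ℝ)))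
  rw [this.fderiv]; rfl

lemma Xf_coord_z (j : Fin (μ + ν + 1)) (p : Pt μ ν) (k : Fin ν) :
    Xf μ ν Jm j (fun q => q.2.1 k) p = (vf μ ν Jm j p).2.1 k := by
  rw [Xf_eq Jm (differentiable_coord_z k p)]
  have : HasFDerivAt (fun q : Pt μ ν => q.2.1 k)
      ((ContinuousLinearMap.proj (R := ℝ) (φ := fun _ : Fin ν => ℝ) k).comp
        ((ContinuousLinearMap.fst ℝ (Fin ν → ℝ) ℝ).comp
        (ContinuousLinearMap.snd ℝ (Fin μ → ℝ) ((Fin ν → ℝ) × ℝ)))) p :=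
    ContinuousLinearMap.hasFDerivAt
      ((ContinuousLinearMap.proj (R := ℝ) (φ := fun _ : Fin ν => ℝ) k).comp
        ((ContinuousLinearMap.fst ℝ (Fin ν → ℝ) ℝ).comp
        (ContinuousLinearMap.snd ℝ (Fin μ → ℝ) ((Fin ν → ℝ) × ℝ))))
  rw [this.fderiv]; rfl

/-- The vector fields are homogeneous of degree zero for the weights, so they preserve the
weighted degree. -/
lemma WP.Xf {d : ℕ} {f : Pt μ ν → ℝ} (h : WP d f) (j : Fin (μ + ν + 1)) :
    ∃ g : Pt μ ν → ℝ, WP d g ∧ ∀ p : Pt μ ν, 0 < p.2.2 → DR.Xf μ ν Jm j f p = g p := by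
  induction h with
  | const d c => exact ⟨_, WP.const d 0, fun p _ => Xf_const Jm c p j⟩
  | s =>
    refine ⟨_, WP.s.const_mul (dl j / 2), fun p hp => ?_⟩
    rw [Xf_comp Jm (differentiable_coord_a p) (Real.hasDerivAt_sqrt hp.ne'), Xf_coord_a]
    have h1 : 0 < √p.2.2 := Real.sqrt_pos.2 hp
    have h2 : √p.2.2 * √p.2.2 = p.2.2 := Real.mul_self_sqrt hp.le
    field_simp
    rw [sq, h2, mul_comm]
  | a => exact ⟨_, WP.a.const_mul (dl j), fun p _ => Xf_coord_a Jm j p⟩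
  | x i =>
    obtain ⟨c, hc⟩ := vf_x Jm j i
    exact ⟨_, WP.s.const_mul c, fun p _ => by rw [Xf_coord_x, hc]⟩
  | z k =>
    obtain ⟨g, hg, he⟩ := vf_z Jm j k
    exact ⟨g, hg, fun p _ => by rw [Xf_coord_z, he]⟩
  | add h1 h2 ih1 ih2 =>
    obtain ⟨g1, hg1, he1⟩ := ih1
    obtain ⟨g2, hg2, he2⟩ := ih2
    refine ⟨_, hg1.add hg2, fun p hp => ?_⟩
    rw [Xf_add Jm (h1.differentiableAt hp) (h2.differentiableAt hp), he1 p hp, he2 p hp]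
  | mul h1 h2 ih1 ih2 =>
    obtain ⟨g1, hg1, he1⟩ := ih1
    obtain ⟨g2, hg2, he2⟩ := ih2
    refine ⟨_, (hg1.mul h2).add (h1.mul hg2), fun p hp => ?_⟩
    rw [Xf_mul Jm (h1.differentiableAt hp) (h2.differentiableAt hp), he1 p hp, he2 p hp]

/-- A weighted polynomial of degree `d` is `O(ρ^d)` for any gauge `ρ ≥ 1` dominating the
coordinates according to their weights. -/
lemma WP.bound {d : ℕ} {f : Pt μ ν → ℝ} (h : WP d f) {ρ : Pt μ ν → ℝ}
    (h1 : ∀ p, 0 < p.2.2 → 1 ≤ ρ p) (hs : ∀ p, 0 < p.2.2 → p.2.2 ≤ ρ p ^ 2)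
    (hx : ∀ p, 0 < p.2.2 → ∀ i, |p.1 i| ≤ 2 * ρ p)
    (hz : ∀ p, 0 < p.2.2 → ∀ k, |p.2.1 k| ≤ ρ p ^ 2) :
    ∃ C : ℝ, ∀ p : Pt μ ν, 0 < p.2.2 → |f p| ≤ C * ρ p ^ d := by
  induction h with
  | const d c =>
    refine ⟨|c|, fun p hp => ?_⟩
    nlinarith [one_le_pow₀ (h1 p hp) (n := d), abs_nonneg c]
  | s =>
    refine ⟨1, fun p hp => ?_⟩
    rw [abs_of_nonneg (Real.sqrt_nonneg _), pow_one, one_mul]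
    exact Real.sqrt_le_iff.2 ⟨by linarith [h1 p hp], hs p hp⟩
  | a => exact ⟨1, fun p hp => by rw [abs_of_pos hp, one_mul]; exact hs p hp⟩
  | x i => exact ⟨2, fun p hp => by rw [pow_one]; exact hx p hp i⟩
  | z k => exact ⟨1, fun p hp => by rw [one_mul]; exact hz p hp k⟩
  | add _ _ ih1 ih2 =>
    obtain ⟨C, hC⟩ := ih1
    obtain ⟨D, hD⟩ := ih2
    exact ⟨C + D, fun p hp => (abs_add_le _ _).trans (by linarith [hC p hp, hD p hp])⟩
  | mul _ _ ih1 ih2 =>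
    obtain ⟨C, hC⟩ := ih1
    obtain ⟨D, hD⟩ := ih2
    refine ⟨C * D, fun p hp => ?_⟩
    rw [abs_mul, pow_add, mul_mul_mul_comm]
    exact mul_le_mul (hC p hp) (hD p hp) (abs_nonneg _) ((abs_nonneg _).trans (hC p hp))

/-- The weighted polynomial `T = (1 + a + |x|²/4)² + |z|² - 2a`, which equals `2a cosh r`. -/
def T (p : Pt μ ν) : ℝ :=
  (1 + p.2.2 + (∑ i, p.1 i ^ 2) / 4) ^ 2 + ∑ k, p.2.1 k ^ 2 - 2 * p.2.2

lemma WP_T : WP 4 (T : Pt μ ν → ℝ) := by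
  have hA : WP 2 (fun p : Pt μ ν => 1 + p.2.2 + (1 / 4) * ∑ i, p.1 i * p.1 i) :=
    ((WP.const 2 1).add WP.a).add
      ((WP.sum Finset.univ fun i => (WP.x i).mul (WP.x i)).const_mul _)
  have hZ : WP 4 (fun p : Pt μ ν => ∑ k, p.2.1 k * p.2.1 k) :=
    WP.sum Finset.univ fun k => (WP.z k).mul (WP.z k)
  have ha : WP 4 (fun p : Pt μ ν => (-2 : ℝ) * (1 * p.2.2)) :=
    ((WP.const 2 1).mul WP.a).const_mul _
  convert ((hA.mul hA).add hZ).add ha using 1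
  funext p
  simp only [T, ← sq]
  ring

lemma T_lower (p : Pt μ ν) (hp : 0 < p.2.2) :
    1 + p.2.2 ^ 2 + ((∑ i, p.1 i ^ 2) / 4) ^ 2 + ∑ k, p.2.1 k ^ 2 ≤ T p := by
  have hq : 0 ≤ (∑ i, p.1 i ^ 2) / 4 := by positivity
  unfold T
  nlinarith [mul_nonneg hp.le hq]

lemma T_pos {p : Pt μ ν} (hp : 0 < p.2.2) : 0 < T p := by
  have := T_lower p hp
  have : 0 ≤ ∑ k, p.2.1 k ^ 2 := by positivity
  nlinarith [sq_nonneg ((∑ i, p.1 i ^ 2) / 4)]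

lemma WP.bound_T {f : Pt μ ν → ℝ} (h : WP 4 f) :
    ∃ C : ℝ, ∀ p : Pt μ ν, 0 < p.2.2 → |f p| ≤ C * T p := by
  have hsq : ∀ p : Pt μ ν, 0 < p.2.2 → √(√(T p)) ^ 2 = √(T p) := fun p _ =>
    Real.sq_sqrt (Real.sqrt_nonneg _)
  have hz0 : ∀ p : Pt μ ν, 0 ≤ ∑ k, p.2.1 k ^ 2 := fun p => by positivity
  have hex : ∃ C : ℝ, ∀ p : Pt μ ν, 0 < p.2.2 → |f p| ≤ C * √(√(T p)) ^ 4 := by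
    refine h.bound (ρ := fun p => √(√(T p))) ?_ ?_ ?_ ?_
    · intro p hp
      have : 1 ≤ T p := by
        nlinarith [T_lower p hp, hz0 p, sq_nonneg ((∑ i, p.1 i ^ 2) / 4)]
      exact Real.one_le_sqrt.2 (Real.one_le_sqrt.2 this)
    · intro p hp
      rw [hsq p hp]
      apply Real.le_sqrt_of_sq_le
      nlinarith [T_lower p hp, hz0 p, sq_nonneg ((∑ i, p.1 i ^ 2) / 4)]
    · intro p hp i
      have h1 : (∑ i, p.1 i ^ 2) / 4 ≤ √(T p) := by
        apply Real.le_sqrt_of_sq_le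
        nlinarith [T_lower p hp, hz0 p]
      have h2 : p.1 i ^ 2 ≤ ∑ i, p.1 i ^ 2 :=
        Finset.single_le_sum (f := fun i => p.1 i ^ 2) (fun _ _ => sq_nonneg _) (Finset.mem_univ i)
      apply abs_le_of_sq_le_sq _ (by positivity)
      rw [mul_pow, hsq p hp]
      linarith
    · intro p hp k
      have h2 : p.2.1 k ^ 2 ≤ ∑ k, p.2.1 k ^ 2 :=
        Finset.single_le_sum (f := fun k => p.2.1 k ^ 2) (fun _ _ => sq_nonneg _) (Finset.mem_univ k)
      rw [hsq p hp]
      apply Real.abs_le_sqrt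
      nlinarith [T_lower p hp, sq_nonneg ((∑ i, p.1 i ^ 2) / 4)]
  obtain ⟨C, hC⟩ := hex
  refine ⟨C, fun p hp => (hC p hp).trans_eq ?_⟩
  rw [show √(√(T p)) ^ 4 = (√(√(T p)) ^ 2) ^ 2 by ring, hsq p hp, Real.sq_sqrt (T_pos hp).le]

/-- Quotients `P / T` with `P` of weighted degree four are bounded along with all their derivatives,
since `X_j (P/T) = (X_j P)/T - (P/T) (X_j T)/T` is again made of such quotients. -/
lemma WP.ratio_Bd {U : Set (Pt μ ν)} {w : Pt μ ν → ℝ} (hU : IsOpen U)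
    (ha : ∀ p ∈ U, 0 < p.2.2) (hw : ∀ p ∈ U, 1 ≤ w p) {N : ℕ} :
    ∀ {f : Pt μ ν → ℝ}, WP 4 f → Bd Jm U w 0 0 N (fun p => f p * (T p)⁻¹) := by
  have key : ∀ {f : Pt μ ν → ℝ}, WP 4 f →
      ∃ C : ℝ, ∀ p ∈ U, |f p * (T p)⁻¹| ≤ C * w p ^ (0 : ℤ) := by
    intro f hf
    obtain ⟨C, hC⟩ := hf.bound_T
    refine ⟨C, fun p hp => ?_⟩
    have hT := T_pos (ha p hp)
    rw [zpow_zero, mul_one, abs_mul, abs_inv, abs_of_pos hT, ← div_eq_mul_inv, div_le_iff₀ hT]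
    exact hC p (ha p hp)
  induction N with
  | zero => exact key
  | succ N ih =>
    intro f hf
    have hTi : ∀ p ∈ U, DifferentiableAt ℝ (fun p : Pt μ ν => (T p)⁻¹) p := fun p hp =>
      (WP_T.differentiableAt (ha p hp)).fun_inv (T_pos (ha p hp)).ne'
    refine ⟨key hf, fun p hp => (hf.differentiableAt (ha p hp)).fun_mul (hTi p hp), fun j => ?_⟩
    obtain ⟨g, hg, he⟩ := hf.Xf Jm j
    obtain ⟨S, hS, heS⟩ := (WP_T (μ := μ) (ν := ν)).Xf Jm j
    refine ((ih hg).add hU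
      ((Bd.const hU (-1) hw le_rfl).mul hU hw ((ih hf).mul hU hw (ih hS)))).congr hU ?_
    intro p hp
    have hT := (T_pos (ha p hp)).ne'
    rw [Xf_mul Jm (hf.differentiableAt (ha p hp)) (hTi p hp),
      Xf_comp Jm (WP_T.differentiableAt (ha p hp)) (hasDerivAt_inv hT), he p (ha p hp),
      heS p (ha p hp)]
    field_simp

lemma Xf_T (j : Fin (μ + ν + 1)) (p : Pt μ ν) (hp : 0 < p.2.2) :
    Xf μ ν Jm j T p =
      2 * (1 + p.2.2 + (∑ i, p.1 i ^ 2) / 4) *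
          ((vf μ ν Jm j p).2.2 + (∑ i, p.1 i * (vf μ ν Jm j p).1 i) / 2) +
        2 * (∑ k, p.2.1 k * (vf μ ν Jm j p).2.1 k) - 2 * (vf μ ν Jm j p).2.2 := by
  have hT := WP_T.differentiableAt hp
  rw [Xf_eq Jm hT]
  generalize vf μ ν Jm j p = v
  have hl : HasDerivAt (fun t : ℝ => p + t • v) v 0 := by
    simpa using ((hasDerivAt_id (0 : ℝ)).smul_const v).const_add p
  have h0 : HasFDerivAt T (fderiv ℝ T p) (p + (0 : ℝ) • v) := by simpa using hT.hasFDerivAt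
  have h1 := h0.comp_hasDerivAt (0 : ℝ) hl
  have hlin : ∀ b c : ℝ, HasDerivAt (fun t : ℝ => b + t * c) c 0 := fun b c => by
    simpa using ((hasDerivAt_id (0 : ℝ)).mul_const c).const_add b
  have hsq : ∀ b c : ℝ, HasDerivAt (fun t : ℝ => (b + t * c) ^ 2) (2 * (b * c)) 0 := fun b c => by
    have := (hlin b c).fun_pow 2
    convert! this using 1
    simp; ring
  have h2 : HasDerivAt (fun t : ℝ => T (p + t • v))
      (2 * (1 + p.2.2 + (∑ i, p.1 i ^ 2) / 4) * (v.2.2 + (∑ i, 2 * (p.1 i * v.1 i)) / 4) +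
        (∑ k, 2 * (p.2.1 k * v.2.1 k)) - 2 * v.2.2) 0 := by
    have hA := (((hlin p.2.2 v.2.2).const_add 1).fun_add
      ((HasDerivAt.fun_sum (u := Finset.univ) fun i _ => hsq (p.1 i) (v.1 i)).div_const 4)).fun_pow 2
    have hZ := HasDerivAt.fun_sum (u := Finset.univ) fun k _ => hsq (p.2.1 k) (v.2.1 k)
    have := (hA.fun_add hZ).fun_sub ((hlin p.2.2 v.2.2).const_mul 2)
    convert! this using 1
    simp
  have h3 := h1.unique h2
  rw [h3, ← Finset.mul_sum, ← Finset.mul_sum]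
  ring

/-- The gradient bound `|X_j cosh r| ≤ C sinh r`, multiplied through by `2a`. -/
lemma first_order (j : Fin (μ + ν + 1)) :
    ∃ M : ℝ, 0 ≤ M ∧ ∀ p : Pt μ ν, 0 < p.2.2 →
      (Xf μ ν Jm j T p - dl j * T p) ^ 2 ≤ M * (T p ^ 2 - 4 * p.2.2 ^ 2) := by
  have hT : ∀ p : Pt μ ν, T p ^ 2 - 4 * p.2.2 ^ 2 =
      ((1 + p.2.2 + (∑ i, p.1 i ^ 2) / 4) ^ 2 + ∑ k, p.2.1 k ^ 2) *
      ((1 - p.2.2) ^ 2 + 2 * ((∑ i, p.1 i ^ 2) / 4) * (1 + p.2.2) +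
        ((∑ i, p.1 i ^ 2) / 4) ^ 2 + ∑ k, p.2.1 k ^ 2) := by
    intro p; unfold T; ring
  by_cases h0 : (j : ℕ) = 0
  · refine ⟨1, zero_le_one, fun p hp => ?_⟩
    rw [hT, Xf_T Jm j p hp]
    have hv : vf μ ν Jm j p = (0, 0, p.2.2) := by unfold vf; rw [dif_pos h0]
    have hd : dl j = 1 := if_pos h0
    rw [hv, hd]
    simp only [Pi.zero_apply, mul_zero, Finset.sum_const_zero, zero_div, add_zero, T]
    have hq : 0 ≤ (∑ i, p.1 i ^ 2) / 4 := by positivity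
    have hZ : 0 ≤ ∑ k, p.2.1 k ^ 2 := by positivity
    generalize (∑ i, p.1 i ^ 2) / 4 = q at *
    generalize ∑ k, p.2.1 k ^ 2 = Z at *
    generalize p.2.2 = a at *
    -- Cauchy–Schwarz for the vectors `(1 + a + q, √Z)` and `(1 + q - a, √Z)`.
    have h1 : (1 + q - a) ^ 2 ≤ (1 - a) ^ 2 + 2 * q * (1 + a) + q ^ 2 := by
      nlinarith [mul_nonneg hq hp.le]
    have h2 : ((1 + a + q) * (1 + q - a) + Z) ^ 2 ≤
        ((1 + a + q) ^ 2 + Z) * ((1 + q - a) ^ 2 + Z) := by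
      nlinarith [mul_nonneg hZ (sq_nonneg ((1 + a + q) - (1 + q - a)))]
    have h3 : ((1 + a + q) ^ 2 + Z) * ((1 + q - a) ^ 2 + Z) ≤
        ((1 + a + q) ^ 2 + Z) * ((1 - a) ^ 2 + 2 * q * (1 + a) + q ^ 2 + Z) :=
      mul_le_mul_of_nonneg_left (by linarith) (by positivity)
    calc _ = ((1 + a + q) * (1 + q - a) + Z) ^ 2 := by ring
      _ ≤ _ := by linarith
  by_cases hm : (j : ℕ) ≤ μ
  · set l : Fin μ := ⟨(j : ℕ) - 1, by omega⟩ with hl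
    set K : ℝ := ∑ k, ∑ i, Jm k l i ^ 2 with hK
    have hK0 : 0 ≤ K := by positivity
    refine ⟨4 * (1 + K), by positivity, fun p hp => ?_⟩
    rw [hT, Xf_T Jm j p hp]
    have hv : vf μ ν Jm j p = (Real.sqrt p.2.2 • Pi.single l 1,
      fun k => Real.sqrt p.2.2 * ((1 / 2) * (Jm k).mulVec p.1 l), 0) := by
      unfold vf; rw [dif_neg h0, dif_pos hm]
    have hd : dl j = 0 := if_neg h0
    have hs1 : ∑ i, p.1 i * (vf μ ν Jm j p).1 i = √p.2.2 * p.1 l := by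
      rw [hv]
      simp [Pi.single_apply, mul_comm]
    have hs2 : ∑ k, p.2.1 k * (vf μ ν Jm j p).2.1 k =
        √p.2.2 * (∑ k, p.2.1 k * (Jm k).mulVec p.1 l) / 2 := by
      rw [hv, Finset.mul_sum, Finset.sum_div]
      exact Finset.sum_congr rfl fun k _ => by ring
    rw [hs1, hs2, hd, hv]
    have hb : (∑ k, p.2.1 k * (Jm k).mulVec p.1 l) ^ 2 ≤
        (∑ k, p.2.1 k ^ 2) * (K * ∑ i, p.1 i ^ 2) := by
      refine (Finset.sum_mul_sq_le_sq_mul_sq Finset.univ (fun k => p.2.1 k)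
        (fun k => (Jm k).mulVec p.1 l)).trans ?_
      refine mul_le_mul_of_nonneg_left ?_ (by positivity)
      rw [hK, Finset.sum_mul]
      refine Finset.sum_le_sum fun k _ => ?_
      exact Finset.sum_mul_sq_le_sq_mul_sq Finset.univ (fun i => Jm k l i) p.1
    have hxl : p.1 l ^ 2 ≤ ∑ i, p.1 i ^ 2 :=
      Finset.single_le_sum (f := fun i => p.1 i ^ 2) (fun _ _ => sq_nonneg _) (Finset.mem_univ l)
    have hq : 0 ≤ (∑ i, p.1 i ^ 2) / 4 := by positivity
    have hZ : 0 ≤ ∑ k, p.2.1 k ^ 2 := by positivity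
    have hss : √p.2.2 ^ 2 = p.2.2 := Real.sq_sqrt hp.le
    rw [show ∑ i, p.1 i ^ 2 = 4 * ((∑ i, p.1 i ^ 2) / 4) by ring] at hb hxl
    generalize (∑ i, p.1 i ^ 2) / 4 = q at *
    generalize (∑ k, p.2.1 k * (Jm k).mulVec p.1 l) = b at *
    generalize ∑ k, p.2.1 k ^ 2 = Z at *
    generalize √p.2.2 = s at *
    generalize p.2.2 = a at *
    generalize p.1 l = x at *
    have e1 : ((1 + a + q) * x + b) ^ 2 ≤ 8 * q * (1 + K) * ((1 + a + q) ^ 2 + Z) := by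
      have f1 : ((1 + a + q) * x + b) ^ 2 ≤ 2 * ((1 + a + q) ^ 2 * x ^ 2 + b ^ 2) := by
        nlinarith [sq_nonneg ((1 + a + q) * x - b)]
      have f2 : (1 + a + q) ^ 2 * x ^ 2 ≤ (1 + a + q) ^ 2 * (4 * q) :=
        mul_le_mul_of_nonneg_left hxl (sq_nonneg _)
      have f3 : 0 ≤ q * Z := mul_nonneg hq hZ
      have f4 : 0 ≤ q * K * (1 + a + q) ^ 2 := by positivity
      nlinarith
    have e2 : 2 * q * a ≤ (1 - a) ^ 2 + 2 * q * (1 + a) + q ^ 2 + Z := by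
      nlinarith [sq_nonneg (1 - a), sq_nonneg q]
    calc _ = a * ((1 + a + q) * x + b) ^ 2 := by rw [← hss]; ring
      _ ≤ a * (8 * q * (1 + K) * ((1 + a + q) ^ 2 + Z)) := mul_le_mul_of_nonneg_left e1 hp.le
      _ = 4 * (1 + K) * (((1 + a + q) ^ 2 + Z) * (2 * q * a)) := by ring
      _ ≤ _ := by gcongr
  · set l : Fin ν := ⟨(j : ℕ) - μ - 1, by have := j.isLt; omega⟩ with hl
    refine ⟨4, by norm_num, fun p hp => ?_⟩
    rw [hT, Xf_T Jm j p hp]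
    have hv : vf μ ν Jm j p = (0, p.2.2 • Pi.single l 1, 0) := by
      unfold vf; rw [dif_neg h0, dif_neg hm]
    have hd : dl j = 0 := if_neg h0
    have hs2 : ∑ k, p.2.1 k * (vf μ ν Jm j p).2.1 k = p.2.2 * p.2.1 l := by
      rw [hv]
      simp [Pi.single_apply, mul_comm]
    rw [hs2, hd, hv]
    have hzl : p.2.1 l ^ 2 ≤ ∑ k, p.2.1 k ^ 2 :=
      Finset.single_le_sum (f := fun k => p.2.1 k ^ 2) (fun _ _ => sq_nonneg _) (Finset.mem_univ l)
    simp only [Pi.zero_apply, mul_zero, Finset.sum_const_zero, zero_div, add_zero]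
    have hq : 0 ≤ (∑ i, p.1 i ^ 2) / 4 := by positivity
    generalize (∑ i, p.1 i ^ 2) / 4 = q at *
    generalize ∑ k, p.2.1 k ^ 2 = Z at *
    generalize p.2.2 = a at *
    generalize p.2.1 l = y at *
    have e1 : a ^ 2 ≤ (1 + a + q) ^ 2 + Z := by nlinarith [sq_nonneg y, mul_nonneg hq hp.le]
    have e2 : y ^ 2 ≤ (1 - a) ^ 2 + 2 * q * (1 + a) + q ^ 2 + Z := by
      nlinarith [sq_nonneg (1 - a), sq_nonneg q, mul_nonneg hq hp.le]
    calc _ = 4 * (a ^ 2 * y ^ 2) := by ring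
      _ ≤ _ := by
        refine mul_le_mul_of_nonneg_left ?_ (by norm_num)
        exact mul_le_mul e1 e2 (sq_nonneg _) ((sq_nonneg a).trans e1)

end Weighted

/-! ### Hyperbolic functions and the distance -/

lemma coth_le {t : ℝ} (ht : 0 < t) : Real.cosh t / Real.sinh t ≤ (1 + t) / t := by
  have hs : 0 < Real.sinh t := Real.sinh_pos_iff.2 ht
  rw [div_le_div_iff₀ hs ht]
  have h1 : Real.cosh t - Real.sinh t = Real.exp (-t) := Real.cosh_sub_sinh t
  have h2 : 2 * t + 1 ≤ Real.exp (2 * t) := Real.add_one_le_exp _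
  have h3 : Real.exp t = Real.exp (2 * t) * Real.exp (-t) := by rw [← Real.exp_add]; ring_nf
  have h4 := Real.sinh_eq t
  have h5 : t * Real.exp (-t) ≤ Real.sinh t := by
    rw [h4, h3]
    nlinarith [Real.exp_pos (-t)]
  nlinarith

lemma tanh_bound {t : ℝ} (ht : 0 < t) :
    Real.sinh t ≤ Real.cosh t * (3 * ((1 + t) / t)⁻¹) := by
  have h2 : -(2 * t) + 1 ≤ Real.exp (-(2 * t)) := Real.add_one_le_exp _
  have h3 : Real.exp (-t) = Real.exp (-(2 * t)) * Real.exp t := by rw [← Real.exp_add]; ring_nf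
  have h5 : Real.sinh t ≤ 2 * t * Real.cosh t := by
    rw [Real.sinh_eq, Real.cosh_eq]
    nlinarith [Real.exp_pos t, Real.exp_pos (-t), mul_pos ht (Real.exp_pos (-t))]
  have h6 := (Real.sinh_lt_cosh t).le
  rw [inv_div, ← mul_div_assoc, ← mul_div_assoc, le_div_iff₀ (by linarith)]
  nlinarith

lemma hasDerivAt_coth {t : ℝ} (ht : 0 < t) :
    HasDerivAt (fun t => Real.cosh t / Real.sinh t)
      (1 - (Real.cosh t / Real.sinh t) ^ 2) t := by
  have hs : Real.sinh t ≠ 0 := (Real.sinh_pos_iff.2 ht).ne'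
  convert! (Real.hasDerivAt_cosh t).fun_div (Real.hasDerivAt_sinh t) hs using 1
  field_simp

section Distance

variable {μ ν : ℕ} (Jm : Fin ν → Matrix (Fin μ) (Fin μ) ℝ) {r : Pt μ ν → ℝ}

lemma T_eq (hreq : ∀ p : Pt μ ν, 0 < p.2.2 → Real.cosh (r p / 2) ^ 2 = coshExpr μ ν p)
    {p : Pt μ ν} (hp : 0 < p.2.2) : T p = 2 * p.2.2 * Real.cosh (r p) := by
  have h1 : Real.cosh (r p) = 2 * coshExpr μ ν p - 1 := by
    have h := Real.cosh_two_mul (r p / 2)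
    rw [show 2 * (r p / 2) = r p by ring] at h
    rw [h, ← hreq p hp, Real.sinh_sq]
    ring
  have hs : 0 < √p.2.2 := Real.sqrt_pos.2 hp
  have hss : p.2.2 = √p.2.2 ^ 2 := (Real.sq_sqrt hp.le).symm
  rw [h1]
  unfold coshExpr T
  generalize ∑ i, p.1 i ^ 2 = X
  generalize ∑ k, p.2.1 k ^ 2 = Z
  generalize √p.2.2 = s at *
  rw [hss]
  field_simp
  ring

lemma r_pos_iff (hr0 : ∀ p : Pt μ ν, 0 < p.2.2 → 0 ≤ r p)
    (hreq : ∀ p : Pt μ ν, 0 < p.2.2 → Real.cosh (r p / 2) ^ 2 = coshExpr μ ν p)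
    {p : Pt μ ν} (hp : 0 < p.2.2) : 0 < r p ↔ 2 * p.2.2 < T p := by
  rw [T_eq hreq hp]
  constructor
  · intro h
    have h1 : 1 < Real.cosh (r p) := Real.one_lt_cosh.2 h.ne'
    nlinarith
  · intro h
    refine (hr0 p hp).lt_of_ne' ?_
    intro h0
    rw [h0, Real.cosh_zero] at h
    linarith

lemma isOpen_U (hr0 : ∀ p : Pt μ ν, 0 < p.2.2 → 0 ≤ r p)
    (hreq : ∀ p : Pt μ ν, 0 < p.2.2 → Real.cosh (r p / 2) ^ 2 = coshExpr μ ν p) :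
    IsOpen {p : Pt μ ν | 0 < p.2.2 ∧ 0 < r p} := by
  have hT : Continuous (T : Pt μ ν → ℝ) := by unfold T; fun_prop
  have : {p : Pt μ ν | 0 < p.2.2 ∧ 0 < r p} = {p | 0 < p.2.2} ∩ {p | 2 * p.2.2 < T p} := by
    ext p
    exact and_congr_right fun hp => r_pos_iff hr0 hreq hp
  rw [this]
  exact (isOpen_lt continuous_const (by fun_prop)).inter (isOpen_lt (by fun_prop) hT)

lemma differentiableAt_r (hr0 : ∀ p : Pt μ ν, 0 < p.2.2 → 0 ≤ r p)
    (hreq : ∀ p : Pt μ ν, 0 < p.2.2 → Real.cosh (r p / 2) ^ 2 = coshExpr μ ν p)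
    {p : Pt μ ν} (hp : 0 < p.2.2) (hrp : 0 < r p) : DifferentiableAt ℝ r p := by
  have hT : DifferentiableAt ℝ (fun q : Pt μ ν => T q / (2 * q.2.2)) p := by
    simp only [div_eq_mul_inv]
    exact (WP_T.differentiableAt hp).fun_mul
      (((differentiable_coord_a p).const_mul 2).fun_inv (mul_pos two_pos hp).ne')
  have h1 : 1 < T p / (2 * p.2.2) := by
    rw [lt_div_iff₀ (by positivity), one_mul]
    exact (r_pos_iff hr0 hreq hp).1 hrp
  have h2 : DifferentiableAt ℝ (fun q : Pt μ ν => Real.arcosh (T q / (2 * q.2.2))) p :=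
    DifferentiableAt.comp (g := Real.arcosh) p (Real.differentiableAt_arcosh h1) hT
  refine (Filter.EventuallyEq.differentiableAt_iff ?_).1 h2
  refine Filter.eventuallyEq_of_mem ((isOpen_U hr0 hreq).mem_nhds ⟨hp, hrp⟩) ?_
  rintro q ⟨hq, hrq⟩
  simp only
  rw [T_eq hreq hq, mul_div_cancel_left₀ _ (mul_pos two_pos hq).ne',
    Real.arcosh_cosh hrq.le]

/-- The logarithmic derivative `X_j (cosh r) / cosh r`, expressed through `T = 2a cosh r`. -/
def G (j : Fin (μ + ν + 1)) (p : Pt μ ν) : ℝ := Xf μ ν Jm j T p * (T p)⁻¹ + -dl j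

lemma Xf_r (hr0 : ∀ p : Pt μ ν, 0 < p.2.2 → 0 ≤ r p)
    (hreq : ∀ p : Pt μ ν, 0 < p.2.2 → Real.cosh (r p / 2) ^ 2 = coshExpr μ ν p)
    {p : Pt μ ν} (hp : 0 < p.2.2) (hrp : 0 < r p) (j : Fin (μ + ν + 1)) :
    Xf μ ν Jm j r p = Real.cosh (r p) / Real.sinh (r p) * G Jm j p := by
  have hd := differentiableAt_r hr0 hreq hp hrp
  have hc : DifferentiableAt ℝ (fun q => Real.cosh (r q)) p := hd.cosh
  have h1 : Xf μ ν Jm j T p = Xf μ ν Jm j (fun q => 2 * q.2.2 * Real.cosh (r q)) p :=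
    Xf_congr Jm (isOpen_U hr0 hreq) ⟨hp, hrp⟩ (fun q hq => T_eq hreq hq.1)
      (WP_T.differentiableAt hp) j
  rw [Xf_mul Jm ((differentiable_coord_a p).const_mul 2) hc,
    Xf_mul Jm (differentiableAt_const _) (differentiable_coord_a p),
    Xf_comp Jm hd (Real.hasDerivAt_cosh _), Xf_const, Xf_coord_a] at h1
  have hs : 0 < Real.sinh (r p) := Real.sinh_pos_iff.2 hrp
  have hcp := Real.cosh_pos (r p)
  unfold G
  rw [h1, T_eq hreq hp]
  field_simp
  ring

lemma G_bound (hreq : ∀ p : Pt μ ν, 0 < p.2.2 → Real.cosh (r p / 2) ^ 2 = coshExpr μ ν p)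
    (j : Fin (μ + ν + 1)) :
    ∃ C : ℝ, ∀ p ∈ {p : Pt μ ν | 0 < p.2.2 ∧ 0 < r p},
      |G Jm j p| ≤ C * ((1 + r p) / r p) ^ (-1 : ℤ) := by
  obtain ⟨M, hM, h⟩ := first_order Jm j
  refine ⟨√M * 3, ?_⟩
  rintro p ⟨hp, hrp⟩
  have hT := T_pos hp
  have hs : 0 < Real.sinh (r p) := Real.sinh_pos_iff.2 hrp
  have hcp := Real.cosh_pos (r p)
  have h1 : |Xf μ ν Jm j T p - dl j * T p| ≤ √M * (2 * p.2.2 * Real.sinh (r p)) := by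
    apply abs_le_of_sq_le_sq _ (by positivity)
    refine (h p hp).trans_eq ?_
    rw [T_eq hreq hp, mul_pow √M, Real.sq_sqrt hM, mul_pow _ (Real.sinh _), Real.sinh_sq]
    ring
  have h2 : G Jm j p = (Xf μ ν Jm j T p - dl j * T p) / T p := by
    unfold G; field_simp; ring
  rw [h2, abs_div, abs_of_pos hT, div_le_iff₀ hT, zpow_neg_one]
  refine h1.trans ?_
  rw [T_eq hreq hp]
  calc √M * (2 * p.2.2 * Real.sinh (r p))
      ≤ √M * (2 * p.2.2 * (Real.cosh (r p) * (3 * ((1 + r p) / r p)⁻¹))) := by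
        have := tanh_bound hrp
        gcongr
    _ = _ := by ring

/-- `G_j` has weight `-1`: all its derivatives are bounded, which suffices for orders at least one,
and order zero is the gradient bound. -/
lemma G_Bd (hr0 : ∀ p : Pt μ ν, 0 < p.2.2 → 0 ≤ r p)
    (hreq : ∀ p : Pt μ ν, 0 < p.2.2 → Real.cosh (r p / 2) ^ 2 = coshExpr μ ν p)
    (hw : ∀ p ∈ {p : Pt μ ν | 0 < p.2.2 ∧ 0 < r p}, 1 ≤ (1 + r p) / r p)
    (j : Fin (μ + ν + 1)) (N : ℕ) :
    Bd Jm {p : Pt μ ν | 0 < p.2.2 ∧ 0 < r p} (fun p => (1 + r p) / r p) 1 (-1) N (G Jm j) := by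
  have hU := isOpen_U hr0 hreq
  have h0 : ∀ N, Bd Jm {p : Pt μ ν | 0 < p.2.2 ∧ 0 < r p} (fun p => (1 + r p) / r p) 0 0 N
      (G Jm j) := by
    intro N
    obtain ⟨S, hS, heS⟩ := (WP_T (μ := μ) (ν := ν)).Xf Jm j
    refine ((hS.ratio_Bd Jm hU (fun p hp => hp.1) hw).add hU
      (Bd.const hU (-dl j) hw le_rfl)).congr hU ?_
    intro p hp
    unfold G
    rw [heS p hp.1]
  cases N with
  | zero => exact G_bound Jm hreq j
  | succ N =>
    have h := h0 (N + 1)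
    exact ⟨G_bound Jm hreq j, h.2.1, fun i => (h.2.2 i).mono hw (by norm_num) (by norm_num)⟩

/-- `coth r` has weight one: its derivatives are polynomials in `coth r` and the `X_J G_j`, because
`X_j coth r = (1 - coth² r) coth r · G_j`. -/
lemma coth_Bd (hr0 : ∀ p : Pt μ ν, 0 < p.2.2 → 0 ≤ r p)
    (hreq : ∀ p : Pt μ ν, 0 < p.2.2 → Real.cosh (r p / 2) ^ 2 = coshExpr μ ν p)
    (hw : ∀ p ∈ {p : Pt μ ν | 0 < p.2.2 ∧ 0 < r p}, 1 ≤ (1 + r p) / r p) (N : ℕ) :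
    Bd Jm {p : Pt μ ν | 0 < p.2.2 ∧ 0 < r p} (fun p => (1 + r p) / r p) 1 1 N
      (fun p => Real.cosh (r p) / Real.sinh (r p)) := by
  have hU := isOpen_U hr0 hreq
  have key : ∃ C : ℝ, ∀ p ∈ {p : Pt μ ν | 0 < p.2.2 ∧ 0 < r p},
      |Real.cosh (r p) / Real.sinh (r p)| ≤ C * ((1 + r p) / r p) ^ (1 : ℤ) := by
    refine ⟨1, fun p hp => ?_⟩
    have hs : 0 < Real.sinh (r p) := Real.sinh_pos_iff.2 hp.2
    have hcp := Real.cosh_pos (r p)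
    rw [abs_of_pos (by positivity), zpow_one, one_mul]
    exact coth_le hp.2
  induction N with
  | zero => exact key
  | succ N ih =>
    have hd : ∀ p ∈ {p : Pt μ ν | 0 < p.2.2 ∧ 0 < r p}, DifferentiableAt ℝ r p := fun p hp =>
      differentiableAt_r hr0 hreq hp.1 hp.2
    refine ⟨key, fun p hp => (hasDerivAt_coth hp.2).differentiableAt.comp p (hd p hp), fun j => ?_⟩
    have hG := G_Bd Jm hr0 hreq hw j N
    have h1 := (ih.mul hU hw hG).mono (e := 1 + 1) hw le_rfl (by norm_num)
    have h3 := ((Bd.const hU (-1) hw (by norm_num)).mul hU hw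
      ((ih.mul hU hw (ih.mul hU hw ih)).mul hU hw hG)).mono (e := 1 + 1) hw le_rfl (by norm_num)
    refine (h1.add hU h3).congr hU fun p hp => ?_
    rw [Xf_comp Jm (hd p hp) (hasDerivAt_coth hp.2), Xf_r Jm hr0 hreq hp.1 hp.2]
    ring

end Distance

theorem distance_derivative_bound (μ ν : ℕ) (hμ : Even μ) (hν : 1 ≤ ν)
    (Jm : Fin ν → Matrix (Fin μ) (Fin μ) ℝ)
    (hskew : ∀ k, (Jm k).transpose = -(Jm k))
    (hH : ∀ k l, Jm k * Jm l + Jm l * Jm k =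
      if k = l then (-2 : ℝ) • (1 : Matrix (Fin μ) (Fin μ) ℝ) else 0)
    (r : Pt μ ν → ℝ)
    (hr0 : ∀ p : Pt μ ν, 0 < p.2.2 → 0 ≤ r p)
    (hreq : ∀ p : Pt μ ν, 0 < p.2.2 → Real.cosh (r p / 2) ^ 2 = coshExpr μ ν p)
    (k : ℕ) (hk : 1 ≤ k) :
    ∃ C : ℝ, 0 < C ∧ ∀ J : List (Fin (μ + ν + 1)), J.length = k →
      ∀ p : Pt μ ν, 0 < p.2.2 → 0 < r p →
        |XL μ ν Jm J r p| ≤ C * ((1 + r p) / r p) ^ (k - 1) := by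
  have hU := isOpen_U hr0 hreq
  have hw : ∀ p ∈ {p : Pt μ ν | 0 < p.2.2 ∧ 0 < r p}, 1 ≤ (1 + r p) / r p := fun p hp => by
    rw [le_div_iff₀ hp.2]; linarith
  -- The weights `1` of `coth r` and `-1` of `G_j` cancel in `X_j r = coth r · G_j`.
  have h0 : ∀ j, Bd Jm {p : Pt μ ν | 0 < p.2.2 ∧ 0 < r p} (fun p => (1 + r p) / r p) 1 0 (k - 1)
      (Xf μ ν Jm j r) := fun j =>
    ((coth_Bd Jm hr0 hreq hw (k - 1)).mul hU hw (G_Bd Jm hr0 hreq hw j (k - 1))).congr hU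
      fun p hp => (Xf_r Jm hr0 hreq hp.1 hp.2 j).symm
  choose C hC0 hC using fun j => (h0 j).uniform hw
  refine ⟨∑ j, C j, Finset.sum_pos (fun j _ => hC0 j) Finset.univ_nonempty, ?_⟩
  intro J hJ p hp hrp
  obtain ⟨J', j, rfl⟩ : ∃ J' j, J = J' ++ [j] :=
    ⟨J.dropLast, J.getLast (by rintro rfl; simp at hJ; omega),
      (List.dropLast_append_getLast _).symm⟩
  rw [XL_append]
  have hl : J'.length = k - 1 := by simp at hJ; omega
  have h1 := hC j J' hl p ⟨hp, hrp⟩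
  rw [zero_add, one_mul, zpow_natCast] at h1
  refine h1.trans ?_
  have := hw p ⟨hp, hrp⟩
  exact mul_le_mul_of_nonneg_right
    (Finset.single_le_sum (fun i _ => (hC0 i).le) (Finset.mem_univ j)) (by positivity)

end DR
end
end
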